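/- Let L > 0, let q_e : 𝕋_L → ℝ be smooth with q_e > 0, and let g : 𝕋_L → ℝ be smooth. There exists ε₀ ∈ (0,1), depending only on q_e, g, L, such that for all 0 < ε < ε₀ the following holds. For j ∈ {n−2, n−1, n}, let ω̄_j ∈ ℝ with |ω̄_j − ω̄*| ≤ ε^{0.97} (where ω̄* := ((1/L)∫₀^L (2 g q_e² + ε g² q_e) ds)/((1/L)∫₀^L q_e³ ds)) and set ω_j > 0 via ω_j² = 1 − ε ω̄_j. Let Q_{n−2}, Q_{n−1}, Q_n be smooth functions on 𝕋_L × [0,∞), each tending to 0 as ψ → ∞, with ‖Q_j‖_{X_{2,50}} ≤ ε^{0.99} for j ∈ {n−2, n−1, n}, such that Q_n solves ∂_s Q_n − ω_{n−1} q_e ∂_ψ² Q_n = f(Q_{n−1}, s; ω_{n−1}) with Q_n(s,0) = ε ω̄_n q_e² + 2ε g q_e + ε² g², and Q_{n−1} solves ∂_s Q_{n−1} − ω_{n−2} q_e ∂_ψ² Q_{n−1} = f(Q_{n−2}, s; ω_{n−2}) with Q_{n−1}(s,0) = ε ω̄_{n−1} q_e² + 2ε g q_e + ε² g², where f(Q,s;ω)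 := (1 − ω q_e(s)/√(ω² q_e(s)² + Q)) ∂_s Q. Then ‖Q_n − Q_{n−1}‖_{X_{2,50}} ≤ ε^{3/4} ‖Q_{n−1} − Q_{n−2}‖_{X_{2,50}} + ε^{1/2} |ω̄_n − ω̄_{n−1}| + ε^{3/2} |ω̄_{n−1} − ω̄_{n−2}|. -/

import Mathlib

open MeasureTheory Set Function Filter

/-- `k`-th partial derivative in the tangential variable `s` of a function on
`𝕋_L × [0,∞)` (represented as a curried function `ℝ → ℝ → ℝ`). -/
noncomputable def dS (k : ℕ) (h : ℝ → ℝ → ℝ) : ℝ → ℝ → ℝ :=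
  fun s ψ => iteratedDeriv k (fun s' => h s' ψ) s

/-- `j`-th partial derivative in the normal (von Mises) variable `ψ`. -/
noncomputable def dPsi (j : ℕ) (h : ℝ → ℝ → ℝ) : ℝ → ℝ → ℝ :=
  fun s ψ => iteratedDeriv j (fun ψ' => h s ψ') ψ

/-- Squared `L²` norm over `𝕋_L × ℝ₊` (fundamental domain `(0,L] × (0,∞)`). -/
noncomputable def L2sq (L : ℝ) (h : ℝ → ℝ → ℝ) : ℝ :=
  ∫ p in Ioc (0:ℝ) L ×ˢ Ioi (0:ℝ), (h p.1 p.2) ^ 2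

/-- Square-integrability over `𝕋_L × ℝ₊`. -/
def FiniteL2 (L : ℝ) (h : ℝ → ℝ → ℝ) : Prop :=
  IntegrableOn (fun p : ℝ × ℝ => (h p.1 p.2) ^ 2) (Ioc (0:ℝ) L ×ˢ Ioi (0:ℝ))

/-- The weight `⟨ψ⟩^m h`. -/
noncomputable def wt (m : ℕ) (h : ℝ → ℝ → ℝ) : ℝ → ℝ → ℝ :=
  fun s ψ => (1 + ψ) ^ m * h s ψ

/-- Squared `X_{k,m}` norm:
`‖h‖²_{X_{k,m}} = Σ_{k'≤k} Σ_{m'≤m} (‖⟨ψ⟩^{m'}∂_s^{k'}h‖² + ‖⟨ψ⟩^{m'}∂_s^{k'+1}h‖²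
+ ‖⟨ψ⟩^{m'}∂_ψ∂_s^{k'}h‖² + ‖⟨ψ⟩^{m'}∂_ψ²∂_s^{k'}h‖²)`. -/
noncomputable def XnormSq (L : ℝ) (k m : ℕ) (h : ℝ → ℝ → ℝ) : ℝ :=
  ∑ k' ∈ Finset.range (k+1), ∑ m' ∈ Finset.range (m+1),
    (L2sq L (wt m' (dS k' h)) + L2sq L (wt m' (dS (k'+1) h))
      + L2sq L (wt m' (dPsi 1 (dS k' h))) + L2sq L (wt m' (dPsi 2 (dS k' h))))

/-- The `X_{k,m}` norm. -/
noncomputable def Xnorm (L : ℝ) (k m : ℕ) (h : ℝ → ℝ → ℝ) : ℝ :=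
  Real.sqrt (XnormSq L k m h)

/-- Membership in the space `X_{k,m}`: all the defining integrands are integrable. -/
def XFinite (L : ℝ) (k m : ℕ) (h : ℝ → ℝ → ℝ) : Prop :=
  ∀ k' ≤ k, ∀ m' ≤ m,
    FiniteL2 L (wt m' (dS k' h)) ∧ FiniteL2 L (wt m' (dS (k'+1) h))
      ∧ FiniteL2 L (wt m' (dPsi 1 (dS k' h))) ∧ FiniteL2 L (wt m' (dPsi 2 (dS k' h)))

/-- Joint smoothness of a curried function of two real variables. -/
def Smooth2 (h : ℝ → ℝ → ℝ) : Prop :=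
  ContDiff ℝ (⊤ : ℕ∞) (fun p : ℝ × ℝ => h p.1 p.2)

/-- Periodicity in the first (tangential) variable. -/
def PeriodicS (L : ℝ) (h : ℝ → ℝ → ℝ) : Prop :=
  ∀ ψ : ℝ, Function.Periodic (fun s => h s ψ) L

/-- Squared `H^n` norm of a function on `𝕋_L`. -/
noncomputable def HnormSq (L : ℝ) (n : ℕ) (b : ℝ → ℝ) : ℝ :=
  ∑ j ∈ Finset.range (n+1), ∫ s in (0:ℝ)..L, (iteratedDeriv j b s) ^ 2

/-- The explicit (leading) part of the Feynman–Lagerstrom constant. -/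
noncomputable def omegaBarStar (L : ℝ) (q_e g : ℝ → ℝ) (ε : ℝ) : ℝ :=
  ((1/L) * ∫ s in (0:ℝ)..L, (2 * g s * (q_e s) ^ 2 + ε * (g s) ^ 2 * q_e s))
    / ((1/L) * ∫ s in (0:ℝ)..L, (q_e s) ^ 3)

/-- The Prandtl nonlinearity `f(Q,s;ω) = (1 − ωq_e/√(ω²q_e² + Q)) ∂_s Q`. -/
noncomputable def fNonlin (q_e : ℝ → ℝ) (ω : ℝ) (Q : ℝ → ℝ → ℝ) : ℝ → ℝ → ℝ :=
  fun s ψ => (1 - ω * q_e s / Real.sqrt (ω ^ 2 * (q_e s) ^ 2 + Q s ψ)) * dS 1 Q s ψ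

/-!
The difference `U = Q_n - Q_{n-1}` solves a heat equation `∂_s U - ω_{n-1} q_e ∂_ψ² U = F` with
boundary value `ε (ω̄_n - ω̄_{n-1}) q_e²`. Subtract the boundary value times `e^{-ψ}` and multiply
by `ρ ∂_s U`, where `ρ = (1 + δψ)^{2m}`: periodicity kills `∬ ρ ∂_s((∂_ψ U)²)`, and for small `δ`
the derivative of `ρ` is absorbed. This controls `∂_s U`, hence `∂_ψ² U` by the equation and
`∂_ψ U` by interpolation, in terms of `F` and `U`; and `∂_s U` controls `U` by the Poincaré
inequality, except for its weighted mean in `s`.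

For this zero mode, `D(ψ) = ∫ q_e (ω_{n-1} Q_n - ω_{n-2} Q_{n-1}) ds` satisfies
`D'' = -∫ (f(Q_{n-1}; ω_{n-1}) - f(Q_{n-2}; ω_{n-2})) ds`, as `∫ ∂_s Q ds = 0`. The nonlinearity is
quadratic, so by Sobolev embedding the right side is `O(⟨ψ⟩^{-2m})`, and integrating twice from
infinity leaves `⟨ψ⟩^{2-2m}`, which for `m ≥ 3` is square-integrable against the weight `⟨ψ⟩^{2m}`.

The same quadratic structure bounds the difference of the nonlinearities by a multiple of
`M (N + |ω_{n-1} - ω_{n-2}| M)` with `M = ε^0.99` and `N = ‖Q_{n-1} - Q_{n-2}‖`, and the gap between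
the exponents `0.99` and `3/4` beats the constant once `ε` is small.
-/

/-! ### Calculus of smooth functions of `(s, ψ)` -/

section PartialDerivatives

variable {E : Type*} [NormedAddCommGroup E] [NormedSpace ℝ E]

lemma hasDerivAt_slice_left {F : ℝ × ℝ → E} (hF : Differentiable ℝ F) (s ψ : ℝ) :
    HasDerivAt (fun s' => F (s', ψ)) (fderiv ℝ F (s, ψ) (1, 0)) s :=
  (hF (s, ψ)).hasFDerivAt.comp_hasDerivAt s ((hasDerivAt_id s).prodMk (hasDerivAt_const s ψ))

lemma hasDerivAt_slice_right {F : ℝ × ℝ → E} (hF : Differentiable ℝ F) (s ψ : ℝ) :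
    HasDerivAt (fun ψ' => F (s, ψ')) (fderiv ℝ F (s, ψ) (0, 1)) ψ :=
  (hF (s, ψ)).hasFDerivAt.comp_hasDerivAt ψ ((hasDerivAt_const ψ s).prodMk (hasDerivAt_id ψ))

end PartialDerivatives

section Smooth2

variable {h u v : ℝ → ℝ → ℝ}

lemma dS_zero (h : ℝ → ℝ → ℝ) : dS 0 h = h := by
  funext s ψ; simp only [dS, iteratedDeriv_zero]

lemma dS_one_apply (h : ℝ → ℝ → ℝ) (s ψ : ℝ) : dS 1 h s ψ = deriv (fun s' => h s' ψ) s := by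
  simp only [dS, iteratedDeriv_one]

lemma dS_succ (k : ℕ) (h : ℝ → ℝ → ℝ) : dS (k + 1) h = dS 1 (dS k h) := by
  funext s ψ
  simp only [dS, iteratedDeriv_succ, iteratedDeriv_zero]

lemma dPsi_zero (h : ℝ → ℝ → ℝ) : dPsi 0 h = h := by
  funext s ψ; simp only [dPsi, iteratedDeriv_zero]

lemma dPsi_one_apply (h : ℝ → ℝ → ℝ) (s ψ : ℝ) :
    dPsi 1 h s ψ = deriv (fun ψ' => h s ψ') ψ := by
  simp only [dPsi, iteratedDeriv_one]

lemma dPsi_succ (j : ℕ) (h : ℝ → ℝ → ℝ) : dPsi (j + 1) h = dPsi 1 (dPsi j h) := by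
  funext s ψ
  simp only [dPsi, iteratedDeriv_succ, iteratedDeriv_zero]

namespace Smooth2

lemma continuous (hh : Smooth2 h) : Continuous (fun p : ℝ × ℝ => h p.1 p.2) :=
  ContDiff.continuous hh

lemma contDiff_left (hh : Smooth2 h) (ψ : ℝ) : ContDiff ℝ (⊤ : ℕ∞) (fun s => h s ψ) :=
  ContDiff.comp (g := fun p : ℝ × ℝ => h p.1 p.2) hh (contDiff_id.prodMk contDiff_const)

lemma contDiff_right (hh : Smooth2 h) (s : ℝ) : ContDiff ℝ (⊤ : ℕ∞) (fun ψ => h s ψ) :=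
  ContDiff.comp (g := fun p : ℝ × ℝ => h p.1 p.2) hh (contDiff_const.prodMk contDiff_id)

lemma continuous_left (hh : Smooth2 h) (ψ : ℝ) : Continuous (fun s => h s ψ) :=
  (hh.contDiff_left ψ).continuous

lemma differentiable (hh : Smooth2 h) : Differentiable ℝ (fun p : ℝ × ℝ => h p.1 p.2) :=
  ContDiff.differentiable hh (by simp)

lemma hasDerivAt_left (hh : Smooth2 h) (s ψ : ℝ) :
    HasDerivAt (fun s' => h s' ψ) (dS 1 h s ψ) s := by
  rw [dS_one_apply]
  exact (hasDerivAt_slice_left hh.differentiable s ψ).differentiableAt.hasDerivAt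

lemma hasDerivAt_right (hh : Smooth2 h) (s ψ : ℝ) :
    HasDerivAt (fun ψ' => h s ψ') (dPsi 1 h s ψ) ψ := by
  rw [dPsi_one_apply]
  exact (hasDerivAt_slice_right hh.differentiable s ψ).differentiableAt.hasDerivAt

lemma dS_one_eq_fderiv (hh : Smooth2 h) :
    dS 1 h = fun s ψ => fderiv ℝ (fun p : ℝ × ℝ => h p.1 p.2) (s, ψ) (1, 0) := by
  funext s ψ
  exact (hh.hasDerivAt_left s ψ).unique (hasDerivAt_slice_left hh.differentiable s ψ)

lemma dPsi_one_eq_fderiv (hh : Smooth2 h) :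
    dPsi 1 h = fun s ψ => fderiv ℝ (fun p : ℝ × ℝ => h p.1 p.2) (s, ψ) (0, 1) := by
  funext s ψ
  exact (hh.hasDerivAt_right s ψ).unique (hasDerivAt_slice_right hh.differentiable s ψ)

lemma contDiff_fderiv (hh : Smooth2 h) :
    ContDiff ℝ (⊤ : ℕ∞) (fderiv ℝ (fun p : ℝ × ℝ => h p.1 p.2)) :=
  ContDiff.fderiv_right (m := (⊤ : ℕ∞)) hh (by simp)

lemma dS (hh : Smooth2 h) (k : ℕ) : Smooth2 (dS k h) := by
  induction k with
  | zero => rwa [dS_zero]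
  | succ k ih =>
    rw [dS_succ, ih.dS_one_eq_fderiv]
    exact ih.contDiff_fderiv.clm_apply contDiff_const

lemma dPsi (hh : Smooth2 h) (j : ℕ) : Smooth2 (dPsi j h) := by
  induction j with
  | zero => rwa [dPsi_zero]
  | succ j ih =>
    rw [dPsi_succ, ih.dPsi_one_eq_fderiv]
    exact ih.contDiff_fderiv.clm_apply contDiff_const

lemma mul (hu : Smooth2 u) (hv : Smooth2 v) : Smooth2 (fun s ψ => u s ψ * v s ψ) :=
  ContDiff.mul hu hv

lemma sub (hu : Smooth2 u) (hv : Smooth2 v) : Smooth2 (fun s ψ => u s ψ - v s ψ) :=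
  ContDiff.sub hu hv

end Smooth2

lemma smooth2_of_left {q : ℝ → ℝ} (hq : ContDiff ℝ (⊤ : ℕ∞) q) : Smooth2 (fun s _ => q s) :=
  hq.comp contDiff_fst

lemma smooth2_of_right {q : ℝ → ℝ} (hq : ContDiff ℝ (⊤ : ℕ∞) q) : Smooth2 (fun _ ψ => q ψ) :=
  hq.comp contDiff_snd

lemma dS_one_dPsi_one (hh : Smooth2 h) : dS 1 (dPsi 1 h) = dPsi 1 (dS 1 h) := by
  have hF : Differentiable ℝ (fderiv ℝ (fun p : ℝ × ℝ => h p.1 p.2)) :=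
    hh.contDiff_fderiv.differentiable (by simp)
  funext s ψ
  have hsymm : IsSymmSndFDerivAt ℝ (fun p : ℝ × ℝ => h p.1 p.2) (s, ψ) :=
    ContDiffAt.isSymmSndFDerivAt (n := (⊤ : ℕ∞)) (ContDiff.contDiffAt hh) (by
      rw [minSmoothness_of_isRCLikeNormedField]
      exact WithTop.coe_le_coe.2 (le_top : (2 : ℕ∞) ≤ ⊤))
  have hs : HasDerivAt (fun s' => dPsi 1 h s' ψ)
      (fderiv ℝ (fderiv ℝ (fun p : ℝ × ℝ => h p.1 p.2)) (s, ψ) (1, 0) (0, 1)) s := by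
    rw [hh.dPsi_one_eq_fderiv]
    simpa using (hasDerivAt_slice_left hF s ψ).clm_apply (hasDerivAt_const s ((0 : ℝ), (1 : ℝ)))
  have hψ : HasDerivAt (fun ψ' => dS 1 h s ψ')
      (fderiv ℝ (fderiv ℝ (fun p : ℝ × ℝ => h p.1 p.2)) (s, ψ) (0, 1) (1, 0)) ψ := by
    rw [hh.dS_one_eq_fderiv]
    simpa using (hasDerivAt_slice_right hF s ψ).clm_apply (hasDerivAt_const ψ ((1 : ℝ), (0 : ℝ)))
  rw [dS_one_apply, dPsi_one_apply, hs.deriv, hψ.deriv]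
  exact hsymm (1, 0) (0, 1)

lemma dS_one_dPsi (hh : Smooth2 h) (j : ℕ) : dS 1 (dPsi j h) = dPsi j (dS 1 h) := by
  induction j with
  | zero => simp only [dPsi_zero]
  | succ j ih => rw [dPsi_succ, dS_one_dPsi_one (hh.dPsi j), ih, ← dPsi_succ]

lemma dS_dPsi (hh : Smooth2 h) (k j : ℕ) : dS k (dPsi j h) = dPsi j (dS k h) := by
  induction k with
  | zero => simp only [dS_zero]
  | succ k ih => rw [dS_succ, ih, dS_one_dPsi (hh.dS k), ← dS_succ]

lemma dS_dS_one (k : ℕ) (h : ℝ → ℝ → ℝ) : dS k (dS 1 h) = dS (k + 1) h := by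
  funext s ψ
  simp only [dS, iteratedDeriv_succ', iteratedDeriv_zero]

lemma dS_one_mul (hu : Smooth2 u) (hv : Smooth2 v) :
    dS 1 (fun s ψ => u s ψ * v s ψ) = fun s ψ => dS 1 u s ψ * v s ψ + u s ψ * dS 1 v s ψ := by
  funext s ψ
  rw [dS_one_apply, ((hu.hasDerivAt_left s ψ).fun_mul (hv.hasDerivAt_left s ψ)).deriv]

lemma dPsi_one_mul (hu : Smooth2 u) (hv : Smooth2 v) :
    dPsi 1 (fun s ψ => u s ψ * v s ψ)
      = fun s ψ => dPsi 1 u s ψ * v s ψ + u s ψ * dPsi 1 v s ψ := by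
  funext s ψ
  rw [dPsi_one_apply, ((hu.hasDerivAt_right s ψ).fun_mul (hv.hasDerivAt_right s ψ)).deriv]

lemma dS_sub (hu : Smooth2 u) (hv : Smooth2 v) (k : ℕ) :
    dS k (fun s ψ => u s ψ - v s ψ) = fun s ψ => dS k u s ψ - dS k v s ψ := by
  funext s ψ
  exact iteratedDeriv_fun_sub ((hu.contDiff_left ψ).contDiffAt.of_le (mod_cast le_top))
    ((hv.contDiff_left ψ).contDiffAt.of_le (mod_cast le_top))

lemma dPsi_sub (hu : Smooth2 u) (hv : Smooth2 v) (j : ℕ) :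
    dPsi j (fun s ψ => u s ψ - v s ψ) = fun s ψ => dPsi j u s ψ - dPsi j v s ψ := by
  funext s ψ
  exact iteratedDeriv_fun_sub ((hu.contDiff_right s).contDiffAt.of_le (mod_cast le_top))
    ((hv.contDiff_right s).contDiffAt.of_le (mod_cast le_top))

end Smooth2

namespace PeriodicS

variable {L : ℝ} {h u v : ℝ → ℝ → ℝ}

lemma dS (hp : PeriodicS L h) (k : ℕ) : PeriodicS L (dS k h) := by
  intro ψ s
  have hshift : (fun s' => h (s' + L) ψ) = fun s' => h s' ψ := funext (hp ψ)
  have := iteratedDeriv_comp_add_const k (fun s' => h s' ψ) L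
  rw [hshift] at this
  exact (congrFun this s).symm

lemma dPsi (hp : PeriodicS L h) (j : ℕ) : PeriodicS L (dPsi j h) := by
  intro ψ s
  have hslice : h (s + L) = h s := funext fun ψ' => hp ψ' s
  simp only [_root_.dPsi, hslice]

lemma mul (hu : PeriodicS L u) (hv : PeriodicS L v) :
    PeriodicS L (fun s ψ => u s ψ * v s ψ) :=
  fun ψ => (hu ψ).mul (hv ψ)

lemma sub (hu : PeriodicS L u) (hv : PeriodicS L v) :
    PeriodicS L (fun s ψ => u s ψ - v s ψ) :=
  fun ψ => (hu ψ).sub (hv ψ)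

end PeriodicS

/-! ### One-dimensional inequalities -/

section OneDimensional

variable {L : ℝ} {f f' q : ℝ → ℝ}

lemma sq_intervalIntegral_le (hL : 0 < L) (hf : Continuous f) :
    (∫ s in (0:ℝ)..L, f s) ^ 2 ≤ L * ∫ s in (0:ℝ)..L, (f s) ^ 2 := by
  set I := ∫ s in (0:ℝ)..L, f s
  have hexpand : ∫ s in (0:ℝ)..L, (L * f s - I) ^ 2
      = L * (L * (∫ s in (0:ℝ)..L, (f s) ^ 2) - I ^ 2) := by
    have hsq : ∀ s, (L * f s - I) ^ 2 = (L ^ 2 * (f s) ^ 2 - 2 * L * I * f s) + I ^ 2 :=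
      fun s => by ring
    simp only [hsq]
    rw [intervalIntegral.integral_add, intervalIntegral.integral_sub,
      intervalIntegral.integral_const_mul, intervalIntegral.integral_const_mul,
      intervalIntegral.integral_const]
    · simp only [smul_eq_mul, sub_zero, I]; ring
    all_goals exact Continuous.intervalIntegrable (by fun_prop) _ _
  have hnonneg : 0 ≤ ∫ s in (0:ℝ)..L, (L * f s - I) ^ 2 :=
    intervalIntegral.integral_nonneg hL.le fun s _ => sq_nonneg _
  rw [hexpand] at hnonneg
  exact sub_nonneg.1 (nonneg_of_mul_nonneg_right hnonneg hL)

lemma sq_sub_le_integral_deriv_sq (hL : 0 < L) (hd : ∀ s, HasDerivAt f (f' s) s)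
    (hc : Continuous f') {s t : ℝ} (hs : s ∈ Icc 0 L) (ht : t ∈ Icc 0 L) :
    (f s - f t) ^ 2 ≤ L * ∫ x in (0:ℝ)..L, (f' x) ^ 2 := by
  have habs : |f s - f t| ≤ ∫ x in (0:ℝ)..L, |f' x| := by
    have hst : uIoc t s ⊆ uIoc 0 L := by
      rw [uIoc_of_le hL.le]
      exact Ioc_subset_Ioc (le_min ht.1 hs.1) (max_le ht.2 hs.2)
    calc |f s - f t| = |∫ x in t..s, f' x| := by
          rw [intervalIntegral.integral_eq_sub_of_hasDerivAt (fun x _ => hd x)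
            (hc.intervalIntegrable _ _)]
      _ ≤ |(∫ x in t..s, |f' x|)| := by
          simpa using intervalIntegral.norm_integral_le_abs_integral_norm (f := f') (a := t)
            (b := s) (μ := volume)
      _ ≤ |(∫ x in (0:ℝ)..L, |f' x|)| :=
          intervalIntegral.abs_integral_mono_interval hst
            (Eventually.of_forall fun x => abs_nonneg _) (hc.abs.intervalIntegrable _ _)
      _ = ∫ x in (0:ℝ)..L, |f' x| :=
          abs_of_nonneg (intervalIntegral.integral_nonneg hL.le fun s _ => abs_nonneg _)
  calc (f s - f t) ^ 2 = |f s - f t| ^ 2 := (sq_abs _).symm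
    _ ≤ (∫ x in (0:ℝ)..L, |f' x|) ^ 2 := pow_le_pow_left₀ (abs_nonneg _) habs 2
    _ ≤ L * ∫ x in (0:ℝ)..L, (f' x) ^ 2 := by
        simpa only [sq_abs] using sq_intervalIntegral_le hL hc.abs

lemma sq_le_weighted_mean_add (hL : 0 < L) (hq : Continuous q) (hqpos : ∀ s, 0 < q s)
    (hd : ∀ s, HasDerivAt f (f' s) s) (hc : Continuous f') {s : ℝ} (hs : s ∈ Icc 0 L) :
    (f s) ^ 2 ≤ 2 * ((∫ x in (0:ℝ)..L, q x * f x) / ∫ x in (0:ℝ)..L, q x) ^ 2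
      + 2 * (L * ∫ x in (0:ℝ)..L, (f' x) ^ 2) := by
  have hcont : Continuous f := continuous_iff_continuousAt.2 fun x => (hd x).continuousAt
  have hqint : 0 < ∫ x in (0:ℝ)..L, q x :=
    intervalIntegral.intervalIntegral_pos_of_pos (hq.intervalIntegrable _ _) hqpos hL
  obtain ⟨t, ht, hmean⟩ := exists_eq_const_mul_intervalIntegral_of_nonneg (a := 0) (b := L)
    (μ := volume) hcont.continuousOn (hq.intervalIntegrable _ _) fun x _ => (hqpos x).le
  rw [uIcc_of_le hL.le] at ht
  simp only [mul_comm (f _)] at hmean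
  rw [hmean, mul_div_cancel_left₀ _ hqint.ne']
  have := sq_sub_le_integral_deriv_sq hL hd hc hs ht
  nlinarith [sq_nonneg (f s - 2 * f t)]

lemma sq_le_sobolev (hL : 0 < L) (hd : ∀ s, HasDerivAt f (f' s) s) (hc : Continuous f')
    {s : ℝ} (hs : s ∈ Icc 0 L) :
    (f s) ^ 2 ≤ 2 / L * (∫ x in (0:ℝ)..L, (f x) ^ 2) + 2 * L * ∫ x in (0:ℝ)..L, (f' x) ^ 2 := by
  have hcont : Continuous f := continuous_iff_continuousAt.2 fun x => (hd x).continuousAt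
  have hmean : ((∫ x in (0:ℝ)..L, f x) / L) ^ 2 ≤ (∫ x in (0:ℝ)..L, (f x) ^ 2) / L := by
    rw [div_pow, div_le_div_iff₀ (by positivity) hL]
    nlinarith [mul_le_mul_of_nonneg_right (sq_intervalIntegral_le hL hcont) hL.le]
  have := sq_le_weighted_mean_add hL (q := fun _ => 1) continuous_const (fun _ => one_pos) hd hc hs
  simp only [one_mul, intervalIntegral.integral_const, sub_zero, smul_eq_mul, mul_one] at this
  calc _ ≤ _ := this
    _ ≤ 2 * ((∫ x in (0:ℝ)..L, (f x) ^ 2) / L) + 2 * (L * ∫ x in (0:ℝ)..L, (f' x) ^ 2) := by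
        gcongr
    _ = _ := by ring

lemma integral_sq_le_weighted_poincare (hL : 0 < L) (hq : Continuous q) (hqpos : ∀ s, 0 < q s)
    (hd : ∀ s, HasDerivAt f (f' s) s) (hc : Continuous f') :
    (∫ x in (0:ℝ)..L, (f x) ^ 2) ≤
      2 * L / (∫ x in (0:ℝ)..L, q x) ^ 2 * (∫ x in (0:ℝ)..L, q x * f x) ^ 2
      + 2 * L ^ 2 * ∫ x in (0:ℝ)..L, (f' x) ^ 2 := by
  have hcont : Continuous f := continuous_iff_continuousAt.2 fun x => (hd x).continuousAt
  have := intervalIntegral.integral_mono_on (μ := volume) hL.le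
    ((hcont.pow 2).intervalIntegrable _ _) intervalIntegrable_const
    fun s hs => sq_le_weighted_mean_add hL hq hqpos hd hc (s := s) hs
  rw [intervalIntegral.integral_const, sub_zero, smul_eq_mul] at this
  exact this.trans (le_of_eq (by ring))

end OneDimensional

/-! ### Integration over the strip -/

section Strip

variable {L : ℝ}

/-- The fundamental domain `(0, L] × (0, ∞)` of `𝕋_L × (0, ∞)`. -/
def strip (L : ℝ) : Set (ℝ × ℝ) := Ioc (0:ℝ) L ×ˢ Ioi (0:ℝ)

/-- The integral over one tangential period, as a function of the normal variable. -/
noncomputable def periodIntegral (L : ℝ) (h : ℝ → ℝ → ℝ) (ψ : ℝ) : ℝ :=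
  ∫ s in (0:ℝ)..L, h s ψ

lemma measurableSet_strip (L : ℝ) : MeasurableSet (strip L) :=
  measurableSet_Ioc.prod measurableSet_Ioi

lemma periodIntegral_weight_mul (L : ℝ) (ρ : ℝ → ℝ) (h : ℝ → ℝ → ℝ) (ψ : ℝ) :
    periodIntegral L (fun s ψ => ρ ψ * h s ψ) ψ = ρ ψ * periodIntegral L h ψ :=
  intervalIntegral.integral_const_mul _ _

lemma periodIntegral_add {u v : ℝ → ℝ → ℝ} {ψ : ℝ} (hu : Continuous fun s => u s ψ)
    (hv : Continuous fun s => v s ψ) :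
    periodIntegral L (fun s ψ => u s ψ + v s ψ) ψ
      = periodIntegral L u ψ + periodIntegral L v ψ :=
  intervalIntegral.integral_add (hu.intervalIntegrable _ _) (hv.intervalIntegrable _ _)

lemma hasDerivAt_periodIntegral {h : ℝ → ℝ → ℝ} (hh : Smooth2 h) (L ψ : ℝ) :
    HasDerivAt (periodIntegral L h) (periodIntegral L (dPsi 1 h) ψ) ψ := by
  obtain ⟨C, hC⟩ := ((isCompact_uIcc (a := (0:ℝ)) (b := L)).prod
    (isCompact_Icc (a := ψ - 1) (b := ψ + 1))).exists_bound_of_continuousOn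
    (hh.dPsi 1).continuous.continuousOn
  exact (intervalIntegral.hasDerivAt_integral_of_dominated_loc_of_deriv_le
    (F := fun ψ s => h s ψ) (F' := fun ψ s => dPsi 1 h s ψ) (s := Icc (ψ - 1) (ψ + 1))
    (bound := fun _ => C) (Icc_mem_nhds (by linarith) (by linarith))
    (Eventually.of_forall fun x => (hh.continuous_left x).aestronglyMeasurable)
    ((hh.continuous_left ψ).intervalIntegrable _ _)
    ((hh.dPsi 1).continuous_left ψ).aestronglyMeasurable
    (Eventually.of_forall fun t ht x hx => hC (t, x) ⟨uIoc_subset_uIcc ht, hx⟩)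
    intervalIntegrable_const
    (Eventually.of_forall fun t _ x _ => hh.hasDerivAt_right t x)).2

lemma continuous_periodIntegral {h : ℝ → ℝ → ℝ} (hh : Smooth2 h) (L : ℝ) :
    Continuous (periodIntegral L h) :=
  continuous_iff_continuousAt.2 fun ψ => (hasDerivAt_periodIntegral hh L ψ).continuousAt

lemma periodIntegral_dS_one {h : ℝ → ℝ → ℝ} (hh : Smooth2 h) (hp : PeriodicS L h) (ψ : ℝ) :
    periodIntegral L (dS 1 h) ψ = 0 := by
  have hper : h L ψ = h 0 ψ := by simpa using hp ψ 0
  rw [periodIntegral, intervalIntegral.integral_eq_sub_of_hasDerivAt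
    (fun s _ => hh.hasDerivAt_left s ψ) (((hh.dS 1).continuous_left ψ).intervalIntegrable _ _),
    hper, sub_self]

lemma integrableOn_strip_iff (Φ : ℝ → ℝ → ℝ) :
    IntegrableOn (fun p : ℝ × ℝ => Φ p.1 p.2) (strip L) ↔ Integrable (fun p : ℝ × ℝ => Φ p.1 p.2)
      ((volume.restrict (Ioc 0 L)).prod (volume.restrict (Ioi 0))) := by
  rw [Measure.prod_restrict]; rfl

lemma periodIntegral_eq_setIntegral (hL : 0 < L) (Φ : ℝ → ℝ → ℝ) :
    periodIntegral L Φ = fun ψ => ∫ s in Ioc 0 L, Φ s ψ :=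
  funext fun _ => intervalIntegral.integral_of_le hL.le

lemma integrableOn_periodIntegral (hL : 0 < L) {Φ : ℝ → ℝ → ℝ}
    (hi : IntegrableOn (fun p : ℝ × ℝ => Φ p.1 p.2) (strip L)) :
    IntegrableOn (periodIntegral L Φ) (Ioi 0) := by
  rw [periodIntegral_eq_setIntegral hL]
  exact ((integrableOn_strip_iff Φ).1 hi).integral_prod_right

lemma setIntegral_strip (hL : 0 < L) {Φ : ℝ → ℝ → ℝ}
    (hi : IntegrableOn (fun p : ℝ × ℝ => Φ p.1 p.2) (strip L)) :
    ∫ p in strip L, Φ p.1 p.2 = ∫ ψ in Ioi (0:ℝ), periodIntegral L Φ ψ := by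
  rw [periodIntegral_eq_setIntegral hL,
    ← integral_prod_symm (fun p : ℝ × ℝ => Φ p.1 p.2) ((integrableOn_strip_iff Φ).1 hi),
    Measure.prod_restrict]
  rfl

section NormalDerivative

variable {Φ Z : ℝ → ℝ → ℝ}
  (hΦZ : ∀ ψ, HasDerivAt (periodIntegral L Φ) (periodIntegral L Z ψ) ψ)
  (hΦ : IntegrableOn (fun p : ℝ × ℝ => Φ p.1 p.2) (strip L))
  (hZ : IntegrableOn (fun p : ℝ × ℝ => Z p.1 p.2) (strip L))
include hΦZ hΦ hZ

lemma integral_Ioi_periodIntegral_deriv (hL : 0 < L) {a : ℝ} (ha : 0 ≤ a) :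
    ∫ ψ in Ioi a, periodIntegral L Z ψ = -periodIntegral L Φ a := by
  have hint := integrableOn_periodIntegral hL hZ
  have hlim : Tendsto (periodIntegral L Φ) atTop (nhds 0) :=
    tendsto_zero_of_hasDerivAt_of_integrableOn_Ioi (a := 0) (fun ψ _ => hΦZ ψ) hint
      (integrableOn_periodIntegral hL hΦ)
  rw [integral_Ioi_of_hasDerivAt_of_tendsto' (fun ψ _ => hΦZ ψ)
    (hint.mono_set (Ioi_subset_Ioi ha)) hlim, zero_sub]

lemma setIntegral_strip_deriv (hL : 0 < L) :
    ∫ p in strip L, Z p.1 p.2 = -periodIntegral L Φ 0 := by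
  rw [setIntegral_strip hL hZ, integral_Ioi_periodIntegral_deriv hΦZ hΦ hZ hL le_rfl]

lemma abs_periodIntegral_le (hL : 0 < L) {a : ℝ} (ha : 0 ≤ a) :
    |periodIntegral L Φ a| ≤ ∫ p in strip L, |Z p.1 p.2| := by
  have hint := integrableOn_periodIntegral hL hZ
  have hint_abs := integrableOn_periodIntegral hL (Φ := fun s ψ => |Z s ψ|) hZ.abs
  calc |periodIntegral L Φ a| = |∫ ψ in Ioi a, periodIntegral L Z ψ| := by
        rw [integral_Ioi_periodIntegral_deriv hΦZ hΦ hZ hL ha, abs_neg]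
    _ ≤ ∫ ψ in Ioi a, |periodIntegral L Z ψ| := abs_integral_le_integral_abs
    _ ≤ ∫ ψ in Ioi (0:ℝ), |periodIntegral L Z ψ| :=
        setIntegral_mono_set hint.abs (Eventually.of_forall fun _ => abs_nonneg _)
          (Ioi_subset_Ioi ha).eventuallyLE
    _ ≤ ∫ ψ in Ioi (0:ℝ), periodIntegral L (fun s ψ => |Z s ψ|) ψ :=
        integral_mono hint.abs hint_abs fun ψ =>
          intervalIntegral.abs_integral_le_integral_abs hL.le
    _ = ∫ p in strip L, |Z p.1 p.2| := (setIntegral_strip hL (Φ := fun s ψ => |Z s ψ|) hZ.abs).symm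

end NormalDerivative

end Strip

/-! ### Weighted square-integrable functions -/

section WeightedL2

variable {L : ℝ} {m : ℕ} {h u v : ℝ → ℝ → ℝ}

/-- Continuous functions `h` with `⟨ψ⟩^m h ∈ L²(𝕋_L × ℝ₊)`. -/
structure MemWeightedL2 (L : ℝ) (m : ℕ) (h : ℝ → ℝ → ℝ) : Prop where
  continuous : Continuous fun p : ℝ × ℝ => h p.1 p.2
  finite : FiniteL2 L (wt m h)

lemma wt_sq (m : ℕ) (h : ℝ → ℝ → ℝ) (s ψ : ℝ) :
    (wt m h s ψ) ^ 2 = (1 + ψ) ^ (2 * m) * (h s ψ) ^ 2 := by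
  rw [wt, mul_pow, ← pow_mul, mul_comm m]

lemma L2sq_nonneg (L : ℝ) (h : ℝ → ℝ → ℝ) : 0 ≤ L2sq L h :=
  integral_nonneg fun _ => sq_nonneg _

lemma integrableOn_strip_of_abs_le {Φ B : ℝ × ℝ → ℝ} (hΦ : Continuous Φ)
    (hB : IntegrableOn B (strip L)) (hle : ∀ p ∈ strip L, |Φ p| ≤ B p) :
    IntegrableOn Φ (strip L) :=
  Integrable.mono' hB hΦ.aestronglyMeasurable
    ((ae_restrict_iff' (measurableSet_strip L)).2 (Eventually.of_forall hle))

section Domination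

variable {ι : Type*} [Fintype ι] {c : ι → ℝ} {w : ι → ℝ → ℝ → ℝ}

lemma wt_sq_le_sum {s ψ : ℝ} (hle : (h s ψ) ^ 2 ≤ ∑ i, c i * (w i s ψ) ^ 2) :
    (wt m h s ψ) ^ 2 ≤ ∑ i, c i * (wt m (w i) s ψ) ^ 2 := by
  calc (wt m h s ψ) ^ 2 = ((1 + ψ) ^ m) ^ 2 * (h s ψ) ^ 2 := mul_pow _ _ _
    _ ≤ ((1 + ψ) ^ m) ^ 2 * ∑ i, c i * (w i s ψ) ^ 2 := by gcongr
    _ = ∑ i, c i * (wt m (w i) s ψ) ^ 2 := by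
        rw [Finset.mul_sum]
        exact Finset.sum_congr rfl fun i _ => by rw [wt]; ring

variable (hh : Continuous fun p : ℝ × ℝ => h p.1 p.2) (hw : ∀ i, FiniteL2 L (wt m (w i)))
  (hle : ∀ s ∈ Ioc 0 L, ∀ ψ > 0, (h s ψ) ^ 2 ≤ ∑ i, c i * (w i s ψ) ^ 2)
include hh hw hle

lemma MemWeightedL2.of_sq_le_sum : MemWeightedL2 L m h := by
  refine ⟨hh, integrableOn_strip_of_abs_le (by unfold wt; fun_prop)
    (integrable_finsetSum Finset.univ fun i _ => (hw i).const_mul (c i)) fun p hp => ?_⟩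
  rw [abs_of_nonneg (sq_nonneg _)]
  exact wt_sq_le_sum (hle p.1 hp.1 p.2 hp.2)

lemma L2sq_wt_le_sum : L2sq L (wt m h) ≤ ∑ i, c i * L2sq L (wt m (w i)) := by
  have hint : ∀ i ∈ Finset.univ, IntegrableOn
      (fun p : ℝ × ℝ => c i * (wt m (w i) p.1 p.2) ^ 2) (strip L) :=
    fun i _ => (hw i).const_mul (c i)
  calc L2sq L (wt m h) ≤ ∫ p in strip L, ∑ i, c i * (wt m (w i) p.1 p.2) ^ 2 :=
        setIntegral_mono_on (MemWeightedL2.of_sq_le_sum hh hw hle).finite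
          (integrable_finsetSum _ hint) (measurableSet_strip L)
          fun p hp => wt_sq_le_sum (hle p.1 hp.1 p.2 hp.2)
    _ = ∑ i, c i * L2sq L (wt m (w i)) := by
        rw [integral_finsetSum _ hint]
        exact Finset.sum_congr rfl fun i _ => integral_const_mul _ _

omit hw hle in
lemma L2sq_wt_le_of_abs_le_sum {E : ℝ} {e τ : ι → ℝ}
    (hw : ∀ i, MemWeightedL2 L m (w i) ∧ L2sq L (wt m (w i)) ≤ τ i ^ 2)
    (heτ : ∀ i, |e i * τ i| ≤ E) (hle : ∀ s, ∀ ψ > 0, |h s ψ| ≤ ∑ i, |e i * w i s ψ|) :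
    MemWeightedL2 L m h ∧ L2sq L (wt m h) ≤ (Fintype.card ι * E) ^ 2 := by
  have hsq : ∀ s ∈ Ioc 0 L, ∀ ψ > 0,
      (h s ψ) ^ 2 ≤ ∑ i, Fintype.card ι * e i ^ 2 * (w i s ψ) ^ 2 := fun s _ ψ hψ => by
    calc (h s ψ) ^ 2 ≤ (∑ i, |e i * w i s ψ|) ^ 2 :=
          sq_le_sq.2 ((hle s ψ hψ).trans (le_abs_self _))
      _ ≤ Fintype.card ι * ∑ i, |e i * w i s ψ| ^ 2 := sq_sum_le_card_mul_sum_sq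
      _ = _ := by simp only [Finset.mul_sum, sq_abs, mul_pow, mul_assoc]
  have hfin := fun i => (hw i).1.finite
  refine ⟨.of_sq_le_sum hh hfin hsq, (L2sq_wt_le_sum hh hfin hsq).trans ?_⟩
  calc _ ≤ ∑ _i : ι, Fintype.card ι * E ^ 2 := Finset.sum_le_sum fun i _ => by
        calc _ ≤ Fintype.card ι * e i ^ 2 * τ i ^ 2 := by gcongr; exact (hw i).2
          _ = Fintype.card ι * |e i * τ i| ^ 2 := by rw [sq_abs]; ring
          _ ≤ Fintype.card ι * E ^ 2 := by gcongr; exact heτ i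
    _ = (Fintype.card ι * E) ^ 2 := by
        rw [Finset.sum_const, nsmul_eq_mul, Finset.card_univ]; ring

end Domination

end WeightedL2

/-! ### Slowly varying weights -/

/-- A weight `ρ` in the normal variable, with derivative `ρ'`, dominated by `⟨ψ⟩^(2m)` and varying
at relative rate at most `κ`. Integrations by parts against `ρ` then cost only `O(κ)`. -/
structure SlowWeight (m : ℕ) (κ : ℝ) (ρ ρ' : ℝ → ℝ) : Prop where
  hasDerivAt : ∀ ψ, HasDerivAt ρ (ρ' ψ) ψ
  continuous_deriv : Continuous ρ'
  nonneg : ∀ ψ, 0 ≤ ψ → 0 ≤ ρ ψ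
  le_pow : ∀ ψ, 0 ≤ ψ → ρ ψ ≤ (1 + ψ) ^ (2 * m)
  abs_deriv_le : ∀ ψ, 0 ≤ ψ → |ρ' ψ| ≤ κ * ρ ψ

lemma slowWeight_pow (m : ℕ) {δ : ℝ} (hδ : 0 ≤ δ) (hδ1 : δ ≤ 1) :
    SlowWeight m (2 * m * δ) (fun ψ => (1 + δ * ψ) ^ (2 * m))
      (fun ψ => 2 * m * δ * (1 + δ * ψ) ^ (2 * m - 1)) where
  hasDerivAt ψ := by
    refine ((((hasDerivAt_id' ψ).const_mul δ).const_add 1).fun_pow (2 * m)).congr_deriv ?_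
    push_cast
    ring
  continuous_deriv := by fun_prop
  nonneg ψ hψ := by positivity
  le_pow ψ hψ := by
    have : δ * ψ ≤ ψ := mul_le_of_le_one_left hψ hδ1
    gcongr
  abs_deriv_le ψ hψ := by
    have hbase : 1 ≤ 1 + δ * ψ := le_add_of_nonneg_right (by positivity)
    rw [abs_of_nonneg (by positivity)]
    exact mul_le_mul_of_nonneg_left (pow_le_pow_right₀ hbase (Nat.sub_le _ _)) (by positivity)

/-- The bilinear form `∬ ρ u v` on the strip. -/
noncomputable def stripInner (L : ℝ) (ρ : ℝ → ℝ) (u v : ℝ → ℝ → ℝ) : ℝ :=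
  ∫ p in strip L, ρ p.2 * (u p.1 p.2 * v p.1 p.2)

lemma MemWeightedL2.integrableOn_mul {L C : ℝ} {m : ℕ} {u v : ℝ → ℝ → ℝ} {σ : ℝ → ℝ}
    (hu : MemWeightedL2 L m u) (hv : MemWeightedL2 L m v) (hσ : Continuous σ)
    (hσC : ∀ ψ, 0 ≤ ψ → |σ ψ| ≤ C * (1 + ψ) ^ (2 * m)) :
    IntegrableOn (fun p : ℝ × ℝ => σ p.2 * (u p.1 p.2 * v p.1 p.2)) (strip L) := by
  have := hu.continuous
  have := hv.continuous
  refine integrableOn_strip_of_abs_le (by fun_prop) ((hu.finite.add hv.finite).const_mul C)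
    fun p hp => ?_
  have hψ : 0 ≤ p.2 := hp.2.le
  have hσp := hσC p.2 hψ
  have hyoung : |u p.1 p.2 * v p.1 p.2| ≤ (u p.1 p.2) ^ 2 + (v p.1 p.2) ^ 2 := by
    rw [abs_le]
    constructor <;> nlinarith [sq_nonneg (u p.1 p.2 + v p.1 p.2), sq_nonneg (u p.1 p.2 - v p.1 p.2)]
  calc |σ p.2 * (u p.1 p.2 * v p.1 p.2)|
      ≤ C * (1 + p.2) ^ (2 * m) * ((u p.1 p.2) ^ 2 + (v p.1 p.2) ^ 2) := by
        rw [abs_mul]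
        exact mul_le_mul hσp hyoung (abs_nonneg _) ((abs_nonneg _).trans hσp)
    _ = C * ((wt m u p.1 p.2) ^ 2 + (wt m v p.1 p.2) ^ 2) := by rw [wt_sq, wt_sq]; ring

namespace SlowWeight

variable {L κ : ℝ} {m : ℕ} {ρ ρ' : ℝ → ℝ} {u v x y z w : ℝ → ℝ → ℝ}

lemma continuous (hρ : SlowWeight m κ ρ ρ') : Continuous ρ :=
  continuous_iff_continuousAt.2 fun ψ => (hρ.hasDerivAt ψ).continuousAt

lemma integrableOn (hρ : SlowWeight m κ ρ ρ') (hu : MemWeightedL2 L m u)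
    (hv : MemWeightedL2 L m v) :
    IntegrableOn (fun p : ℝ × ℝ => ρ p.2 * (u p.1 p.2 * v p.1 p.2)) (strip L) :=
  hu.integrableOn_mul hv hρ.continuous (C := 1) fun ψ hψ => by
    rw [abs_of_nonneg (hρ.nonneg ψ hψ), one_mul]
    exact hρ.le_pow ψ hψ

lemma integrableOn_deriv (hρ : SlowWeight m κ ρ ρ') (hu : MemWeightedL2 L m u)
    (hv : MemWeightedL2 L m v) :
    IntegrableOn (fun p : ℝ × ℝ => ρ' p.2 * (u p.1 p.2 * v p.1 p.2)) (strip L) :=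
  hu.integrableOn_mul hv hρ.continuous_deriv (C := |κ|) fun ψ hψ =>
    (hρ.abs_deriv_le ψ hψ).trans (mul_le_mul (le_abs_self κ) (hρ.le_pow ψ hψ) (hρ.nonneg ψ hψ)
      (abs_nonneg κ))

lemma stripInner_self_nonneg (hρ : SlowWeight m κ ρ ρ') (L : ℝ) (u : ℝ → ℝ → ℝ) :
    0 ≤ stripInner L ρ u u :=
  setIntegral_nonneg (measurableSet_strip L) fun p hp =>
    mul_nonneg (hρ.nonneg p.2 hp.2.le) (mul_self_nonneg _)

lemma stripInner_self_le_L2sq (hρ : SlowWeight m κ ρ ρ') (hu : MemWeightedL2 L m u) :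
    stripInner L ρ u u ≤ L2sq L (wt m u) := by
  refine setIntegral_mono_on (hρ.integrableOn hu hu) hu.finite (measurableSet_strip L)
    fun p hp => ?_
  rw [wt_sq, ← sq]
  exact mul_le_mul_of_nonneg_right (hρ.le_pow p.2 hp.2.le) (sq_nonneg _)

lemma stripInner_self_le (hρ : SlowWeight m κ ρ ρ') (hu : MemWeightedL2 L m u)
    (hx : MemWeightedL2 L m x) (hy : MemWeightedL2 L m y) (hz : MemWeightedL2 L m z)
    (hw : MemWeightedL2 L m w) {a b : ℝ}
    (hle : ∀ s ψ, (u s ψ) ^ 2 ≤ a * (x s ψ * y s ψ) + b * (z s ψ * w s ψ)) :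
    stripInner L ρ u u ≤ a * stripInner L ρ x y + b * stripInner L ρ z w := by
  have hxy := (hρ.integrableOn hx hy).const_mul a
  have hzw := (hρ.integrableOn hz hw).const_mul b
  calc stripInner L ρ u u
      ≤ ∫ p in strip L, (a * (ρ p.2 * (x p.1 p.2 * y p.1 p.2))
          + b * (ρ p.2 * (z p.1 p.2 * w p.1 p.2))) := by
        refine setIntegral_mono_on (hρ.integrableOn hu hu) (hxy.add hzw) (measurableSet_strip L)
          fun p hp => ?_
        calc ρ p.2 * (u p.1 p.2 * u p.1 p.2) = ρ p.2 * (u p.1 p.2) ^ 2 := by rw [sq]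
          _ ≤ ρ p.2 * (a * (x p.1 p.2 * y p.1 p.2) + b * (z p.1 p.2 * w p.1 p.2)) :=
              mul_le_mul_of_nonneg_left (hle p.1 p.2) (hρ.nonneg p.2 hp.2.le)
          _ = _ := by ring
    _ = a * stripInner L ρ x y + b * stripInner L ρ z w := by
        rw [integral_add hxy hzw, integral_const_mul, integral_const_mul, stripInner, stripInner]

lemma abs_setIntegral_mul_le (hρ : SlowWeight m κ ρ ρ') (hu : MemWeightedL2 L m u)
    (hv : MemWeightedL2 L m v) {σ : ℝ → ℝ} {c : ℝ} (hσ : ∀ ψ, 0 ≤ ψ → |σ ψ| ≤ c * ρ ψ) :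
    |∫ p in strip L, σ p.2 * (u p.1 p.2 * v p.1 p.2)|
      ≤ c / 2 * (stripInner L ρ u u + stripInner L ρ v v) := by
  have huu := hρ.integrableOn hu hu
  have hvv := hρ.integrableOn hv hv
  rw [stripInner, stripInner, ← integral_add huu hvv, ← integral_const_mul, ← Real.norm_eq_abs]
  refine norm_integral_le_of_norm_le ((huu.add hvv).const_mul (c / 2))
    ((ae_restrict_iff' (measurableSet_strip L)).2 (Eventually.of_forall fun p hp => ?_))
  have hψ : 0 ≤ p.2 := hp.2.le
  have hyoung : |u p.1 p.2 * v p.1 p.2| ≤ (u p.1 p.2 * u p.1 p.2 + v p.1 p.2 * v p.1 p.2) / 2 := by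
    rw [abs_le]
    constructor <;> nlinarith [sq_nonneg (u p.1 p.2 + v p.1 p.2), sq_nonneg (u p.1 p.2 - v p.1 p.2)]
  rw [Real.norm_eq_abs, abs_mul]
  calc |σ p.2| * |u p.1 p.2 * v p.1 p.2|
      ≤ c * ρ p.2 * ((u p.1 p.2 * u p.1 p.2 + v p.1 p.2 * v p.1 p.2) / 2) :=
        mul_le_mul (hσ p.2 hψ) hyoung (abs_nonneg _) ((abs_nonneg _).trans (hσ p.2 hψ))
    _ = _ := by ring

lemma hasDerivAt_periodIntegral_mul (hρ : SlowWeight m κ ρ ρ') {Φ Z : ℝ → ℝ → ℝ}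
    (hΦc : Continuous fun p : ℝ × ℝ => Φ p.1 p.2) (hZc : Continuous fun p : ℝ × ℝ => Z p.1 p.2)
    (hΦZ : ∀ ψ, HasDerivAt (periodIntegral L Φ) (periodIntegral L Z ψ) ψ) (ψ : ℝ) :
    HasDerivAt (periodIntegral L fun s ψ => ρ ψ * Φ s ψ)
      (periodIntegral L (fun s ψ => ρ' ψ * Φ s ψ + ρ ψ * Z s ψ) ψ) ψ := by
  rw [periodIntegral_add (u := fun s ψ => ρ' ψ * Φ s ψ) (v := fun s ψ => ρ ψ * Z s ψ)
      (by fun_prop) (by fun_prop),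
    periodIntegral_weight_mul, periodIntegral_weight_mul]
  exact ((hρ.hasDerivAt ψ).mul (hΦZ ψ)).congr_of_eventuallyEq
    (Eventually.of_forall fun ψ => periodIntegral_weight_mul L ρ Φ ψ)

section IntegrationByParts

variable {Z : ℝ → ℝ → ℝ} (hρ : SlowWeight m κ ρ ρ') (hu : MemWeightedL2 L m u)
  (hv : MemWeightedL2 L m v) (hZc : Continuous fun p : ℝ × ℝ => Z p.1 p.2)
  (hZ : IntegrableOn (fun p : ℝ × ℝ => ρ p.2 * Z p.1 p.2) (strip L))
  (hderiv : ∀ ψ, HasDerivAt (periodIntegral L fun s ψ => u s ψ * v s ψ) (periodIntegral L Z ψ) ψ)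
include hρ hu hv hZc hZ hderiv

lemma abs_setIntegral_deriv_le (hL : 0 < L) (hzero : ∀ s, u s 0 * v s 0 = 0) :
    |∫ p in strip L, ρ p.2 * Z p.1 p.2|
      ≤ κ / 2 * (stripInner L ρ u u + stripInner L ρ v v) := by
  have hρ'uv := hρ.integrableOn_deriv hu hv
  have hparts := setIntegral_strip_deriv
    (hρ.hasDerivAt_periodIntegral_mul (hu.continuous.mul hv.continuous) hZc hderiv)
    (hρ.integrableOn hu hv) (hρ'uv.add hZ) hL
  simp only [periodIntegral, hzero, mul_zero, intervalIntegral.integral_zero, neg_zero] at hparts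
  rw [integral_add hρ'uv hZ] at hparts
  rw [eq_neg_of_add_eq_zero_right hparts, abs_neg]
  exact hρ.abs_setIntegral_mul_le hu hv hρ.abs_deriv_le

end IntegrationByParts

lemma mul_periodIntegral_sq_le (hρ : SlowWeight m κ ρ ρ') (hL : 0 < L) (hh : Smooth2 u)
    (hu : MemWeightedL2 L m u) (hu' : MemWeightedL2 L m (dPsi 1 u)) {ψ : ℝ} (hψ : 0 ≤ ψ) :
    ρ ψ * ∫ s in (0:ℝ)..L, (u s ψ) ^ 2
      ≤ (κ + 1) * stripInner L ρ u u + stripInner L ρ (dPsi 1 u) (dPsi 1 u) := by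
  have hZ : IntegrableOn (fun p : ℝ × ℝ => ρ' p.2 * (u p.1 p.2 * u p.1 p.2)
      + ρ p.2 * (dPsi 1 u p.1 p.2 * u p.1 p.2 + u p.1 p.2 * dPsi 1 u p.1 p.2)) (strip L) := by
    simp only [mul_add]
    exact (hρ.integrableOn_deriv hu hu).add ((hρ.integrableOn hu' hu).add (hρ.integrableOn hu hu'))
  have hderiv : ∀ ψ, HasDerivAt (periodIntegral L fun s ψ => u s ψ * u s ψ)
      (periodIntegral L (fun s ψ => dPsi 1 u s ψ * u s ψ + u s ψ * dPsi 1 u s ψ) ψ) ψ := fun ψ => by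
    have := hasDerivAt_periodIntegral (hh.mul hh) L ψ
    rwa [dPsi_one_mul hh hh] at this
  have huu := (hρ.integrableOn hu hu).const_mul (κ + 1)
  have hu'u' := hρ.integrableOn hu' hu'
  have hc := hu.continuous
  have hc' := hu'.continuous
  have hbound := abs_periodIntegral_le
    (hρ.hasDerivAt_periodIntegral_mul (by fun_prop) (by fun_prop) hderiv)
    (hρ.integrableOn hu hu) hZ hL hψ
  calc ρ ψ * ∫ s in (0:ℝ)..L, (u s ψ) ^ 2
      = periodIntegral L (fun s ψ => ρ ψ * (u s ψ * u s ψ)) ψ := by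
        rw [periodIntegral_weight_mul, periodIntegral]; simp only [sq]
    _ ≤ _ := (le_abs_self _).trans hbound
    _ ≤ ∫ p in strip L, ((κ + 1) * (ρ p.2 * (u p.1 p.2 * u p.1 p.2))
          + ρ p.2 * (dPsi 1 u p.1 p.2 * dPsi 1 u p.1 p.2)) := by
        refine setIntegral_mono_on hZ.abs (huu.add hu'u')
          (measurableSet_strip L) fun p hp => abs_le.2 ?_
        have hρp := hρ.nonneg p.2 hp.2.le
        obtain ⟨hlo, hhi⟩ := abs_le.1 (hρ.abs_deriv_le p.2 hp.2.le)
        have := mul_nonneg hρp (sq_nonneg (u p.1 p.2 - dPsi 1 u p.1 p.2))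
        have := mul_nonneg hρp (sq_nonneg (u p.1 p.2 + dPsi 1 u p.1 p.2))
        constructor
        · nlinarith [mul_nonneg (sub_nonneg.2 hlo) (sq_nonneg (u p.1 p.2))]
        · nlinarith [mul_nonneg (sub_nonneg.2 hhi) (sq_nonneg (u p.1 p.2))]
    _ = _ := by rw [integral_add huu hu'u', integral_const_mul, stripInner, stripInner]

end SlowWeight

lemma pow_mul_L2sq_le_stripInner {L δ : ℝ} {m : ℕ} {u : ℝ → ℝ → ℝ} (hδ : 0 ≤ δ) (hδ1 : δ ≤ 1)
    (hu : MemWeightedL2 L m u) :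
    δ ^ (2 * m) * L2sq L (wt m u) ≤ stripInner L (fun ψ => (1 + δ * ψ) ^ (2 * m)) u u := by
  rw [L2sq, ← integral_const_mul]
  refine setIntegral_mono_on (hu.finite.const_mul _)
    ((slowWeight_pow m hδ hδ1).integrableOn hu hu) (measurableSet_strip L) fun p hp => ?_
  have hψ : 0 ≤ p.2 := hp.2.le
  calc δ ^ (2 * m) * (wt m u p.1 p.2) ^ 2 = (δ + δ * p.2) ^ (2 * m) * (u p.1 p.2) ^ 2 := by
        rw [wt_sq, ← mul_assoc, ← mul_pow, mul_add, mul_one]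
    _ ≤ (1 + δ * p.2) ^ (2 * m) * (u p.1 p.2) ^ 2 := by gcongr
    _ = _ := by rw [sq (u p.1 p.2)]

lemma sq_wt_le_sobolev {L : ℝ} {m : ℕ} {h : ℝ → ℝ → ℝ} (hL : 0 < L) (hh : Smooth2 h)
    (h0 : FiniteL2 L (wt m h)) (hψ : FiniteL2 L (wt m (dPsi 1 h)))
    (hs : FiniteL2 L (wt m (dS 1 h))) (hsψ : FiniteL2 L (wt m (dPsi 1 (dS 1 h))))
    {s ψ : ℝ} (hsL : s ∈ Icc 0 L) (hψ0 : 0 ≤ ψ) :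
    (wt m h s ψ) ^ 2 ≤ (2 * m + 1) * (2 / L + 2 * L) * (L2sq L (wt m h)
      + L2sq L (wt m (dPsi 1 h)) + L2sq L (wt m (dS 1 h)) + L2sq L (wt m (dPsi 1 (dS 1 h)))) := by
  have htrace : ∀ {k : ℝ → ℝ → ℝ}, Smooth2 k → FiniteL2 L (wt m k) → FiniteL2 L (wt m (dPsi 1 k)) →
      (1 + ψ) ^ (2 * m) * (∫ s in (0:ℝ)..L, (k s ψ) ^ 2)
        ≤ (2 * m + 1) * (L2sq L (wt m k) + L2sq L (wt m (dPsi 1 k))) := fun {k} hk hk0 hkψ => by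
    have hρ := slowWeight_pow m zero_le_one le_rfl
    have hmem : MemWeightedL2 L m k := ⟨hk.continuous, hk0⟩
    have hmemψ : MemWeightedL2 L m (dPsi 1 k) := ⟨(hk.dPsi 1).continuous, hkψ⟩
    have := hρ.mul_periodIntegral_sq_le hL hk hmem hmemψ hψ0
    have h1 := hρ.stripInner_self_le_L2sq hmem
    have h2 := hρ.stripInner_self_le_L2sq hmemψ
    have := mul_le_mul_of_nonneg_left h1 (by positivity : (0:ℝ) ≤ 2 * m + 1)
    have := mul_nonneg (by positivity : (0:ℝ) ≤ 2 * m) (L2sq_nonneg L (wt m (dPsi 1 k)))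
    simp only [one_mul, mul_one] at *
    linarith
  have hsob := sq_le_sobolev hL (fun x => hh.hasDerivAt_left x ψ) ((hh.dS 1).continuous_left ψ) hsL
  have hA := htrace hh h0 hψ
  have hB := htrace (hh.dS 1) hs hsψ
  have hnonneg : ∀ k : ℝ → ℝ → ℝ, 0 ≤ L2sq L k := L2sq_nonneg L
  calc (wt m h s ψ) ^ 2 = (1 + ψ) ^ (2 * m) * (h s ψ) ^ 2 := wt_sq m h s ψ
    _ ≤ (1 + ψ) ^ (2 * m) * (2 / L * (∫ x in (0:ℝ)..L, (h x ψ) ^ 2)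
          + 2 * L * ∫ x in (0:ℝ)..L, (dS 1 h x ψ) ^ 2) := by gcongr
    _ = 2 / L * ((1 + ψ) ^ (2 * m) * ∫ x in (0:ℝ)..L, (h x ψ) ^ 2)
          + 2 * L * ((1 + ψ) ^ (2 * m) * ∫ x in (0:ℝ)..L, (dS 1 h x ψ) ^ 2) := by ring
    _ ≤ 2 / L * ((2 * m + 1) * (L2sq L (wt m h) + L2sq L (wt m (dPsi 1 h))))
          + 2 * L * ((2 * m + 1) * (L2sq L (wt m (dS 1 h)) + L2sq L (wt m (dPsi 1 (dS 1 h))))) := by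
        gcongr
    _ ≤ _ := by
        have h1 := add_nonneg (hnonneg (wt m h)) (hnonneg (wt m (dPsi 1 h)))
        have h2 := add_nonneg (hnonneg (wt m (dS 1 h))) (hnonneg (wt m (dPsi 1 (dS 1 h))))
        have hX := mul_nonneg (by positivity : (0:ℝ) ≤ (2 * m + 1) * (2 * L)) h1
        have hY := mul_nonneg (by positivity : (0:ℝ) ≤ (2 * m + 1) * (2 / L)) h2
        linarith

/-! ### Energy estimate -/

/-- The squared norm `‖⟨ψ⟩^m h‖² + ‖⟨ψ⟩^m ∂_s h‖² + ‖⟨ψ⟩^m ∂_ψ h‖² + ‖⟨ψ⟩^m ∂_ψ² h‖²` of parabolic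
regularity, from which `X_{k,m}` is built. -/
noncomputable def parabolicNormSq (L : ℝ) (m : ℕ) (h : ℝ → ℝ → ℝ) : ℝ :=
  L2sq L (wt m h) + L2sq L (wt m (dS 1 h)) + L2sq L (wt m (dPsi 1 h)) + L2sq L (wt m (dPsi 2 h))

/-- Smooth functions of finite `parabolicNormSq`. -/
structure MemParabolic (L : ℝ) (m : ℕ) (h : ℝ → ℝ → ℝ) : Prop where
  smooth : Smooth2 h
  finite : FiniteL2 L (wt m h)
  finite_dS : FiniteL2 L (wt m (dS 1 h))
  finite_dPsi : FiniteL2 L (wt m (dPsi 1 h))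
  finite_dPsi_two : FiniteL2 L (wt m (dPsi 2 h))

/-- The linear parabolic operator `∂_s - α(s) ∂_ψ²`. -/
noncomputable def heatOp (α : ℝ → ℝ) (h : ℝ → ℝ → ℝ) : ℝ → ℝ → ℝ :=
  fun s ψ => dS 1 h s ψ - α s * dPsi 2 h s ψ

lemma parabolicNormSq_nonneg (L : ℝ) (m : ℕ) (h : ℝ → ℝ → ℝ) : 0 ≤ parabolicNormSq L m h :=
  add_nonneg (add_nonneg (add_nonneg (L2sq_nonneg _ _) (L2sq_nonneg _ _)) (L2sq_nonneg _ _))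
    (L2sq_nonneg _ _)

namespace MemParabolic

variable {L κ : ℝ} {m : ℕ} {ρ ρ' : ℝ → ℝ} {W : ℝ → ℝ → ℝ}

lemma mem (hW : MemParabolic L m W) : MemWeightedL2 L m W :=
  ⟨hW.smooth.continuous, hW.finite⟩

lemma mem_dS (hW : MemParabolic L m W) : MemWeightedL2 L m (dS 1 W) :=
  ⟨(hW.smooth.dS 1).continuous, hW.finite_dS⟩

lemma mem_dPsi (hW : MemParabolic L m W) : MemWeightedL2 L m (dPsi 1 W) :=
  ⟨(hW.smooth.dPsi 1).continuous, hW.finite_dPsi⟩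

lemma mem_dPsi_two (hW : MemParabolic L m W) : MemWeightedL2 L m (dPsi 2 W) :=
  ⟨(hW.smooth.dPsi 2).continuous, hW.finite_dPsi_two⟩

end MemParabolic

lemma periodIntegral_dPsi_dS_mul_dPsi {L : ℝ} {W : ℝ → ℝ → ℝ} (hW : Smooth2 W)
    (hp : PeriodicS L W) (ψ : ℝ) :
    periodIntegral L (fun s ψ => dPsi 1 (dS 1 W) s ψ * dPsi 1 W s ψ) ψ = 0 := by
  have hperiod := periodIntegral_dS_one ((hW.dPsi 1).mul (hW.dPsi 1))
    ((hp.dPsi 1).mul (hp.dPsi 1)) ψ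
  rw [dS_one_mul (hW.dPsi 1) (hW.dPsi 1), dS_one_dPsi_one hW] at hperiod
  have hdouble : 2 * periodIntegral L (fun s ψ => dPsi 1 (dS 1 W) s ψ * dPsi 1 W s ψ) ψ = 0 := by
    rw [← hperiod, periodIntegral, ← intervalIntegral.integral_const_mul]
    exact intervalIntegral.integral_congr fun s _ => by ring
  linarith

lemma dS_apply_zero {W : ℝ → ℝ → ℝ} (hW0 : ∀ s, W s 0 = 0) (k : ℕ) (s : ℝ) : dS k W s 0 = 0 := by
  simp [dS, hW0]

namespace SlowWeight

variable {L κ : ℝ} {m : ℕ} {ρ ρ' : ℝ → ℝ} {W : ℝ → ℝ → ℝ}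

lemma stripInner_dS_dPsi_two_le (hρ : SlowWeight m κ ρ ρ') (hL : 0 < L)
    (hW : MemParabolic L m W) (hp : PeriodicS L W) (hW0 : ∀ s, W s 0 = 0) :
    stripInner L ρ (dS 1 W) (dPsi 2 W) ≤ κ / 2 * (stripInner L ρ (dS 1 W) (dS 1 W)
      + stripInner L ρ (dPsi 1 W) (dPsi 1 W)) := by
  have hderiv : ∀ ψ, HasDerivAt (periodIntegral L fun s ψ => dS 1 W s ψ * dPsi 1 W s ψ)
      (periodIntegral L (fun s ψ => dS 1 W s ψ * dPsi 2 W s ψ) ψ) ψ := fun ψ => by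
    refine (hasDerivAt_periodIntegral ((hW.smooth.dS 1).mul (hW.smooth.dPsi 1)) L ψ).congr_deriv ?_
    rw [dPsi_one_mul (hW.smooth.dS 1) (hW.smooth.dPsi 1), ← dPsi_succ,
      periodIntegral_add (u := fun s ψ => dPsi 1 (dS 1 W) s ψ * dPsi 1 W s ψ)
        (v := fun s ψ => dS 1 W s ψ * dPsi 2 W s ψ)
        ((((hW.smooth.dS 1).dPsi 1).mul (hW.smooth.dPsi 1)).continuous_left ψ)
        (((hW.smooth.dS 1).mul (hW.smooth.dPsi 2)).continuous_left ψ),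
      periodIntegral_dPsi_dS_mul_dPsi hW.smooth hp, zero_add]
  exact (le_abs_self _).trans (hρ.abs_setIntegral_deriv_le hW.mem_dS hW.mem_dPsi
    (Z := fun s ψ => dS 1 W s ψ * dPsi 2 W s ψ)
    (hW.mem_dS.continuous.mul hW.mem_dPsi_two.continuous)
    (hρ.integrableOn hW.mem_dS hW.mem_dPsi_two) hderiv hL
    fun s => by rw [dS_apply_zero hW0, zero_mul])

lemma stripInner_dPsi_self_le (hρ : SlowWeight m κ ρ ρ') (hL : 0 < L)
    (hW : MemParabolic L m W) (hW0 : ∀ s, W s 0 = 0) :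
    stripInner L ρ (dPsi 1 W) (dPsi 1 W)
      ≤ (stripInner L ρ W W + stripInner L ρ (dPsi 2 W) (dPsi 2 W)) / 2
        + κ / 2 * (stripInner L ρ W W + stripInner L ρ (dPsi 1 W) (dPsi 1 W)) := by
  have hbb := hρ.integrableOn hW.mem_dPsi hW.mem_dPsi
  have hhc := hρ.integrableOn hW.mem hW.mem_dPsi_two
  have hsum : (fun p : ℝ × ℝ => ρ p.2 * (dPsi 1 W p.1 p.2 * dPsi 1 W p.1 p.2
      + W p.1 p.2 * dPsi 2 W p.1 p.2)) = fun p => ρ p.2 * (dPsi 1 W p.1 p.2 * dPsi 1 W p.1 p.2)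
        + ρ p.2 * (W p.1 p.2 * dPsi 2 W p.1 p.2) := funext fun _ => mul_add _ _ _
  have hderiv : ∀ ψ, HasDerivAt (periodIntegral L fun s ψ => W s ψ * dPsi 1 W s ψ)
      (periodIntegral L (fun s ψ => dPsi 1 W s ψ * dPsi 1 W s ψ + W s ψ * dPsi 2 W s ψ) ψ) ψ :=
    fun ψ => by
      have := hasDerivAt_periodIntegral (hW.smooth.mul (hW.smooth.dPsi 1)) L ψ
      rwa [dPsi_one_mul hW.smooth (hW.smooth.dPsi 1), ← dPsi_succ] at this
  have hparts := hρ.abs_setIntegral_deriv_le hW.mem hW.mem_dPsi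
    (Z := fun s ψ => dPsi 1 W s ψ * dPsi 1 W s ψ + W s ψ * dPsi 2 W s ψ)
    ((hW.mem_dPsi.continuous.mul hW.mem_dPsi.continuous).add
      (hW.mem.continuous.mul hW.mem_dPsi_two.continuous))
    (by rw [hsum]; exact hbb.add hhc) hderiv hL fun s => by rw [hW0, zero_mul]
  rw [hsum, integral_add hbb hhc] at hparts
  have hyoung := hρ.abs_setIntegral_mul_le hW.mem hW.mem_dPsi_two (σ := ρ) (c := 1)
    fun ψ hψ => by rw [abs_of_nonneg (hρ.nonneg ψ hψ), one_mul]
  simp only [stripInner] at *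
  linarith [(abs_le.1 hparts).2, (abs_le.1 hyoung).1]

variable {α : ℝ → ℝ} {μ M : ℝ}

lemma stripInner_dS_self_le (hρ : SlowWeight m κ ρ ρ') (hμ : 0 < μ) (hα : ∀ s, μ ≤ α s)
    (hαM : ∀ s, α s ≤ M) (hW : MemParabolic L m W) (hG : MemWeightedL2 L m (heatOp α W)) :
    stripInner L ρ (dS 1 W) (dS 1 W) ≤ 2 * M * stripInner L ρ (dS 1 W) (dPsi 2 W)
      + M / μ * stripInner L ρ (heatOp α W) (heatOp α W) := by
  refine hρ.stripInner_self_le hW.mem_dS hW.mem_dS hW.mem_dPsi_two hG hG fun s ψ => ?_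
  have hαs : 0 < α s := hμ.trans_le (hα s)
  have heq : dPsi 2 W s ψ = (dS 1 W s ψ - heatOp α W s ψ) / α s := by
    rw [heatOp]; field_simp; ring
  rw [heq]
  set a := dS 1 W s ψ
  set g := heatOp α W s ψ
  have hM : 1 ≤ M / α s := (one_le_div hαs).2 (hαM s)
  calc a ^ 2 ≤ a ^ 2 + (M / α s - 1) * a ^ 2 + M / α s * (a - g) ^ 2 := by
        have := mul_nonneg (sub_nonneg.2 hM) (sq_nonneg a)
        have := mul_nonneg (zero_le_one.trans hM) (sq_nonneg (a - g))
        linarith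
    _ = 2 * M * (a * ((a - g) / α s)) + M / α s * (g * g) := by ring
    _ ≤ 2 * M * (a * ((a - g) / α s)) + M / μ * (g * g) := by
        have hM0 : 0 ≤ M := hαs.le.trans (hαM s)
        have := hα s
        have := mul_self_nonneg g
        gcongr

lemma stripInner_dPsi_two_self_le (hρ : SlowWeight m κ ρ ρ') (hμ : 0 < μ) (hα : ∀ s, μ ≤ α s)
    (hW : MemParabolic L m W) (hG : MemWeightedL2 L m (heatOp α W)) :
    stripInner L ρ (dPsi 2 W) (dPsi 2 W) ≤ 2 / μ ^ 2 * (stripInner L ρ (dS 1 W) (dS 1 W)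
      + stripInner L ρ (heatOp α W) (heatOp α W)) := by
  rw [mul_add]
  refine hρ.stripInner_self_le hW.mem_dPsi_two hW.mem_dS hW.mem_dS hG hG fun s ψ => ?_
  have hsq : μ ^ 2 * (dPsi 2 W s ψ) ^ 2 ≤ (dS 1 W s ψ - heatOp α W s ψ) ^ 2 := by
    calc μ ^ 2 * (dPsi 2 W s ψ) ^ 2 ≤ (α s) ^ 2 * (dPsi 2 W s ψ) ^ 2 := by
          have := hα s
          gcongr
      _ = (dS 1 W s ψ - heatOp α W s ψ) ^ 2 := by rw [heatOp]; ring
  rw [← mul_add, div_mul_eq_mul_div, le_div_iff₀ (by positivity)]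
  nlinarith [sq_nonneg (dS 1 W s ψ + heatOp α W s ψ)]

end SlowWeight

lemma energy_absorption {a b c h γ η X κ K M μ : ℝ} (hμ : 0 < μ) (hM : 0 < M) (hK : 0 ≤ K)
    (ha : 0 ≤ a) (hb : 0 ≤ b) (hh : 0 ≤ h) (hγ : 0 ≤ γ) (hη : 0 ≤ η)
    (hκ0 : 0 ≤ κ) (hκ1 : κ ≤ 1) (hκ : κ * (2 * M * (1 + (2 * K + 2 / μ ^ 2))) ≤ 1)
    (haX : a ≤ 2 * M * X + M / μ * γ) (hX : X ≤ κ / 2 * (a + b))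
    (hbhc : b ≤ (h + c) / 2 + κ / 2 * (h + b)) (hc : c ≤ 2 / μ ^ 2 * (a + γ))
    (hhK : h ≤ K * (a + η)) :
    h + a + b + c ≤ (1 + (3 * K + 2 * (2 / μ ^ 2))) * (2 + 2 * (M / μ)) * (γ + η) := by
  set r := 2 / μ ^ 2
  set t := M / μ
  have hr : 0 < r := by positivity
  have ht : 0 < t := by positivity
  have hb_le : b ≤ (2 * K + r) * (a + γ + η) := by
    have : κ / 2 * (h + b) ≤ 1 / 2 * (h + b) := by gcongr
    nlinarith [mul_nonneg hK hγ, mul_nonneg hr.le hη]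
  have hX_le : 2 * M * X ≤ 1 / 2 * (a + γ + η) := by
    calc 2 * M * X ≤ 2 * M * (κ / 2 * ((1 + (2 * K + r)) * (a + γ + η))) := by
          have : a + b ≤ (1 + (2 * K + r)) * (a + γ + η) := by linarith
          exact mul_le_mul_of_nonneg_left (hX.trans (by gcongr)) (by positivity)
      _ = 1 / 2 * (κ * (2 * M * (1 + (2 * K + r)))) * (a + γ + η) := by ring
      _ ≤ 1 / 2 * 1 * (a + γ + η) := by gcongr
      _ = 1 / 2 * (a + γ + η) := by ring
  have ha_le : a + γ + η ≤ (2 + 2 * t) * (γ + η) := by nlinarith [mul_nonneg ht.le hη]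
  have hsum : h + a + b + c ≤ (1 + (3 * K + 2 * r)) * (a + γ + η) := by
    nlinarith [mul_nonneg hK hγ, mul_nonneg hr.le hη]
  calc h + a + b + c ≤ _ := hsum
    _ ≤ (1 + (3 * K + 2 * r)) * ((2 + 2 * t) * (γ + η)) := by gcongr
    _ = _ := by ring

lemma exists_small_weight_rate (m : ℕ) {B : ℝ} (hB : 0 ≤ B) :
    ∃ δ : ℝ, 0 < δ ∧ δ ≤ 1 ∧ 2 * m * δ ≤ 1 ∧ 2 * m * δ * B ≤ 1 := by
  refine ⟨(1 + 2 * m * (1 + B))⁻¹, by positivity, inv_le_one_of_one_le₀ ?_, ?_, ?_⟩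
  · exact le_add_of_nonneg_right (by positivity)
  · rw [← div_eq_mul_inv, div_le_one (by positivity)]
    nlinarith [(by positivity : (0:ℝ) ≤ 2 * m * B)]
  · rw [mul_right_comm, ← div_eq_mul_inv, div_le_one (by positivity)]
    nlinarith [(by positivity : (0:ℝ) ≤ 2 * m)]

lemma exists_parabolicNormSq_le (m : ℕ) {μ M K : ℝ} (hμ : 0 < μ) (hM : 0 < M) (hK : 0 ≤ K) :
    ∃ C : ℝ, 0 < C ∧ ∀ {L η : ℝ} {α : ℝ → ℝ} {W : ℝ → ℝ → ℝ}, 0 < L → (∀ s, μ ≤ α s) →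
      (∀ s, α s ≤ M) → MemParabolic L m W → PeriodicS L W → (∀ s, W s 0 = 0) →
      MemWeightedL2 L m (heatOp α W) → 0 ≤ η →
      (∀ κ ρ ρ', SlowWeight m κ ρ ρ' →
        stripInner L ρ W W ≤ K * (stripInner L ρ (dS 1 W) (dS 1 W) + η)) →
      parabolicNormSq L m W ≤ C * (L2sq L (wt m (heatOp α W)) + η) := by
  obtain ⟨δ, hδ, hδ1, hκ1, hκ⟩ := exists_small_weight_rate m
    (by positivity : 0 ≤ 2 * M * (1 + (2 * K + 2 / μ ^ 2)))
  refine ⟨(1 + (3 * K + 2 * (2 / μ ^ 2))) * (2 + 2 * (M / μ)) / δ ^ (2 * m), by positivity,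
    fun {L η α W} hL hα hαM hW hp hW0 hG hη hpoinc => ?_⟩
  have hρ := slowWeight_pow m hδ.le hδ1
  have hnonneg := hρ.stripInner_self_nonneg L
  have hsum := energy_absorption hμ hM hK (hnonneg (dS 1 W)) (hnonneg (dPsi 1 W)) (hnonneg W)
    (hnonneg (heatOp α W)) hη (by positivity) hκ1 hκ (hρ.stripInner_dS_self_le hμ hα hαM hW hG)
    (hρ.stripInner_dS_dPsi_two_le hL hW hp hW0) (hρ.stripInner_dPsi_self_le hL hW hW0)
    (hρ.stripInner_dPsi_two_self_le hμ hα hW hG) (hpoinc _ _ _ hρ)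
  rw [div_mul_eq_mul_div, le_div_iff₀ (by positivity), mul_comm]
  calc δ ^ (2 * m) * parabolicNormSq L m W
      = δ ^ (2 * m) * L2sq L (wt m W) + δ ^ (2 * m) * L2sq L (wt m (dS 1 W))
        + δ ^ (2 * m) * L2sq L (wt m (dPsi 1 W)) + δ ^ (2 * m) * L2sq L (wt m (dPsi 2 W)) := by
        rw [parabolicNormSq]; ring
    _ ≤ _ := add_le_add (add_le_add (add_le_add (pow_mul_L2sq_le_stripInner hδ.le hδ1 hW.mem)
        (pow_mul_L2sq_le_stripInner hδ.le hδ1 hW.mem_dS))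
        (pow_mul_L2sq_le_stripInner hδ.le hδ1 hW.mem_dPsi))
        (pow_mul_L2sq_le_stripInner hδ.le hδ1 hW.mem_dPsi_two)
    _ ≤ _ := hsum
    _ ≤ _ := by
        have := hρ.stripInner_self_le_L2sq hG
        gcongr

/-! ### The linear estimate in `X_{k,m}` -/

section LinearEstimate

/-- The part of `XnormSq L k m h` carrying the top weight `⟨ψ⟩^m`. It is comparable to the full
sum, since lower weights are dominated pointwise. -/
noncomputable def topXnormSq (L : ℝ) (k m : ℕ) (h : ℝ → ℝ → ℝ) : ℝ :=
  ∑ k' ∈ Finset.range (k + 1), parabolicNormSq L m (dS k' h)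

/-- Smooth functions on `𝕋_L × ℝ` that belong to `X_{k,m}`. -/
structure MemX (L : ℝ) (k m : ℕ) (h : ℝ → ℝ → ℝ) : Prop where
  periodic : PeriodicS L h
  memParabolic : ∀ k' ≤ k, MemParabolic L m (dS k' h)

/-- The weighted mean `∫₀ᴸ q h ds`, regarded as a function of `(s, ψ)` that is constant in `s`. -/
noncomputable def zeroMode (L : ℝ) (q : ℝ → ℝ) (h : ℝ → ℝ → ℝ) : ℝ → ℝ → ℝ :=
  fun _ ψ => periodIntegral L (fun s ψ => q s * h s ψ) ψ

variable {L M : ℝ} {k m : ℕ} {α q : ℝ → ℝ} {h W : ℝ → ℝ → ℝ}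

lemma MemX.smooth (hW : MemX L k m W) : Smooth2 W := by
  simpa only [dS_zero] using (hW.memParabolic 0 k.zero_le).smooth

lemma MemX.of_le {j : ℕ} (hW : MemX L k m W) (hj : j ≤ k) : MemX L j m W :=
  ⟨hW.periodic, fun k' hk' => hW.memParabolic k' (hk'.trans hj)⟩

lemma parabolicNormSq_le_topXnormSq {j : ℕ} (hj : j ≤ k) :
    parabolicNormSq L m (dS j h) ≤ topXnormSq L k m h :=
  Finset.single_le_sum (fun i _ => parabolicNormSq_nonneg L m (dS i h))
    (Finset.mem_range.2 (Nat.lt_succ_of_le hj))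

lemma L2sq_wt_le_parabolicNormSq (L : ℝ) (m : ℕ) (h : ℝ → ℝ → ℝ) :
    L2sq L (wt m h) ≤ parabolicNormSq L m h := by
  have := L2sq_nonneg L (wt m (dS 1 h))
  have := L2sq_nonneg L (wt m (dPsi 1 h))
  have := L2sq_nonneg L (wt m (dPsi 2 h))
  rw [parabolicNormSq]; linarith

lemma L2sq_wt_dS_le_parabolicNormSq (L : ℝ) (m : ℕ) (h : ℝ → ℝ → ℝ) :
    L2sq L (wt m (dS 1 h)) ≤ parabolicNormSq L m h := by
  have := L2sq_nonneg L (wt m h)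
  have := L2sq_nonneg L (wt m (dPsi 1 h))
  have := L2sq_nonneg L (wt m (dPsi 2 h))
  rw [parabolicNormSq]; linarith

lemma L2sq_wt_dPsi_le_parabolicNormSq (L : ℝ) (m : ℕ) (h : ℝ → ℝ → ℝ) :
    L2sq L (wt m (dPsi 1 h)) ≤ parabolicNormSq L m h := by
  have := L2sq_nonneg L (wt m h)
  have := L2sq_nonneg L (wt m (dS 1 h))
  have := L2sq_nonneg L (wt m (dPsi 2 h))
  rw [parabolicNormSq]; linarith

lemma L2sq_wt_dPsi_two_le_parabolicNormSq (L : ℝ) (m : ℕ) (h : ℝ → ℝ → ℝ) :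
    L2sq L (wt m (dPsi 2 h)) ≤ parabolicNormSq L m h := by
  have := L2sq_nonneg L (wt m h)
  have := L2sq_nonneg L (wt m (dS 1 h))
  have := L2sq_nonneg L (wt m (dPsi 1 h))
  rw [parabolicNormSq]; linarith

lemma dS_left_mul (hα : ContDiff ℝ (⊤ : ℕ∞) α) (hh : Smooth2 h) (k : ℕ) (s ψ : ℝ) :
    dS k (fun s ψ => α s * h s ψ) s ψ
      = ∑ j ∈ Finset.range (k + 1), (k.choose j : ℝ) * iteratedDeriv (k - j) α s * dS j h s ψ := by
  rw [← Finset.sum_range_reflect]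
  refine (iteratedDeriv_fun_mul (hα.contDiffAt.of_le (mod_cast le_top))
    ((hh.contDiff_left ψ).contDiffAt.of_le (mod_cast le_top))).trans
    (Finset.sum_congr rfl fun j hj => ?_)
  have hjk : j ≤ k := Nat.le_of_lt_succ (Finset.mem_range.1 hj)
  rw [Nat.add_sub_cancel, Nat.choose_symm hjk, Nat.sub_sub_self hjk, dS]

lemma heatOp_dS (hα : ContDiff ℝ (⊤ : ℕ∞) α) (hW : Smooth2 W) (k : ℕ) (s ψ : ℝ) :
    heatOp α (dS k W) s ψ = dS k (heatOp α W) s ψ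
      + ∑ j ∈ Finset.range k,
          (k.choose j : ℝ) * iteratedDeriv (k - j) α s * dPsi 2 (dS j W) s ψ := by
  have hsub : dS k (heatOp α W) s ψ
      = dS k (dS 1 W) s ψ - dS k (fun s ψ => α s * dPsi 2 W s ψ) s ψ :=
    congrFun₂ (dS_sub (hW.dS 1) ((smooth2_of_left hα).mul (hW.dPsi 2)) k) s ψ
  rw [hsub, dS_left_mul hα (hW.dPsi 2), Finset.sum_range_succ, dS_dS_one, dS_succ, heatOp]
  simp only [dS_dPsi hW, Nat.choose_self, Nat.cast_one, Nat.sub_self, iteratedDeriv_zero]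
  ring

lemma L2sq_wt_heatOp_dS_le (hα : ContDiff ℝ (⊤ : ℕ∞) α)
    (hαM : ∀ i ≤ k, ∀ s, |iteratedDeriv i α s| ≤ M) (hW : MemX L k m W)
    (hG : MemWeightedL2 L m (dS k (heatOp α W))) :
    MemWeightedL2 L m (heatOp α (dS k W)) ∧ L2sq L (wt m (heatOp α (dS k W)))
      ≤ (k + 1) * (L2sq L (wt m (dS k (heatOp α W)))
        + (2 ^ k * M) ^ 2 * ∑ j ∈ Finset.range k, L2sq L (wt m (dPsi 2 (dS j W)))) := by
  let c : Option (Fin k) → ℝ := fun i => i.elim (k + 1) fun _ => (k + 1) * (2 ^ k * M) ^ 2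
  let w : Option (Fin k) → ℝ → ℝ → ℝ :=
    fun i => i.elim (dS k (heatOp α W)) fun j => dPsi 2 (dS j W)
  have hcont : Continuous fun p : ℝ × ℝ => heatOp α (dS k W) p.1 p.2 := by
    have hd := ((hW.smooth.dS k).dS 1).continuous
    have hd2 := ((hW.smooth.dS k).dPsi 2).continuous
    have := hα.continuous
    exact hd.sub ((this.comp continuous_fst).mul hd2)
  have hw : ∀ i, FiniteL2 L (wt m (w i)) := by
    rintro (_ | j)
    · exact hG.finite
    · exact (hW.memParabolic j j.2.le).finite_dPsi_two
  have hle : ∀ s ∈ Ioc 0 L, ∀ ψ > 0, (heatOp α (dS k W) s ψ) ^ 2 ≤ ∑ i, c i * (w i s ψ) ^ 2 := by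
    intro s _ ψ _
    let y : Option (Fin k) → ℝ := fun i => i.elim (dS k (heatOp α W) s ψ)
      fun j => (k.choose j : ℝ) * iteratedDeriv (k - j) α s * dPsi 2 (dS j W) s ψ
    have hsum : heatOp α (dS k W) s ψ = ∑ i, y i := by
      rw [heatOp_dS hα hW.smooth, Fintype.sum_option, Finset.sum_range]
      rfl
    have hy : ∀ i, (k + 1) * y i ^ 2 ≤ c i * (w i s ψ) ^ 2 := by
      rintro (_ | j)
      · exact le_rfl
      · have hchoose : (k.choose j : ℝ) ≤ 2 ^ k := mod_cast Nat.choose_le_two_pow k j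
        have hcoef : |(k.choose j : ℝ) * iteratedDeriv (k - j) α s| ≤ 2 ^ k * M := by
          rw [abs_mul, Nat.abs_cast]
          exact mul_le_mul hchoose (hαM _ (Nat.sub_le _ _) s) (abs_nonneg _) (by positivity)
        have := sq_le_sq' (abs_le.1 hcoef).1 (abs_le.1 hcoef).2
        simp only [y, c, w, Option.elim, mul_pow _ (dPsi 2 (dS j W) s ψ), mul_assoc (k + 1 : ℝ)]
        gcongr
    have hcard : ((Finset.univ : Finset (Option (Fin k))).card : ℝ) = k + 1 := by simp
    calc _ = (∑ i, y i) ^ 2 := by rw [hsum]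
      _ ≤ (k + 1) * ∑ i, y i ^ 2 := hcard ▸ sq_sum_le_card_mul_sum_sq
      _ ≤ _ := by rw [Finset.mul_sum]; exact Finset.sum_le_sum fun i _ => hy i
  refine ⟨.of_sq_le_sum hcont hw hle, (L2sq_wt_le_sum hcont hw hle).trans (le_of_eq ?_)⟩
  rw [Fintype.sum_option, Finset.sum_range, mul_add, ← mul_assoc, Finset.mul_sum]
  rfl

lemma le_of_abs_iteratedDeriv_le (hαM : ∀ i ≤ k, ∀ s, |iteratedDeriv i α s| ≤ M) (s : ℝ) :
    α s ≤ M := by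
  simpa only [iteratedDeriv_zero] using (le_abs_self _).trans (hαM 0 k.zero_le s)

/-- `∂_s^{k+1} W` is itself part of the norm of order `k`, which replaces the Poincaré
inequality. -/
lemma exists_parabolicNormSq_dS_succ_le (k m : ℕ) {μ : ℝ} (hμ : 0 < μ) (hM : 0 < M) :
    ∃ C : ℝ, 0 < C ∧ ∀ {L : ℝ} {α : ℝ → ℝ} {W : ℝ → ℝ → ℝ}, 0 < L →
      ContDiff ℝ (⊤ : ℕ∞) α → (∀ s, μ ≤ α s) → (∀ i ≤ k + 1, ∀ s, |iteratedDeriv i α s| ≤ M) →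
      MemX L (k + 1) m W → (∀ s, W s 0 = 0) → MemWeightedL2 L m (dS (k + 1) (heatOp α W)) →
      parabolicNormSq L m (dS (k + 1) W)
        ≤ C * (L2sq L (wt m (dS (k + 1) (heatOp α W))) + topXnormSq L k m W) := by
  obtain ⟨C, hC, hle⟩ := exists_parabolicNormSq_le m hμ hM zero_le_one
  refine ⟨C * ((k + 2) * (1 + (2 ^ (k + 1) * M) ^ 2) + 1), by positivity,
    fun {L α W} hL hα hαμ hαM hW hW0 hG => ?_⟩
  have hWk := hW.memParabolic (k + 1) le_rfl
  obtain ⟨hmem, hcomm⟩ := L2sq_wt_heatOp_dS_le hα hαM hW hG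
  have hlow : L2sq L (wt m (dS (k + 1) W)) ≤ topXnormSq L k m W := by
    rw [dS_succ]
    exact (L2sq_wt_dS_le_parabolicNormSq _ _ _).trans (parabolicNormSq_le_topXnormSq le_rfl)
  have hcross : ∑ j ∈ Finset.range (k + 1), L2sq L (wt m (dPsi 2 (dS j W)))
      ≤ topXnormSq L k m W :=
    Finset.sum_le_sum fun j _ => L2sq_wt_dPsi_two_le_parabolicNormSq L m (dS j W)
  have htop := hle hL hαμ (le_of_abs_iteratedDeriv_le hαM) hWk (hW.periodic.dS _)
    (dS_apply_zero hW0 _) hmem (L2sq_nonneg L (wt m (dS (k + 1) W))) fun κ ρ ρ' hρ => by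
      have := hρ.stripInner_self_nonneg L (dS 1 (dS (k + 1) W))
      linarith [hρ.stripInner_self_le_L2sq hWk.mem]
  have hg := L2sq_nonneg L (wt m (dS (k + 1) (heatOp α W)))
  have hX := (L2sq_nonneg _ _).trans hlow
  push_cast at hcomm
  calc parabolicNormSq L m (dS (k + 1) W)
      ≤ C * ((k + 1 + 1) * ((L2sq L (wt m (dS (k + 1) (heatOp α W))) + topXnormSq L k m W)
        + (2 ^ (k + 1) * M) ^ 2 * (L2sq L (wt m (dS (k + 1) (heatOp α W))) + topXnormSq L k m W))
        + (L2sq L (wt m (dS (k + 1) (heatOp α W))) + topXnormSq L k m W)) := by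
        refine htop.trans (mul_le_mul_of_nonneg_left (add_le_add (hcomm.trans ?_) ?_) hC.le)
        · gcongr <;> linarith
        · linarith
    _ = _ := by ring

lemma exists_topXnormSq_le (k m : ℕ) {μ K : ℝ} (hμ : 0 < μ) (hM : 0 < M) (hK : 0 ≤ K) :
    ∃ C : ℝ, 0 < C ∧ ∀ {L η : ℝ} {α : ℝ → ℝ} {W : ℝ → ℝ → ℝ}, 0 < L →
      ContDiff ℝ (⊤ : ℕ∞) α → (∀ s, μ ≤ α s) → (∀ i ≤ k, ∀ s, |iteratedDeriv i α s| ≤ M) →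
      MemX L k m W → (∀ s, W s 0 = 0) → (∀ j ≤ k, MemWeightedL2 L m (dS j (heatOp α W))) →
      0 ≤ η → (∀ κ ρ ρ', SlowWeight m κ ρ ρ' →
        stripInner L ρ W W ≤ K * (stripInner L ρ (dS 1 W) (dS 1 W) + η)) →
      topXnormSq L k m W
        ≤ C * (∑ j ∈ Finset.range (k + 1), L2sq L (wt m (dS j (heatOp α W))) + η) := by
  induction k with
  | zero =>
    obtain ⟨C, hC, hle⟩ := exists_parabolicNormSq_le m hμ hM hK
    refine ⟨C, hC, fun hL _ hαμ hαM hW hW0 hG hη hpoinc => ?_⟩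
    have hW' := hW.memParabolic 0 le_rfl
    have hG' := hG 0 le_rfl
    rw [dS_zero] at hW' hG'
    simpa only [topXnormSq, zero_add, Finset.sum_range_one, dS_zero] using
      hle hL hαμ (le_of_abs_iteratedDeriv_le hαM) hW' hW.periodic hW0 hG' hη hpoinc
  | succ k ih =>
    obtain ⟨C, hC, hle⟩ := ih
    obtain ⟨C', hC', hle'⟩ := exists_parabolicNormSq_dS_succ_le k m hμ hM
    refine ⟨C + C' * (1 + C), by positivity,
      fun {L η α W} hL hα hαμ hαM hW hW0 hG hη hpoinc => ?_⟩
    have hlow := hle hL hα hαμ (fun i hi => hαM i (hi.trans k.le_succ)) (hW.of_le k.le_succ) hW0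
      (fun j hj => hG j (hj.trans k.le_succ)) hη hpoinc
    have htop := hle' hL hα hαμ hαM hW hW0 (hG _ le_rfl)
    rw [topXnormSq, Finset.sum_range_succ, ← topXnormSq, Finset.sum_range_succ]
    set G := ∑ j ∈ Finset.range (k + 1), L2sq L (wt m (dS j (heatOp α W)))
    set g := L2sq L (wt m (dS (k + 1) (heatOp α W)))
    have hg : 0 ≤ g := L2sq_nonneg _ _
    have hG0 : 0 ≤ G := Finset.sum_nonneg fun _ _ => L2sq_nonneg _ _
    have hlow' : topXnormSq L k m W ≤ C * (G + g + η) :=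
      hlow.trans (mul_le_mul_of_nonneg_left (by linarith) hC.le)
    calc topXnormSq L k m W + parabolicNormSq L m (dS (k + 1) W)
        ≤ C * (G + g + η) + C' * ((G + g + η) + C * (G + g + η)) :=
          add_le_add hlow' (htop.trans (by gcongr; linarith))
      _ = _ := by ring

lemma SlowWeight.stripInner_self_le_zeroMode {κ : ℝ} {ρ ρ' : ℝ → ℝ} (hρ : SlowWeight m κ ρ ρ')
    (hL : 0 < L) (hq : Continuous q) (hqpos : ∀ s, 0 < q s) (hW : MemParabolic L m W)
    (hZ : MemWeightedL2 L m (zeroMode L q W)) :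
    stripInner L ρ W W ≤ 2 / (∫ s in (0:ℝ)..L, q s) ^ 2
        * stripInner L ρ (zeroMode L q W) (zeroMode L q W)
      + 2 * L ^ 2 * stripInner L ρ (dS 1 W) (dS 1 W) := by
  have hfubini : ∀ {u : ℝ → ℝ → ℝ}, MemWeightedL2 L m u →
      stripInner L ρ u u = ∫ ψ in Ioi (0:ℝ), ρ ψ * ∫ s in (0:ℝ)..L, (u s ψ) ^ 2 ∧
      IntegrableOn (fun ψ => ρ ψ * ∫ s in (0:ℝ)..L, (u s ψ) ^ 2) (Ioi 0) := fun {u} hu => by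
    have hslice : (fun ψ => ρ ψ * ∫ s in (0:ℝ)..L, (u s ψ) ^ 2)
        = periodIntegral L fun s ψ => ρ ψ * (u s ψ * u s ψ) := funext fun ψ => by
      rw [periodIntegral_weight_mul]; simp only [periodIntegral, sq]
    have hint := hρ.integrableOn hu hu
    rw [hslice]
    exact ⟨setIntegral_strip hL (Φ := fun s ψ => ρ ψ * (u s ψ * u s ψ)) hint,
      integrableOn_periodIntegral hL (Φ := fun s ψ => ρ ψ * (u s ψ * u s ψ)) hint⟩
  obtain ⟨hWW, hWi⟩ := hfubini hW.mem
  obtain ⟨hSS, hSi⟩ := hfubini hW.mem_dS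
  obtain ⟨hZZ, hZi⟩ := hfubini hZ
  rw [hWW, hSS, hZZ, ← integral_const_mul, ← integral_const_mul,
    ← integral_add (hZi.const_mul _) (hSi.const_mul _)]
  refine setIntegral_mono_on hWi ((hZi.const_mul _).add (hSi.const_mul _)) measurableSet_Ioi
    fun ψ hψ => ?_
  have hpoinc := integral_sq_le_weighted_poincare hL hq hqpos
    (fun s => hW.smooth.hasDerivAt_left s ψ) (hW.mem_dS.continuous.comp (.prodMk_left ψ))
  simp only [zeroMode, periodIntegral, intervalIntegral.integral_const, sub_zero, smul_eq_mul]
  calc _ ≤ _ := mul_le_mul_of_nonneg_left hpoinc (hρ.nonneg ψ (le_of_lt hψ))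
    _ = _ := by ring

lemma exists_abs_iteratedDeriv_le (hL : L ≠ 0) (hq : ContDiff ℝ (⊤ : ℕ∞) q) (hper : Periodic q L)
    (k : ℕ) : ∃ M : ℝ, 1 ≤ M ∧ ∀ i ≤ k, ∀ s, |iteratedDeriv i q s| ≤ M := by
  have hbdd : ∀ i, ∃ M, ∀ s, |iteratedDeriv i q s| ≤ M := fun i => by
    have hperi : Periodic (iteratedDeriv i q) L :=
      PeriodicS.dS (h := fun s _ => q s) (fun _ => hper) i 0
    obtain ⟨M, hM⟩ := (hperi.isBounded_of_continuous hL
      (hq.continuous_iteratedDeriv i (mod_cast le_top))).exists_norm_le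
    exact ⟨M, fun s => hM _ (mem_range_self s)⟩
  choose M hM using hbdd
  refine ⟨1 + ∑ i ∈ Finset.range (k + 1), |M i|, by
    linarith [Finset.sum_nonneg fun i (_ : i ∈ Finset.range (k + 1)) => abs_nonneg (M i)],
    fun i hi s => ?_⟩
  have := Finset.single_le_sum (fun j _ => abs_nonneg (M j))
    (Finset.mem_range.2 (Nat.lt_succ_of_le hi))
  linarith [hM i s, le_abs_self (M i)]

lemma exists_pos_le_of_periodic (hL : L ≠ 0) (hq : Continuous q) (hper : Periodic q L)
    (hqpos : ∀ s, 0 < q s) : ∃ μ : ℝ, 0 < μ ∧ ∀ s, μ ≤ q s := by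
  obtain ⟨_, ⟨s₀, rfl⟩, hmin⟩ := (hper.compact_of_continuous hL hq).exists_isLeast
    (range_nonempty q)
  exact ⟨q s₀, hqpos s₀, fun s => hmin (mem_range_self s)⟩

lemma exists_topXnormSq_le_zeroMode (k m : ℕ) (hL : 0 < L) (hq : ContDiff ℝ (⊤ : ℕ∞) q)
    (hper : Periodic q L) (hqpos : ∀ s, 0 < q s) :
    ∃ C : ℝ, 0 < C ∧ ∀ {ω : ℝ} {W : ℝ → ℝ → ℝ}, 1 / 2 ≤ ω → ω ≤ 2 → MemX L k m W →
      (∀ s, W s 0 = 0) → (∀ j ≤ k, MemWeightedL2 L m (dS j (heatOp (fun s => ω * q s) W))) →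
      MemWeightedL2 L m (zeroMode L q W) →
      topXnormSq L k m W ≤ C * (∑ j ∈ Finset.range (k + 1),
          L2sq L (wt m (dS j (heatOp (fun s => ω * q s) W))) + L2sq L (wt m (zeroMode L q W))) := by
  obtain ⟨μ, hμ, hqμ⟩ := exists_pos_le_of_periodic hL.ne' hq.continuous hper hqpos
  obtain ⟨M, hM, hqM⟩ := exists_abs_iteratedDeriv_le hL.ne' hq hper k
  set t := 2 / (∫ s in (0:ℝ)..L, q s) ^ 2
  have ht : 0 ≤ t := by positivity
  obtain ⟨C, hC, hle⟩ := exists_topXnormSq_le k m (μ := μ / 2) (M := 2 * M) (K := t + 2 * L ^ 2)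
    (by positivity) (by linarith) (by positivity)
  refine ⟨C, hC, fun {ω W} hω hω2 hW hW0 hG hZ => hle hL (contDiff_const.mul hq) (fun s => ?_)
    (fun i hi s => ?_) hW hW0 hG (L2sq_nonneg _ _) fun κ ρ ρ' hρ => ?_⟩
  · have := hqμ s
    nlinarith [hqpos s]
  · rw [iteratedDeriv_const_mul_field, abs_mul, abs_of_nonneg (by linarith)]
    exact mul_le_mul hω2 (hqM i hi s) (abs_nonneg _) two_pos.le
  · have hW' : MemParabolic L m W := by simpa only [dS_zero] using hW.memParabolic 0 k.zero_le
    have hpoinc := hρ.stripInner_self_le_zeroMode hL hq.continuous hqpos hW' hZ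
    have hZle := mul_le_mul_of_nonneg_left (hρ.stripInner_self_le_L2sq hZ) ht
    have := mul_nonneg ht (hρ.stripInner_self_nonneg L (dS 1 W))
    have := mul_nonneg (by positivity : 0 ≤ 2 * L ^ 2) (L2sq_nonneg L (wt m (zeroMode L q W)))
    linarith

end LinearEstimate

/-! ### The norms of `X_{k,m}` -/

section Norms

variable {L N : ℝ} {k m : ℕ} {h u v : ℝ → ℝ → ℝ}

lemma L2sq_wt_mono {m' : ℕ} (hm : m' ≤ m) (hh : FiniteL2 L (wt m h)) :
    L2sq L (wt m' h) ≤ L2sq L (wt m h) := by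
  refine integral_mono_of_nonneg (Eventually.of_forall fun _ => sq_nonneg _) hh
    ((ae_restrict_iff' (measurableSet_strip L)).2 (Eventually.of_forall fun p hp => ?_))
  have hψ : (1:ℝ) ≤ 1 + p.2 := by have : (0:ℝ) < p.2 := hp.2; linarith
  simp only [wt_sq]
  gcongr

lemma topXnormSq_nonneg (L : ℝ) (k m : ℕ) (h : ℝ → ℝ → ℝ) : 0 ≤ topXnormSq L k m h :=
  Finset.sum_nonneg fun _ _ => parabolicNormSq_nonneg _ _ _

lemma XnormSq_eq_sum (L : ℝ) (k m : ℕ) (h : ℝ → ℝ → ℝ) :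
    XnormSq L k m h
      = ∑ k' ∈ Finset.range (k + 1), ∑ m' ∈ Finset.range (m + 1),
        parabolicNormSq L m' (dS k' h) := by
  simp only [XnormSq, parabolicNormSq, ← dS_succ]

lemma XnormSq_nonneg (L : ℝ) (k m : ℕ) (h : ℝ → ℝ → ℝ) : 0 ≤ XnormSq L k m h := by
  rw [XnormSq_eq_sum]
  exact Finset.sum_nonneg fun _ _ => Finset.sum_nonneg fun _ _ => parabolicNormSq_nonneg _ _ _

lemma topXnormSq_le_Xnorm_sq (L : ℝ) (k m : ℕ) (h : ℝ → ℝ → ℝ) :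
    topXnormSq L k m h ≤ Xnorm L k m h ^ 2 := by
  rw [Xnorm, Real.sq_sqrt (XnormSq_nonneg L k m h), XnormSq_eq_sum, topXnormSq]
  exact Finset.sum_le_sum fun k' _ => Finset.single_le_sum
    (f := fun m' => parabolicNormSq L m' (dS k' h))
    (fun m' _ => parabolicNormSq_nonneg L m' _) (Finset.self_mem_range_succ m)

lemma MemX.XnormSq_le (hh : MemX L k m h) :
    XnormSq L k m h ≤ (m + 1) * topXnormSq L k m h := by
  rw [XnormSq_eq_sum, topXnormSq, Finset.mul_sum]
  refine Finset.sum_le_sum fun k' hk' => ?_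
  have hmem := hh.memParabolic k' (Nat.le_of_lt_succ (Finset.mem_range.1 hk'))
  have hterm : ∀ m' ∈ Finset.range (m + 1),
      parabolicNormSq L m' (dS k' h) ≤ parabolicNormSq L m (dS k' h) := fun m' hm' => by
    have hm := Nat.le_of_lt_succ (Finset.mem_range.1 hm')
    exact add_le_add (add_le_add (add_le_add (L2sq_wt_mono hm hmem.finite)
      (L2sq_wt_mono hm hmem.finite_dS)) (L2sq_wt_mono hm hmem.finite_dPsi))
      (L2sq_wt_mono hm hmem.finite_dPsi_two)
  simpa using Finset.sum_le_card_nsmul _ _ _ hterm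

lemma MemX.of_xFinite (hh : Smooth2 h) (hp : PeriodicS L h) (hfin : XFinite L k m h) :
    MemX L k m h :=
  ⟨hp, fun k' hk' =>
    have ⟨h0, hs, hψ, hψψ⟩ := hfin k' hk' m le_rfl
    ⟨hh.dS k', h0, by rwa [← dS_succ], hψ, hψψ⟩⟩

lemma MemWeightedL2.sub (hu : MemWeightedL2 L m u) (hv : MemWeightedL2 L m v) :
    MemWeightedL2 L m (fun s ψ => u s ψ - v s ψ) :=
  .of_sq_le_sum (c := fun _ : Fin 2 => 2) (w := ![u, v]) (hu.continuous.sub hv.continuous)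
    (by simp [Fin.forall_fin_two, hu.finite, hv.finite]) fun s _ ψ _ => by
    simp only [Fin.sum_univ_two, Matrix.cons_val_zero, Matrix.cons_val_one]
    nlinarith [sq_nonneg (u s ψ + v s ψ)]

lemma MemWeightedL2.L2sq_le_two_mul_sub (hu : MemWeightedL2 L m u) (hv : MemWeightedL2 L m v) :
    L2sq L (wt m u) ≤ 2 * L2sq L (wt m (fun s ψ => u s ψ - v s ψ)) + 2 * L2sq L (wt m v) := by
  have := L2sq_wt_le_sum (L := L) (m := m) (c := fun _ : Fin 2 => 2)
    (w := ![fun s ψ => u s ψ - v s ψ, v]) hu.continuous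
    (by simp [Fin.forall_fin_two, (hu.sub hv).finite, hv.finite]) fun s _ ψ _ => by
    simp only [Fin.sum_univ_two, Matrix.cons_val_zero, Matrix.cons_val_one]
    nlinarith [sq_nonneg (u s ψ - 2 * v s ψ)]
  simpa only [Fin.sum_univ_two, Matrix.cons_val_zero, Matrix.cons_val_one] using this

lemma MemParabolic.sub (hu : MemParabolic L m u) (hv : MemParabolic L m v) :
    MemParabolic L m (fun s ψ => u s ψ - v s ψ) where
  smooth := hu.smooth.sub hv.smooth
  finite := (hu.mem.sub hv.mem).finite
  finite_dS := by rw [dS_sub hu.smooth hv.smooth]; exact (hu.mem_dS.sub hv.mem_dS).finite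
  finite_dPsi := by
    rw [dPsi_sub hu.smooth hv.smooth]; exact (hu.mem_dPsi.sub hv.mem_dPsi).finite
  finite_dPsi_two := by
    rw [dPsi_sub hu.smooth hv.smooth]; exact (hu.mem_dPsi_two.sub hv.mem_dPsi_two).finite

lemma MemParabolic.parabolicNormSq_le_two_mul_sub (hu : MemParabolic L m u)
    (hv : MemParabolic L m v) :
    parabolicNormSq L m u
      ≤ 2 * parabolicNormSq L m (fun s ψ => u s ψ - v s ψ) + 2 * parabolicNormSq L m v := by
  simp only [parabolicNormSq, dS_sub hu.smooth hv.smooth, dPsi_sub hu.smooth hv.smooth]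
  linarith [hu.mem.L2sq_le_two_mul_sub hv.mem, hu.mem_dS.L2sq_le_two_mul_sub hv.mem_dS,
    hu.mem_dPsi.L2sq_le_two_mul_sub hv.mem_dPsi,
    hu.mem_dPsi_two.L2sq_le_two_mul_sub hv.mem_dPsi_two]

lemma MemX.sub (hu : MemX L k m u) (hv : MemX L k m v) :
    MemX L k m (fun s ψ => u s ψ - v s ψ) :=
  ⟨hu.periodic.sub hv.periodic, fun k' hk' => by
    rw [dS_sub hu.smooth hv.smooth]
    exact (hu.memParabolic k' hk').sub (hv.memParabolic k' hk')⟩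

lemma MemX.topXnormSq_le_two_mul_sub (hu : MemX L k m u) (hv : MemX L k m v) :
    topXnormSq L k m u
      ≤ 2 * topXnormSq L k m (fun s ψ => u s ψ - v s ψ) + 2 * topXnormSq L k m v := by
  simp only [topXnormSq, Finset.mul_sum, ← Finset.sum_add_distrib, dS_sub hu.smooth hv.smooth]
  refine Finset.sum_le_sum fun k' hk' => ?_
  have hk := Nat.le_of_lt_succ (Finset.mem_range.1 hk')
  exact (hu.memParabolic k' hk).parabolicNormSq_le_two_mul_sub (hv.memParabolic k' hk)

/-- The constant of the embedding of `X_{1,m}` into the functions `O(⟨ψ⟩^{-m})`. -/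
noncomputable def sobolevConst (L : ℝ) (m : ℕ) : ℝ :=
  Real.sqrt ((2 * m + 1) * (2 / L + 2 * L) * 2)

lemma MemX.pow_mul_abs_dS_le (hL : 0 < L) (hh : MemX L k m h) {j : ℕ} (hj : j < k)
    (hN : 0 ≤ N) (hle : topXnormSq L k m h ≤ N ^ 2) (s : ℝ) {ψ : ℝ} (hψ : 0 ≤ ψ) :
    (1 + ψ) ^ m * |dS j h s ψ| ≤ sobolevConst L m * N := by
  obtain ⟨t, ht, hst⟩ := (hh.periodic.dS j ψ).exists_mem_Ico₀ hL s
  have hst : dS j h s ψ = dS j h t ψ := hst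
  have hmem := hh.memParabolic j hj.le
  have hmem' := hh.memParabolic (j + 1) hj
  rw [dS_succ] at hmem'
  have hsob := sq_wt_le_sobolev hL hmem.smooth hmem.finite hmem.finite_dPsi hmem.finite_dS
    hmem'.finite_dPsi ⟨ht.1, ht.2.le⟩ hψ
  have hj0 := (parabolicNormSq_le_topXnormSq (h := h) (L := L) (m := m) hj.le).trans hle
  have hj1 := (L2sq_wt_dPsi_le_parabolicNormSq L m (dS (j + 1) h)).trans
    ((parabolicNormSq_le_topXnormSq hj).trans hle)
  rw [dS_succ] at hj1
  have := L2sq_nonneg L (wt m (dPsi 2 (dS j h)))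
  rw [hst]
  refine abs_le_of_sq_le_sq' ?_ (by unfold sobolevConst; positivity) |>.2
  calc ((1 + ψ) ^ m * |dS j h t ψ|) ^ 2 = (wt m (dS j h) t ψ) ^ 2 := by
        rw [wt, mul_pow, mul_pow, sq_abs]
    _ ≤ (2 * m + 1) * (2 / L + 2 * L) * (N ^ 2 + N ^ 2) := by
        refine hsob.trans (mul_le_mul_of_nonneg_left ?_ (by positivity))
        rw [parabolicNormSq] at hj0
        linarith
    _ = (sobolevConst L m * N) ^ 2 := by
        rw [sobolevConst, mul_pow, Real.sq_sqrt (by positivity)]; ring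

end Norms

section Decay

variable {L K : ℝ} {m : ℕ}

lemma integrableOn_strip_inv_one_add_sq (L : ℝ) :
    IntegrableOn (fun p : ℝ × ℝ => (1 + p.2 ^ 2)⁻¹) (strip L) := by
  rw [integrableOn_strip_iff (fun _ ψ => (1 + ψ ^ 2)⁻¹)]
  exact integrable_inv_one_add_sq.integrableOn.integrable.comp_snd _

lemma setIntegral_strip_inv_one_add_sq (hL : 0 < L) :
    ∫ p in strip L, (1 + p.2 ^ 2)⁻¹ = L * (Real.pi / 2) := by
  rw [setIntegral_strip (Φ := fun _ ψ => (1 + ψ ^ 2)⁻¹) hL (integrableOn_strip_inv_one_add_sq L)]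
  simp [periodIntegral, integral_const_mul, integral_Ioi_inv_one_add_sq]

lemma sq_wt_le_of_pow_mul_abs_le {h : ℝ → ℝ → ℝ} {s ψ : ℝ} (hψ : 0 ≤ ψ)
    (hle : (1 + ψ) ^ (m + 1) * |h s ψ| ≤ K) :
    (wt m h s ψ) ^ 2 ≤ K ^ 2 * (1 + ψ ^ 2)⁻¹ := by
  rw [← div_eq_mul_inv, le_div_iff₀ (by positivity)]
  calc (wt m h s ψ) ^ 2 * (1 + ψ ^ 2) ≤ (wt m h s ψ) ^ 2 * (1 + ψ) ^ 2 := by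
        gcongr; nlinarith
    _ = ((1 + ψ) ^ (m + 1) * |h s ψ|) ^ 2 := by rw [wt, mul_pow, mul_pow, sq_abs]; ring
    _ ≤ K ^ 2 := by gcongr

variable {h : ℝ → ℝ → ℝ} (hh : Continuous fun p : ℝ × ℝ => h p.1 p.2)
  (hle : ∀ s, ∀ ψ > 0, (1 + ψ) ^ (m + 1) * |h s ψ| ≤ K)
include hh hle

lemma MemWeightedL2.of_pow_mul_abs_le (L : ℝ) : MemWeightedL2 L m h :=
  ⟨hh, integrableOn_strip_of_abs_le (by unfold wt; fun_prop)
    ((integrableOn_strip_inv_one_add_sq L).const_mul (K ^ 2)) fun p hp => by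
      rw [abs_of_nonneg (sq_nonneg _)]
      exact sq_wt_le_of_pow_mul_abs_le (le_of_lt hp.2) (hle p.1 p.2 hp.2)⟩

lemma L2sq_wt_le_of_pow_mul_abs_le (hL : 0 < L) : L2sq L (wt m h) ≤ 2 * L * K ^ 2 := by
  calc L2sq L (wt m h) ≤ ∫ p in strip L, K ^ 2 * (1 + p.2 ^ 2)⁻¹ :=
        setIntegral_mono_on (MemWeightedL2.of_pow_mul_abs_le hh hle L).finite
          ((integrableOn_strip_inv_one_add_sq L).const_mul _) (measurableSet_strip L)
          fun p hp => sq_wt_le_of_pow_mul_abs_le (le_of_lt hp.2) (hle p.1 p.2 hp.2)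
    _ = L * K ^ 2 / 2 * Real.pi := by
        rw [integral_const_mul, setIntegral_strip_inv_one_add_sq hL]; ring
    _ ≤ L * K ^ 2 / 2 * 4 := by gcongr; exact Real.pi_le_four
    _ = 2 * L * K ^ 2 := by ring

end Decay

section DecayingODE

variable {φ φ' φ'' : ℝ → ℝ}

lemma nonneg_of_convexOn_of_tendsto_zero (hconv : ConvexOn ℝ (Ici 0) φ)
    (hlim : Tendsto φ atTop (nhds 0)) {x : ℝ} (hx : 0 ≤ x) : 0 ≤ φ x := by
  have hmid : ∀ z ≥ (0:ℝ), φ (1 / 2 * x + 1 / 2 * z) ≤ 1 / 2 * φ x + 1 / 2 * φ z := fun z hz =>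
    hconv.2 (mem_Ici.2 hx) (mem_Ici.2 hz) (by norm_num) (by norm_num) (by norm_num)
  have hright : Tendsto (fun z => 1 / 2 * φ x + 1 / 2 * φ z) atTop
      (nhds (1 / 2 * φ x + 1 / 2 * 0)) := (hlim.const_mul _).const_add _
  have hleft : Tendsto (fun z : ℝ => φ (1 / 2 * x + 1 / 2 * z)) atTop (nhds 0) :=
    hlim.comp (tendsto_atTop_add_const_left _ _ (tendsto_id.const_mul_atTop (by norm_num)))
  have := le_of_tendsto_of_tendsto hleft hright ((eventually_ge_atTop 0).mono hmid)
  linarith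

lemma hasDerivAt_one_add_zpow (n : ℤ) {x : ℝ} (hx : 0 < 1 + x) :
    HasDerivAt (fun y : ℝ => (1 + y) ^ n) (n * (1 + x) ^ (n - 1)) x := by
  simpa only [mul_one] using! (hasDerivAt_zpow n (1 + x) (Or.inl hx.ne')).comp x
    ((hasDerivAt_id x).const_add 1)

lemma neg_le_of_second_deriv_ge {v v' v'' : ℝ → ℝ} {K : ℝ} {n : ℤ} (hn : n < 0)
    (hv : ∀ x, HasDerivAt v (v' x) x) (hv' : ∀ x, HasDerivAt v' (v'' x) x)
    (hge : ∀ x > 0, -(K * (n * (n - 1) * (1 + x) ^ (n - 2))) ≤ v'' x)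
    (hlim : Tendsto v atTop (nhds 0)) {x : ℝ} (hx : 0 ≤ x) : -(K * (1 + x) ^ n) ≤ v x := by
  have hpow : ∀ (n : ℤ), ∀ x ≥ (0:ℝ), HasDerivAt (fun y : ℝ => (1 + y) ^ n)
      (n * (1 + x) ^ (n - 1)) x := fun n x hx => hasDerivAt_one_add_zpow n (by linarith)
  have hconv : ConvexOn ℝ (Ici 0) fun x => K * (1 + x) ^ n + v x := by
    refine convexOn_of_hasDerivWithinAt2_nonneg (convex_Ici 0)
      (f' := fun x => K * (n * (1 + x) ^ (n - 1)) + v' x)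
      (f'' := fun x => K * (n * ((n - 1 : ℤ) * (1 + x) ^ (n - 1 - 1))) + v'' x)
      (fun x hx => (((hpow n x hx).const_mul K).add (hv x)).continuousAt.continuousWithinAt)
      ?_ ?_ ?_ <;> rw [interior_Ici]
    · exact fun x hx => (((hpow n x (le_of_lt hx)).const_mul K).add (hv x)).hasDerivWithinAt
    · exact fun x hx => ((((hpow (n - 1) x (le_of_lt hx)).const_mul (n : ℝ)).const_mul K).add
        (hv' x)).hasDerivWithinAt
    · intro x hx
      have := hge x hx
      rw [show n - 1 - 1 = n - 2 by ring]
      push_cast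
      linarith
  have hlim' : Tendsto (fun x => K * (1 + x) ^ n + v x) atTop (nhds 0) := by
    have := ((tendsto_zpow_atTop_zero (𝕜 := ℝ) hn).comp
      (tendsto_atTop_add_const_left atTop (1:ℝ) tendsto_id)).const_mul K
    simpa using this.add hlim
  linarith [nonneg_of_convexOn_of_tendsto_zero hconv hlim' hx]

lemma abs_le_of_abs_second_deriv_le {v v' v'' : ℝ → ℝ} {K : ℝ} {n : ℤ} (hn : n < 0) (hK : 0 ≤ K)
    (hv : ∀ x, HasDerivAt v (v' x) x) (hv' : ∀ x, HasDerivAt v' (v'' x) x)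
    (hle : ∀ x > 0, |v'' x| ≤ K * (1 + x) ^ (n - 2)) (hlim : Tendsto v atTop (nhds 0))
    {x : ℝ} (hx : 0 ≤ x) : |v x| ≤ K * (1 + x) ^ n := by
  have hn1 : (n : ℝ) ≤ -1 := by exact_mod_cast Int.le_sub_one_of_lt hn
  have hbound : ∀ x > 0, |v'' x| ≤ K * (n * (n - 1) * (1 + x) ^ (n - 2)) := fun x hx => by
    refine (hle x hx).trans (mul_le_mul_of_nonneg_left ?_ hK)
    have : (0:ℝ) ≤ (1 + x) ^ (n - 2) := zpow_nonneg (by linarith) _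
    exact le_mul_of_one_le_left this (by nlinarith)
  refine abs_le.2 ⟨neg_le_of_second_deriv_ge hn hv hv'
    (fun x hx => (abs_le.1 (hbound x hx)).1) hlim hx, neg_le_neg_iff.1 ?_⟩
  exact neg_le_of_second_deriv_ge (v := fun x => -v x) hn (fun x => (hv x).fun_neg)
    (fun x => (hv' x).fun_neg) (fun x hx => neg_le_neg (abs_le.1 (hbound x hx)).2)
    (by simpa using hlim.neg) hx

end DecayingODE

/-! ### The zero mode -/

section ZeroMode

variable {L K P : ℝ} {k m : ℕ} {α β q : ℝ → ℝ} {h U V : ℝ → ℝ → ℝ}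

lemma dPsi_left_mul (α : ℝ → ℝ) (h : ℝ → ℝ → ℝ) (j : ℕ) :
    dPsi j (fun s ψ => α s * h s ψ) = fun s ψ => α s * dPsi j h s ψ := by
  funext s ψ
  exact iteratedDeriv_const_mul_field (α s) (h s)

lemma hasDerivAt_periodIntegral_left_mul (hα : ContDiff ℝ (⊤ : ℕ∞) α) (hh : Smooth2 h) (L ψ : ℝ) :
    HasDerivAt (periodIntegral L fun s ψ => α s * h s ψ)
      (periodIntegral L (fun s ψ => α s * dPsi 1 h s ψ) ψ) ψ := by
  simpa only [dPsi_left_mul] using hasDerivAt_periodIntegral ((smooth2_of_left hα).mul hh) L ψ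

lemma MemWeightedL2.wt_zeroMode_sq_le (hL : 0 < L) (hq : Continuous q) (hP : ∀ s, |q s| ≤ P)
    (hh : MemWeightedL2 L m h) (s ψ : ℝ) :
    (wt m (zeroMode L q h) s ψ) ^ 2
      ≤ L * P ^ 2 * periodIntegral L (fun s ψ => (wt m h s ψ) ^ 2) ψ := by
  have hcont : Continuous fun s => wt m h s ψ := by
    have := hh.continuous
    unfold wt
    fun_prop
  have hmode : wt m (zeroMode L q h) s ψ = ∫ s in (0:ℝ)..L, q s * wt m h s ψ := by
    rw [wt, zeroMode, periodIntegral, ← intervalIntegral.integral_const_mul]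
    exact intervalIntegral.integral_congr fun s _ => mul_left_comm _ _ _
  calc (wt m (zeroMode L q h) s ψ) ^ 2 ≤ L * ∫ s in (0:ℝ)..L, (q s * wt m h s ψ) ^ 2 := by
        rw [hmode]; exact sq_intervalIntegral_le hL (hq.mul hcont)
    _ ≤ L * ∫ s in (0:ℝ)..L, P ^ 2 * (wt m h s ψ) ^ 2 := by
        refine mul_le_mul_of_nonneg_left (intervalIntegral.integral_mono_on hL.le
          (Continuous.intervalIntegrable (by fun_prop) _ _)
          (Continuous.intervalIntegrable (by fun_prop) _ _) fun s _ => ?_) hL.le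
        rw [mul_pow, ← sq_abs (q s)]
        gcongr
        exact hP s
    _ = L * P ^ 2 * periodIntegral L (fun s ψ => (wt m h s ψ) ^ 2) ψ := by
        rw [intervalIntegral.integral_const_mul, periodIntegral, mul_assoc]

lemma integrableOn_strip_periodIntegral (hL : 0 < L)
    (hi : IntegrableOn (fun p : ℝ × ℝ => h p.1 p.2) (strip L)) :
    IntegrableOn (fun p : ℝ × ℝ => periodIntegral L h p.2) (strip L) := by
  rw [integrableOn_strip_iff (fun _ ψ => periodIntegral L h ψ)]
  exact (integrableOn_periodIntegral hL hi).integrable.comp_snd _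

lemma setIntegral_strip_periodIntegral (hL : 0 < L)
    (hi : IntegrableOn (fun p : ℝ × ℝ => h p.1 p.2) (strip L)) :
    ∫ p in strip L, periodIntegral L h p.2 = L * ∫ p in strip L, h p.1 p.2 := by
  rw [setIntegral_strip hL hi, ← integral_const_mul,
    setIntegral_strip (Φ := fun _ ψ => periodIntegral L h ψ) hL
      (integrableOn_strip_periodIntegral hL hi)]
  simp [periodIntegral]

lemma MemWeightedL2.zeroMode (hL : 0 < L) (hq : ContDiff ℝ (⊤ : ℕ∞) q) (hP : ∀ s, |q s| ≤ P)
    (hsm : Smooth2 h) (hh : MemWeightedL2 L m h) : MemWeightedL2 L m (zeroMode L q h) := by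
  have hcont : Continuous fun p : ℝ × ℝ => _root_.zeroMode L q h p.1 p.2 :=
    (continuous_periodIntegral ((smooth2_of_left hq).mul hsm) L).comp continuous_snd
  have hint := integrableOn_strip_periodIntegral (h := fun s ψ => (wt m h s ψ) ^ 2) hL hh.finite
  refine ⟨hcont, integrableOn_strip_of_abs_le (by unfold wt; fun_prop)
    (hint.const_mul (L * P ^ 2)) fun p _ => ?_⟩
  rw [abs_of_nonneg (sq_nonneg _)]
  exact hh.wt_zeroMode_sq_le hL hq.continuous hP p.1 p.2

lemma MemWeightedL2.L2sq_zeroMode_le (hL : 0 < L) (hq : ContDiff ℝ (⊤ : ℕ∞) q)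
    (hP : ∀ s, |q s| ≤ P) (hsm : Smooth2 h) (hh : MemWeightedL2 L m h) :
    L2sq L (wt m (_root_.zeroMode L q h)) ≤ (L * P) ^ 2 * L2sq L (wt m h) := by
  have hint := integrableOn_strip_periodIntegral (h := fun s ψ => (wt m h s ψ) ^ 2) hL hh.finite
  calc L2sq L (wt m (_root_.zeroMode L q h))
      ≤ ∫ p in strip L, L * P ^ 2 * periodIntegral L (fun s ψ => (wt m h s ψ) ^ 2) p.2 :=
        setIntegral_mono_on (hh.zeroMode hL hq hP hsm).finite
          (hint.const_mul _) (measurableSet_strip L)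
          fun p _ => hh.wt_zeroMode_sq_le hL hq.continuous hP p.1 p.2
    _ = L * P ^ 2 * (L * L2sq L (wt m h)) := by
        rw [integral_const_mul, L2sq, ← strip,
          ← setIntegral_strip_periodIntegral (h := fun s ψ => (wt m h s ψ) ^ 2) hL hh.finite]
    _ = (L * P) ^ 2 * L2sq L (wt m h) := by ring

lemma Smooth2.heatOp (hα : ContDiff ℝ (⊤ : ℕ∞) α) (hh : Smooth2 h) : Smooth2 (heatOp α h) :=
  (hh.dS 1).sub ((smooth2_of_left hα).mul (hh.dPsi 2))

lemma periodIntegral_mul_dPsi_two (hα : ContDiff ℝ (⊤ : ℕ∞) α) (hh : Smooth2 h)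
    (hp : PeriodicS L h) (ψ : ℝ) :
    periodIntegral L (fun s ψ => α s * dPsi 2 h s ψ) ψ = -periodIntegral L (heatOp α h) ψ := by
  have hsum := periodIntegral_add (L := L) (u := heatOp α h) (v := fun s ψ => α s * dPsi 2 h s ψ)
    ((hh.heatOp hα).continuous_left ψ)
    (((smooth2_of_left hα).mul (hh.dPsi 2)).continuous_left ψ)
  simp only [heatOp, sub_add_cancel] at hsum
  have hzero : periodIntegral L (fun s ψ => dS 1 h s ψ) ψ = 0 := periodIntegral_dS_one hh hp ψ
  rw [hzero] at hsum
  exact eq_neg_of_add_eq_zero_right hsum.symm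

lemma abs_periodIntegral_sub_le (hL : 0 < L) {u v : ℝ → ℝ → ℝ} {ψ C : ℝ}
    (hu : Continuous fun s => u s ψ) (hv : Continuous fun s => v s ψ)
    (hC : ∀ s, |u s ψ - v s ψ| ≤ C) :
    |periodIntegral L u ψ - periodIntegral L v ψ| ≤ L * C := by
  rw [periodIntegral, periodIntegral, ← intervalIntegral.integral_sub (hu.intervalIntegrable _ _)
    (hv.intervalIntegrable _ _)]
  refine (intervalIntegral.norm_integral_le_of_norm_le_const (f := fun s => u s ψ - v s ψ)
    fun s _ => hC s).trans_eq ?_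
  rw [sub_zero, abs_of_pos hL, mul_comm]

lemma MemX.tendsto_periodIntegral_left_mul (hL : 0 < L) (hm : m ≠ 0) (hP : ∀ s, |α s| ≤ P)
    (hk : 0 < k) (hh : MemX L k m h) :
    Tendsto (periodIntegral L fun s ψ => α s * h s ψ) atTop (nhds 0) := by
  set N := Real.sqrt (topXnormSq L k m h)
  have hdecay : ∀ s, ∀ ψ ≥ (0:ℝ), |h s ψ| ≤ sobolevConst L m * N * (1 + ψ)⁻¹ := fun s ψ hψ => by
    have hpt := hh.pow_mul_abs_dS_le hL hk (Real.sqrt_nonneg _) (N := N)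
      (Real.sq_sqrt (topXnormSq_nonneg L k m h)).ge s hψ
    rw [dS_zero] at hpt
    rw [← div_eq_mul_inv, le_div_iff₀ (by positivity), mul_comm]
    exact (mul_le_mul_of_nonneg_right (le_self_pow₀ (by linarith) hm) (abs_nonneg _)).trans hpt
  have hbound : ∀ ψ ≥ (0:ℝ), ‖periodIntegral L (fun s ψ => α s * h s ψ) ψ‖
      ≤ P * (sobolevConst L m * N * (1 + ψ)⁻¹) * |L - 0| := fun ψ hψ =>
    intervalIntegral.norm_integral_le_of_norm_le_const fun s _ => by
      rw [Real.norm_eq_abs, abs_mul]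
      exact mul_le_mul (hP s) (hdecay s ψ hψ) (abs_nonneg _) ((abs_nonneg _).trans (hP s))
  refine squeeze_zero_norm' ((eventually_ge_atTop 0).mono hbound) ?_
  have hinv : Tendsto (fun ψ : ℝ => (1 + ψ)⁻¹) atTop (nhds 0) :=
    tendsto_inv_atTop_zero.comp (tendsto_atTop_add_const_left _ 1 tendsto_id)
  simpa using ((hinv.const_mul _).const_mul P).mul_const |L - 0|

lemma pow_mul_abs_periodIntegral_sub_le (hL : 0 < L) (hm : 3 ≤ m) (hk : 0 < k)
    (hα : ContDiff ℝ (⊤ : ℕ∞) α) (hβ : ContDiff ℝ (⊤ : ℕ∞) β) (hαP : ∀ s, |α s| ≤ P)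
    (hβP : ∀ s, |β s| ≤ P) (hU : MemX L k m U) (hV : MemX L k m V)
    (hK : ∀ s, ∀ ψ > 0, (1 + ψ) ^ (2 * m) * |heatOp α U s ψ - heatOp β V s ψ| ≤ K)
    {ψ : ℝ} (hψ : 0 ≤ ψ) :
    (1 + ψ) ^ (m + 1) * |periodIntegral L (fun s ψ => α s * U s ψ) ψ
      - periodIntegral L (fun s ψ => β s * V s ψ) ψ| ≤ L * K := by
  have hK0 : 0 ≤ K := le_trans (by positivity) (hK 0 1 one_pos)
  have hsecond : ∀ x > 0, |periodIntegral L (fun s ψ => α s * dPsi 2 U s ψ) x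
      - periodIntegral L (fun s ψ => β s * dPsi 2 V s ψ) x|
        ≤ L * K * (1 + x) ^ (2 - 2 * m - 2 : ℤ) := fun x hx => by
    rw [periodIntegral_mul_dPsi_two hα hU.smooth hU.periodic,
      periodIntegral_mul_dPsi_two hβ hV.smooth hV.periodic, neg_sub_neg, abs_sub_comm]
    have hexp : (2 - 2 * m - 2 : ℤ) = -((2 * m : ℕ) : ℤ) := by push_cast; ring
    rw [hexp, zpow_neg, zpow_natCast, mul_assoc, ← div_eq_mul_inv]
    refine abs_periodIntegral_sub_le hL ((hU.smooth.heatOp hα).continuous_left x)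
      ((hV.smooth.heatOp hβ).continuous_left x) fun s => ?_
    rw [le_div_iff₀ (by positivity), mul_comm]
    exact hK s x hx
  have hlim := (hU.tendsto_periodIntegral_left_mul hL (by omega) hαP hk).sub
    (hV.tendsto_periodIntegral_left_mul hL (by omega) hβP hk)
  rw [sub_zero] at hlim
  have hdecay := abs_le_of_abs_second_deriv_le (by omega) (by positivity)
    (fun x => (hasDerivAt_periodIntegral_left_mul hα hU.smooth L x).sub
      (hasDerivAt_periodIntegral_left_mul hβ hV.smooth L x))
    (fun x => by
      have := (hasDerivAt_periodIntegral_left_mul hα (hU.smooth.dPsi 1) L x).sub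
        (hasDerivAt_periodIntegral_left_mul hβ (hV.smooth.dPsi 1) L x)
      rwa [← dPsi_succ, ← dPsi_succ] at this)
    hsecond hlim hψ
  refine (mul_le_mul_of_nonneg_left hdecay (by positivity)).trans ?_
  have hpow : (1 + ψ) ^ (m + 1) * (1 + ψ) ^ (2 - 2 * m : ℤ) ≤ 1 := by
    rw [← zpow_natCast, ← zpow_add₀ (by positivity)]
    exact zpow_le_one_of_nonpos₀ (by linarith) (by push_cast; omega)
  calc (1 + ψ) ^ (m + 1) * (L * K * (1 + ψ) ^ (2 - 2 * m : ℤ))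
      = L * K * ((1 + ψ) ^ (m + 1) * (1 + ψ) ^ (2 - 2 * m : ℤ)) := by ring
    _ ≤ L * K := mul_le_of_le_one_right (by positivity) hpow

end ZeroMode

/-! ### Pointwise bounds for the nonlinearity -/

section PairBound

/-- `x` and `y` are both of size at most `A`, and within `a` of each other. -/
structure PairBound (A a x y : ℝ) : Prop where
  left : |x| ≤ A
  right : |y| ≤ A
  sub : |x - y| ≤ a

namespace PairBound

variable {A A' a a' B b x x' y y' : ℝ}

lemma size_nonneg (h : PairBound A a x y) : 0 ≤ A := (abs_nonneg x).trans h.left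

lemma diff_nonneg (h : PairBound A a x y) : 0 ≤ a := (abs_nonneg (x - y)).trans h.sub

lemma mono (h : PairBound A a x y) (hA : A ≤ A') (ha : a ≤ a') : PairBound A' a' x y :=
  ⟨h.left.trans hA, h.right.trans hA, h.sub.trans ha⟩

lemma of_abs_le (hx : |x| ≤ A) : PairBound A 0 x x :=
  ⟨hx, hx, by rw [sub_self, abs_zero]⟩

lemma add (h : PairBound A a x y) (h' : PairBound B b x' y') :
    PairBound (A + B) (a + b) (x + x') (y + y') :=
  ⟨(abs_add_le _ _).trans (add_le_add h.left h'.left),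
    (abs_add_le _ _).trans (add_le_add h.right h'.right), by
    rw [add_sub_add_comm]
    exact (abs_add_le _ _).trans (add_le_add h.sub h'.sub)⟩

lemma mul (h : PairBound A a x y) (h' : PairBound B b x' y') :
    PairBound (A * B) (A * b + a * B) (x * x') (y * y') := by
  refine ⟨?_, ?_, ?_⟩
  · rw [abs_mul]; exact mul_le_mul h.left h'.left (abs_nonneg _) h.size_nonneg
  · rw [abs_mul]; exact mul_le_mul h.right h'.right (abs_nonneg _) h.size_nonneg
  · rw [show x * x' - y * y' = x * (x' - y') + (x - y) * y' by ring]
    refine (abs_add_le _ _).trans (add_le_add ?_ ?_)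
    · rw [abs_mul]; exact mul_le_mul h.left h'.sub (abs_nonneg _) h.size_nonneg
    · rw [abs_mul]; exact mul_le_mul h.sub h'.right (abs_nonneg _) h.diff_nonneg

lemma const_mul (c : ℝ) (h : PairBound A a x y) : PairBound (|c| * A) (|c| * a) (c * x) (c * y) :=
  ((of_abs_le (le_refl |c|)).mul h).mono le_rfl (by rw [zero_mul, add_zero])

lemma pow_succ (h : PairBound A a x y) (n : ℕ) :
    PairBound (A ^ (n + 1)) ((n + 1) * A ^ n * a) (x ^ (n + 1)) (y ^ (n + 1)) := by
  induction n with
  | zero => simpa using h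
  | succ n ih =>
    rw [_root_.pow_succ x, _root_.pow_succ y]
    exact (ih.mul h).mono (le_of_eq (by ring)) (le_of_eq (by push_cast; ring))

lemma sum {ι : Type*} {I : Finset ι} {A a x y : ι → ℝ}
    (h : ∀ i ∈ I, PairBound (A i) (a i) (x i) (y i)) :
    PairBound (∑ i ∈ I, A i) (∑ i ∈ I, a i) (∑ i ∈ I, x i) (∑ i ∈ I, y i) :=
  ⟨(Finset.abs_sum_le_sum_abs _ _).trans (Finset.sum_le_sum fun i hi => (h i hi).left),
    (Finset.abs_sum_le_sum_abs _ _).trans (Finset.sum_le_sum fun i hi => (h i hi).right), by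
    rw [← Finset.sum_sub_distrib]
    exact (Finset.abs_sum_le_sum_abs _ _).trans (Finset.sum_le_sum fun i hi => (h i hi).sub)⟩

end PairBound

lemma sum_choose_mul (n : ℕ) (c : ℝ) :
    ∑ i ∈ Finset.range (n + 1), (n.choose i : ℝ) * c = 2 ^ n * c := by
  rw [← Finset.sum_mul, ← Nat.cast_sum, Nat.sum_range_choose]
  norm_num

variable {f f' g g' : ℝ → ℝ} {s : ℝ} {n : ℕ} {A a : ℝ}

lemma PairBound.iteratedDeriv_mul
    (hf : ContDiff ℝ (⊤ : ℕ∞) f) (hf' : ContDiff ℝ (⊤ : ℕ∞) f')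
    (hg : ContDiff ℝ (⊤ : ℕ∞) g) (hg' : ContDiff ℝ (⊤ : ℕ∞) g')
    (h : ∀ i ≤ n, PairBound A a (iteratedDeriv i f s * iteratedDeriv (n - i) g s)
      (iteratedDeriv i f' s * iteratedDeriv (n - i) g' s)) :
    PairBound (2 ^ n * A) (2 ^ n * a) (iteratedDeriv n (fun s => f s * g s) s)
      (iteratedDeriv n (fun s => f' s * g' s) s) := by
  have leibniz : ∀ {f g : ℝ → ℝ}, ContDiff ℝ (⊤ : ℕ∞) f → ContDiff ℝ (⊤ : ℕ∞) g →
      iteratedDeriv n (fun s => f s * g s) s = ∑ i ∈ Finset.range (n + 1),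
        (n.choose i : ℝ) * (iteratedDeriv i f s * iteratedDeriv (n - i) g s) := fun hf hg =>
    (iteratedDeriv_fun_mul (hf.contDiffAt.of_le (mod_cast le_top))
      (hg.contDiffAt.of_le (mod_cast le_top))).trans
      (Finset.sum_congr rfl fun _ _ => mul_assoc _ _ _)
  rw [leibniz hf hg, leibniz hf' hg', ← sum_choose_mul n A, ← sum_choose_mul n a]
  exact PairBound.sum fun i hi =>
    ((h i (Nat.le_of_lt_succ (Finset.mem_range.1 hi))).const_mul (n.choose i : ℝ)).mono
      (by rw [Nat.abs_cast]) (by rw [Nat.abs_cast])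

variable {P d l l' : ℝ} {p u v : ℝ → ℝ}

lemma PairBound.iteratedDeriv_const_mul_mul
    (hp : ContDiff ℝ (⊤ : ℕ∞) p) (hu : ContDiff ℝ (⊤ : ℕ∞) u) (hv : ContDiff ℝ (⊤ : ℕ∞) v)
    (hl : PairBound 2 d l l') (hpP : ∀ i ≤ n, |iteratedDeriv i p s| ≤ P)
    (h : ∀ i ≤ n, PairBound A a (iteratedDeriv i u s) (iteratedDeriv i v s)) (hd : d * A ≤ a) :
    PairBound (3 * 2 ^ n * P * A) (3 * 2 ^ n * P * a)
      (iteratedDeriv n (fun s => l * (u s * p s)) s)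
      (iteratedDeriv n (fun s => l' * (v s * p s)) s) := by
  have hP : 0 ≤ P := (abs_nonneg _).trans (hpP 0 n.zero_le)
  have hA := (h 0 n.zero_le).size_nonneg
  rw [iteratedDeriv_const_mul_field, iteratedDeriv_const_mul_field]
  refine (hl.mul (PairBound.iteratedDeriv_mul (A := A * P) (a := a * P) hu hv hp hp fun i hi =>
    ((h i hi).mul (of_abs_le (hpP _ (Nat.sub_le n i)))).mono le_rfl (by simp))).mono ?_ ?_
  · have : 0 ≤ 2 ^ n * (A * P) := by positivity
    linarith
  · have := mul_le_mul_of_nonneg_left hd (by positivity : 0 ≤ 2 ^ n * P)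
    linarith

end PairBound

section InvSqrt

/-- The function `r ↦ (1 + r)^{-1/2}`: by homogeneity, `ω q_e / √(ω² q_e² + Q)` is its value at
`r = Q / (ω² q_e²)`. -/
noncomputable def invSqrtOneAdd (r : ℝ) : ℝ := (Real.sqrt (1 + r))⁻¹

variable {r r' : ℝ}

lemma one_add_pos_of_abs_le_half (hr : |r| ≤ 1 / 2) : 0 < 1 + r := by
  linarith [(abs_le.1 hr).1]

lemma half_le_invSqrtOneAdd (hr : |r| ≤ 1 / 2) : 1 / 2 ≤ invSqrtOneAdd r := by
  have hs : Real.sqrt (1 + r) ≤ 2 := by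
    rw [Real.sqrt_le_left (by norm_num)]; linarith [(abs_le.1 hr).2]
  rw [one_div]
  exact inv_anti₀ (Real.sqrt_pos.2 (one_add_pos_of_abs_le_half hr)) hs

lemma invSqrtOneAdd_le_two (hr : |r| ≤ 1 / 2) : invSqrtOneAdd r ≤ 2 := by
  have hs : (2 : ℝ)⁻¹ ≤ Real.sqrt (1 + r) :=
    Real.le_sqrt_of_sq_le (by linarith [(abs_le.1 hr).1])
  simpa only [inv_inv, invSqrtOneAdd] using inv_anti₀ (by norm_num) hs

lemma invSqrtOneAdd_sq_mul (hr : |r| ≤ 1 / 2) : invSqrtOneAdd r ^ 2 * (1 + r) = 1 := by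
  have h := one_add_pos_of_abs_le_half hr
  rw [invSqrtOneAdd, inv_pow, Real.sq_sqrt h.le, inv_mul_cancel₀ h.ne']

lemma abs_invSqrtOneAdd_sub_le (hr : |r| ≤ 1 / 2) (hr' : |r'| ≤ 1 / 2) :
    |invSqrtOneAdd r - invSqrtOneAdd r'| ≤ 16 * |r - r'| := by
  have e := invSqrtOneAdd_sq_mul hr
  have e' := invSqrtOneAdd_sq_mul hr'
  have h1 := half_le_invSqrtOneAdd hr
  have h1' := half_le_invSqrtOneAdd hr'
  have h2 := invSqrtOneAdd_le_two hr
  have h2' := invSqrtOneAdd_le_two hr'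
  generalize invSqrtOneAdd r = b at *
  generalize invSqrtOneAdd r' = b' at *
  have hid : (b - b') * (b + b') = (b * b') ^ 2 * (r' - r) := by
    linear_combination b' ^ 2 * e - b ^ 2 * e'
  have hprod : (b * b') ^ 2 ≤ 16 := by
    have : b * b' ≤ 2 * 2 := mul_le_mul h2 h2' (by linarith) (by norm_num)
    nlinarith [mul_nonneg (by linarith : 0 ≤ b) (by linarith : 0 ≤ b')]
  calc |b - b'| ≤ |b - b'| * (b + b') := le_mul_of_one_le_right (abs_nonneg _) (by linarith)
    _ = (b * b') ^ 2 * |r - r'| := by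
        rw [← abs_of_pos (by linarith : 0 < b + b'), ← abs_mul, hid, abs_mul, abs_sub_comm r',
          abs_of_nonneg (sq_nonneg _)]
    _ ≤ 16 * |r - r'| := mul_le_mul_of_nonneg_right hprod (abs_nonneg _)

lemma abs_one_sub_invSqrtOneAdd_le (hr : |r| ≤ 1 / 2) : |1 - invSqrtOneAdd r| ≤ 16 * |r| := by
  have h := abs_invSqrtOneAdd_sub_le (r := 0) (by norm_num) hr
  rwa [zero_sub, abs_neg, show invSqrtOneAdd 0 = 1 by norm_num [invSqrtOneAdd]] at h

lemma contDiff_one_sub_invSqrtOneAdd {ρ : ℝ → ℝ} (hρ : ContDiff ℝ (⊤ : ℕ∞) ρ)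
    (hsmall : ∀ s, |ρ s| ≤ 1 / 2) : ContDiff ℝ (⊤ : ℕ∞) (fun s => 1 - invSqrtOneAdd (ρ s)) :=
  contDiff_const.sub <| ((contDiff_const.add hρ).sqrt fun s =>
    (one_add_pos_of_abs_le_half (hsmall s)).ne').inv fun s =>
      (Real.sqrt_pos.2 (one_add_pos_of_abs_le_half (hsmall s))).ne'

lemma hasDerivAt_invSqrtOneAdd {ρ : ℝ → ℝ} {ρ' s : ℝ} (hρ : HasDerivAt ρ ρ' s)
    (hs : |ρ s| ≤ 1 / 2) :
    HasDerivAt (fun s => invSqrtOneAdd (ρ s)) (-(1 / 2 * (invSqrtOneAdd (ρ s) ^ 3 * ρ'))) s := by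
  have hpos := one_add_pos_of_abs_le_half hs
  have hsqrt := Real.sqrt_pos.2 hpos
  refine (((hρ.const_add 1).sqrt hpos.ne').inv hsqrt.ne').congr_deriv ?_
  unfold invSqrtOneAdd
  field_simp

variable {ρ σ : ℝ → ℝ}

lemma iteratedDeriv_one_one_sub_invSqrtOneAdd (hρ : ContDiff ℝ (⊤ : ℕ∞) ρ)
    (hsmall : ∀ s, |ρ s| ≤ 1 / 2) (s : ℝ) :
    iteratedDeriv 1 (fun s => 1 - invSqrtOneAdd (ρ s)) s
      = 1 / 2 * (invSqrtOneAdd (ρ s) ^ 3 * iteratedDeriv 1 ρ s) := by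
  rw [iteratedDeriv_one, iteratedDeriv_one]
  simpa using ((hasDerivAt_invSqrtOneAdd (hρ.differentiable (by simp) s).hasDerivAt
    (hsmall s)).const_sub 1).deriv

lemma iteratedDeriv_two_one_sub_invSqrtOneAdd (hρ : ContDiff ℝ (⊤ : ℕ∞) ρ)
    (hsmall : ∀ s, |ρ s| ≤ 1 / 2) (s : ℝ) :
    iteratedDeriv 2 (fun s => 1 - invSqrtOneAdd (ρ s)) s
      = 1 / 2 * (invSqrtOneAdd (ρ s) ^ 3 * iteratedDeriv 2 ρ s)
        + -3 / 4 * (invSqrtOneAdd (ρ s) ^ 5 * (iteratedDeriv 1 ρ s * iteratedDeriv 1 ρ s)) := by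
  have hb := hasDerivAt_invSqrtOneAdd (hρ.differentiable (by simp) s).hasDerivAt (hsmall s)
  have hρ' : HasDerivAt (iteratedDeriv 1 ρ) (iteratedDeriv 2 ρ s) s := by
    rw [iteratedDeriv_succ (n := 1)]
    exact (hρ.differentiable_iteratedDeriv 1 (WithTop.coe_lt_coe.2 (by simp)) s).hasDerivAt
  rw [iteratedDeriv_succ, funext (iteratedDeriv_one_one_sub_invSqrtOneAdd hρ hsmall)]
  refine (((hb.fun_pow 3).fun_mul hρ').const_mul (1 / 2)).deriv.trans ?_
  rw [iteratedDeriv_one]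
  ring

variable {s M κ H J : ℝ}

lemma pairBound_invSqrtOneAdd (hr : PairBound M κ r r') (hM : M ≤ 1 / 2) :
    PairBound 2 (16 * κ) (invSqrtOneAdd r) (invSqrtOneAdd r') := by
  have hr1 := hr.left.trans hM
  have hr2 := hr.right.trans hM
  refine ⟨abs_le.2 ⟨?_, invSqrtOneAdd_le_two hr1⟩, abs_le.2 ⟨?_, invSqrtOneAdd_le_two hr2⟩,
    (abs_invSqrtOneAdd_sub_le hr1 hr2).trans (by linarith [hr.sub])⟩
  · linarith [half_le_invSqrtOneAdd hr1]
  · linarith [half_le_invSqrtOneAdd hr2]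

lemma pairBound_one_sub_invSqrtOneAdd (hr : PairBound M κ r r') (hM : M ≤ 1 / 2) :
    PairBound (16 * M) (16 * κ) (1 - invSqrtOneAdd r) (1 - invSqrtOneAdd r') := by
  have hr1 := hr.left.trans hM
  have hr2 := hr.right.trans hM
  refine ⟨(abs_one_sub_invSqrtOneAdd_le hr1).trans (by linarith [hr.left]),
    (abs_one_sub_invSqrtOneAdd_le hr2).trans (by linarith [hr.right]), ?_⟩
  rw [sub_sub_sub_cancel_left, abs_sub_comm]
  exact (pairBound_invSqrtOneAdd hr hM).sub

section Composition

variable (hρ : ContDiff ℝ (⊤ : ℕ∞) ρ) (hσ : ContDiff ℝ (⊤ : ℕ∞) σ) (hM : M ≤ 1 / 2)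
  (hlow : ∀ i ≤ 1, ∀ s, PairBound M κ (iteratedDeriv i ρ s) (iteratedDeriv i σ s))

include hM hlow in
lemma pairBound_abs_le_half : (∀ s, |ρ s| ≤ 1 / 2) ∧ ∀ s, |σ s| ≤ 1 / 2 := by
  simp only [Nat.le_one_iff_eq_zero_or_eq_one] at hlow
  exact ⟨fun s => by simpa only [iteratedDeriv_zero] using (hlow 0 (.inl rfl) s).left.trans hM,
    fun s => by simpa only [iteratedDeriv_zero] using (hlow 0 (.inl rfl) s).right.trans hM⟩

include hρ hσ hM hlow

lemma pairBound_iteratedDeriv_one_sub_invSqrtOneAdd_low {i : ℕ} (hi : i ≤ 1) (s : ℝ) :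
    PairBound (52 * M) (52 * κ) (iteratedDeriv i (fun s => 1 - invSqrtOneAdd (ρ s)) s)
      (iteratedDeriv i (fun s => 1 - invSqrtOneAdd (σ s)) s) := by
  obtain ⟨hρs, hσs⟩ := pairBound_abs_le_half hM hlow
  have h0 : PairBound M κ (ρ s) (σ s) := by
    simpa only [iteratedDeriv_zero] using hlow 0 zero_le_one s
  have hM0 := h0.size_nonneg
  have hκ0 := h0.diff_nonneg
  obtain rfl | rfl := Nat.le_one_iff_eq_zero_or_eq_one.1 hi
  · simp only [iteratedDeriv_zero]
    exact (pairBound_one_sub_invSqrtOneAdd h0 hM).mono (by linarith) (by linarith)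
  · rw [iteratedDeriv_one_one_sub_invSqrtOneAdd hρ hρs,
      iteratedDeriv_one_one_sub_invSqrtOneAdd hσ hσs]
    refine ((((pairBound_invSqrtOneAdd h0 hM).pow_succ 2).mul (hlow 1 le_rfl s)).const_mul
      (1 / 2)).mono ?_ ?_
    · norm_num; linarith
    · norm_num; nlinarith

lemma pairBound_iteratedDeriv_one_sub_invSqrtOneAdd_high
    (hhigh : ∀ i, 1 ≤ i → i ≤ 2 → PairBound H J (iteratedDeriv i ρ s) (iteratedDeriv i σ s)) :
    PairBound (52 * H) (600 * (κ * H + J))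
      (iteratedDeriv 2 (fun s => 1 - invSqrtOneAdd (ρ s)) s)
      (iteratedDeriv 2 (fun s => 1 - invSqrtOneAdd (σ s)) s) := by
  obtain ⟨hρs, hσs⟩ := pairBound_abs_le_half hM hlow
  have h0 : PairBound M κ (ρ s) (σ s) := by
    simpa only [iteratedDeriv_zero] using hlow 0 zero_le_one s
  have h1 := hhigh 1 le_rfl one_le_two
  have hb := pairBound_invSqrtOneAdd h0 hM
  have hκ0 := h0.diff_nonneg
  have hH0 := h1.size_nonneg
  have hJ0 := h1.diff_nonneg
  have hMH : M * H ≤ 1 / 2 * H := mul_le_mul_of_nonneg_right hM hH0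
  have hMJ : M * J ≤ 1 / 2 * J := mul_le_mul_of_nonneg_right hM hJ0
  have : 0 ≤ κ * H := mul_nonneg hκ0 hH0
  have hMκH : κ * (M * H) ≤ κ * (1 / 2 * H) := mul_le_mul_of_nonneg_left hMH hκ0
  rw [iteratedDeriv_two_one_sub_invSqrtOneAdd hρ hρs,
    iteratedDeriv_two_one_sub_invSqrtOneAdd hσ hσs]
  refine ((((hb.pow_succ 2).mul (hhigh 2 one_le_two le_rfl)).const_mul (1 / 2)).add
    (((hb.pow_succ 4).mul ((hlow 1 le_rfl s).mul h1)).const_mul (-3 / 4))).mono ?_ ?_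
  · rw [abs_of_pos (by norm_num), abs_of_neg (by norm_num)]; norm_num; linarith
  · rw [abs_of_pos (by norm_num), abs_of_neg (by norm_num)]; norm_num; linarith

end Composition

end InvSqrt

section MixedDerivatives

variable {L : ℝ} {j k m : ℕ} {h : ℝ → ℝ → ℝ}

lemma L2sq_wt_dS_le_topXnormSq (hj : j ≤ k + 1) :
    L2sq L (wt m (dS j h)) ≤ topXnormSq L k m h := by
  obtain hjk | rfl := Nat.lt_or_eq_of_le hj
  · exact (L2sq_wt_le_parabolicNormSq L m _).trans
      (parabolicNormSq_le_topXnormSq (Nat.le_of_lt_succ hjk))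
  · rw [dS_succ]
    exact (L2sq_wt_dS_le_parabolicNormSq L m _).trans (parabolicNormSq_le_topXnormSq le_rfl)

lemma MemX.memWeightedL2_dS (hh : MemX L k m h) (hj : j ≤ k + 1) :
    MemWeightedL2 L m (dS j h) := by
  obtain hjk | rfl := Nat.lt_or_eq_of_le hj
  · exact (hh.memParabolic j (Nat.le_of_lt_succ hjk)).mem
  · rw [dS_succ]
    exact (hh.memParabolic k le_rfl).mem_dS

end MixedDerivatives

section NonlinearSlice

variable {B P d l l' M κ H J s : ℝ} {k : ℕ} {p u v w ρ σ : ℝ → ℝ}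

lemma abs_iteratedDeriv_one_sub_invSqrt_mul_sub_le
    (hρ : ContDiff ℝ (⊤ : ℕ∞) ρ) (hσ : ContDiff ℝ (⊤ : ℕ∞) σ)
    (hv : ContDiff ℝ (⊤ : ℕ∞) v) (hw : ContDiff ℝ (⊤ : ℕ∞) w) (hBM : B * M ≤ 1 / 2)
    (hlow : ∀ i ≤ 1, ∀ s, PairBound (B * M) (B * κ) (iteratedDeriv i ρ s) (iteratedDeriv i σ s))
    (hhigh : ∀ i, 1 ≤ i → i ≤ 2 → i ≤ k →
      PairBound (B * H) (B * J) (iteratedDeriv i ρ s) (iteratedDeriv i σ s))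
    (hB : 0 ≤ B) (hv0 : PairBound M κ (v s) (w s))
    (hvk : ∀ i ≤ k, PairBound H J (iteratedDeriv i v s) (iteratedDeriv i w s)) (hk : k ≤ 2) :
    |iteratedDeriv k
      (fun s => (1 - invSqrtOneAdd (ρ s)) * v s - (1 - invSqrtOneAdd (σ s)) * w s) s|
      ≤ 2400 * B * (κ * H + M * J) := by
  have hM0 := hv0.size_nonneg
  have hκ0 := hv0.diff_nonneg
  have hH0 := (hvk 0 k.zero_le).size_nonneg
  have hJ0 := (hvk 0 k.zero_le).diff_nonneg
  obtain ⟨hρs, hσs⟩ := pairBound_abs_le_half hBM hlow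
  have hMJ : 0 ≤ B * (M * J) := by positivity
  have hκH : 0 ≤ B * (κ * H) := by positivity
  have hterm : ∀ i ≤ k, PairBound (52 * (B * M) * H) (600 * B * (κ * H + M * J))
      (iteratedDeriv i (fun s => 1 - invSqrtOneAdd (ρ s)) s * iteratedDeriv (k - i) v s)
      (iteratedDeriv i (fun s => 1 - invSqrtOneAdd (σ s)) s * iteratedDeriv (k - i) w s) := by
    intro i hi
    obtain hi1 | rfl : i ≤ 1 ∨ i = 2 := by omega
    · exact ((pairBound_iteratedDeriv_one_sub_invSqrtOneAdd_low hρ hσ hBM hlow hi1 s).mul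
        (hvk _ (Nat.sub_le k i))).mono le_rfl (by linarith)
    · rw [Nat.sub_eq_zero_of_le hk, iteratedDeriv_zero, iteratedDeriv_zero]
      refine ((pairBound_iteratedDeriv_one_sub_invSqrtOneAdd_high hρ hσ hBM hlow
        fun i h1 h2 => hhigh i h1 h2 (h2.trans hi)).mul hv0).mono (by linarith) ?_
      have : B * M * (B * (κ * H)) ≤ 1 / 2 * (B * (κ * H)) := mul_le_mul_of_nonneg_right hBM hκH
      linarith
  have hpow : (2 : ℝ) ^ k ≤ 4 := by
    calc (2 : ℝ) ^ k ≤ 2 ^ 2 := pow_le_pow_right₀ one_le_two hk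
      _ = 4 := by norm_num
  have hφ := contDiff_one_sub_invSqrtOneAdd hρ hρs
  have hφ' := contDiff_one_sub_invSqrtOneAdd hσ hσs
  rw [iteratedDeriv_fun_sub ((hφ.mul hv).contDiffAt.of_le (mod_cast le_top))
    ((hφ'.mul hw).contDiffAt.of_le (mod_cast le_top))]
  calc _ ≤ 2 ^ k * (600 * B * (κ * H + M * J)) :=
        (PairBound.iteratedDeriv_mul hφ hφ' hv hw hterm).sub
    _ ≤ 4 * (600 * B * (κ * H + M * J)) := mul_le_mul_of_nonneg_right hpow (by positivity)
    _ = 2400 * B * (κ * H + M * J) := by ring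

lemma abs_iteratedDeriv_one_sub_invSqrt_mul_deriv_sub_le
    (hp : ContDiff ℝ (⊤ : ℕ∞) p) (hu : ContDiff ℝ (⊤ : ℕ∞) u) (hv : ContDiff ℝ (⊤ : ℕ∞) v)
    (hpP : ∀ i ≤ 2, ∀ s, |iteratedDeriv i p s| ≤ P) (hl : PairBound 2 d l l')
    (hM : 24 * P * M ≤ 1) (hdM : d * M ≤ κ) (hdH : d * H ≤ J)
    (hlow : ∀ i ≤ 1, ∀ s, PairBound M κ (iteratedDeriv i u s) (iteratedDeriv i v s))
    (hhigh : ∀ i ≤ k + 1, PairBound H J (iteratedDeriv i u s) (iteratedDeriv i v s))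
    (hk : k ≤ 2) :
    |iteratedDeriv k (fun s => (1 - invSqrtOneAdd (l * (u s * p s))) * iteratedDeriv 1 u s
        - (1 - invSqrtOneAdd (l' * (v s * p s))) * iteratedDeriv 1 v s) s|
      ≤ 28800 * P * (κ * H + M * J) := by
  have hP : 0 ≤ P := (abs_nonneg _).trans (hpP 0 (by norm_num) 0)
  have hscale : ∀ {i s A a}, i ≤ 2 → d * A ≤ a →
      (∀ j ≤ i, PairBound A a (iteratedDeriv j u s) (iteratedDeriv j v s)) →
      PairBound (12 * P * A) (12 * P * a) (iteratedDeriv i (fun s => l * (u s * p s)) s)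
        (iteratedDeriv i (fun s => l' * (v s * p s)) s) := fun {i s A a} hi hd h => by
    have hpow : 3 * 2 ^ i * P ≤ 12 * P := by
      have : (2 : ℝ) ^ i ≤ 2 ^ 2 := pow_le_pow_right₀ one_le_two hi
      exact mul_le_mul_of_nonneg_right (by linarith) hP
    exact (PairBound.iteratedDeriv_const_mul_mul hp hu hv hl
      (fun j hj => hpP j (hj.trans hi) s) h hd).mono
      (mul_le_mul_of_nonneg_right hpow (h 0 i.zero_le).size_nonneg)
      (mul_le_mul_of_nonneg_right hpow (h 0 i.zero_le).diff_nonneg)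
  have hsmooth : ∀ {f : ℝ → ℝ}, ContDiff ℝ (⊤ : ℕ∞) f →
      ContDiff ℝ (⊤ : ℕ∞) (iteratedDeriv 1 f) := fun hf => by
    rw [iteratedDeriv_one]; exact (contDiff_infty_iff_deriv.1 hf).2
  have hshift : ∀ (i : ℕ) (f : ℝ → ℝ), iteratedDeriv i (iteratedDeriv 1 f) =
      iteratedDeriv (i + 1) f := fun i f => by rw [iteratedDeriv_one, ← iteratedDeriv_succ']
  refine (abs_iteratedDeriv_one_sub_invSqrt_mul_sub_le (B := 12 * P)
    (contDiff_const.mul (hu.mul hp)) (contDiff_const.mul (hv.mul hp)) (hsmooth hu) (hsmooth hv)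
    (by linarith)
    (fun i hi s => hscale (by omega) hdM fun j hj => hlow j (hj.trans hi) s)
    (fun i _ hi2 hik => hscale hi2 hdH fun j hj => hhigh j (by omega))
    (by linarith) (hlow 1 le_rfl s)
    (fun i hi => by rw [hshift, hshift]; exact hhigh (i + 1) (by omega)) hk).trans
    (le_of_eq (by ring))

end NonlinearSlice

section Nonlinearity

variable {q : ℝ → ℝ} {P d L M N κ H J ω₁ ω₂ s ψ : ℝ} {k m : ℕ} {F Q R : ℝ → ℝ → ℝ}

lemma fNonlin_eq {ω : ℝ} (hq : 0 < q s) (hω : 0 < ω) (Q : ℝ → ℝ → ℝ) (ψ : ℝ) :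
    fNonlin q ω Q s ψ
      = (1 - invSqrtOneAdd ((ω ^ 2)⁻¹ * (Q s ψ * ((q s) ^ 2)⁻¹))) * dS 1 Q s ψ := by
  have hfactor : ω ^ 2 * (q s) ^ 2 + Q s ψ
      = (ω * q s) ^ 2 * (1 + (ω ^ 2)⁻¹ * (Q s ψ * ((q s) ^ 2)⁻¹)) := by field_simp
  have hωq : 0 < ω * q s := mul_pos hω hq
  rw [fNonlin, hfactor, Real.sqrt_mul (sq_nonneg _), Real.sqrt_sq hωq.le,
    div_mul_cancel_left₀ hωq.ne', invSqrtOneAdd]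

section Pointwise

variable (hq : ContDiff ℝ (⊤ : ℕ∞) q) (hqpos : ∀ s, 0 < q s)
  (hqP : ∀ i ≤ 2, ∀ s, |iteratedDeriv i (fun s => ((q s) ^ 2)⁻¹) s| ≤ P)
  (hω₁ : 0 < ω₁) (hω₂ : 0 < ω₂) (hω : PairBound 2 d (ω₁ ^ 2)⁻¹ (ω₂ ^ 2)⁻¹)
include hq hqpos hqP hω₁ hω₂ hω

lemma abs_dS_le_of_eq_fNonlin_sub (hQ : Smooth2 Q) (hR : Smooth2 R)
    (hF : ∀ s, F s ψ = fNonlin q ω₁ Q s ψ - fNonlin q ω₂ R s ψ)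
    (hM : 24 * P * M ≤ 1) (hdM : d * M ≤ κ) (hdH : d * H ≤ J)
    (hlow : ∀ i ≤ 1, ∀ s, PairBound M κ (dS i Q s ψ) (dS i R s ψ))
    (hhigh : ∀ i ≤ k + 1, PairBound H J (dS i Q s ψ) (dS i R s ψ)) (hk : k ≤ 2) :
    |dS k F s ψ| ≤ 28800 * P * (κ * H + M * J) := by
  have hp : ContDiff ℝ (⊤ : ℕ∞) (fun s => ((q s) ^ 2)⁻¹) :=
    (hq.pow 2).inv fun s => (pow_pos (hqpos s) 2).ne'
  have hslice : (fun s => F s ψ) = fun s =>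
      (1 - invSqrtOneAdd ((ω₁ ^ 2)⁻¹ * (Q s ψ * ((q s) ^ 2)⁻¹))) * dS 1 Q s ψ
        - (1 - invSqrtOneAdd ((ω₂ ^ 2)⁻¹ * (R s ψ * ((q s) ^ 2)⁻¹))) * dS 1 R s ψ :=
    funext fun s => by rw [hF, fNonlin_eq (hqpos s) hω₁, fNonlin_eq (hqpos s) hω₂]
  rw [dS, hslice]
  exact abs_iteratedDeriv_one_sub_invSqrt_mul_deriv_sub_le hp (hQ.contDiff_left ψ)
    (hR.contDiff_left ψ) hqP hω hM hdM hdH hlow hhigh hk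

variable (hL : 0 < L) (hQ : MemX L 2 m Q) (hR : MemX L 2 m R) (hM : 0 ≤ M) (hN : 0 ≤ N)
  (hQM : topXnormSq L 2 m Q ≤ M ^ 2) (hRM : topXnormSq L 2 m R ≤ M ^ 2)
  (hQRN : topXnormSq L 2 m (fun s ψ => Q s ψ - R s ψ) ≤ N ^ 2)
  (hMP : 24 * P * (sobolevConst L m * M) ≤ 1)
  (hF : ∀ s, ∀ ψ > 0, F s ψ = fNonlin q ω₁ Q s ψ - fNonlin q ω₂ R s ψ)

omit hq hqpos hqP hω₁ hω₂ in
include hL hQ hR hM hN hQM hRM hQRN in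
lemma pairBound_dS_of_topXnormSq_le {j : ℕ} (hj : j ≤ 1) (s : ℝ) (hψ : 0 < ψ) :
    PairBound (((1 + ψ) ^ m)⁻¹ * (sobolevConst L m * M))
      (((1 + ψ) ^ m)⁻¹ * (sobolevConst L m * (N + d * M))) (dS j Q s ψ) (dS j R s ψ) := by
  have hsup : ∀ {h : ℝ → ℝ → ℝ} {K : ℝ}, MemX L 2 m h → 0 ≤ K → topXnormSq L 2 m h ≤ K ^ 2 →
      |dS j h s ψ| ≤ ((1 + ψ) ^ m)⁻¹ * (sobolevConst L m * K) := fun hh hK hle => by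
    rw [le_inv_mul_iff₀ (by positivity)]
    exact hh.pow_mul_abs_dS_le hL (by omega) hK hle s hψ.le
  refine ⟨hsup hQ hM hQM, hsup hR hM hRM, ?_⟩
  have hdiff := hsup (hQ.sub hR) hN hQRN
  rw [dS_sub hQ.smooth hR.smooth] at hdiff
  have hd := hω.diff_nonneg
  exact hdiff.trans (by unfold sobolevConst; gcongr; linarith [mul_nonneg hd hM])

include hL hQ hR hM hN hQM hRM hQRN hMP hF

lemma pow_mul_abs_fNonlin_sub_le (s : ℝ) (hψ : 0 < ψ) :
    (1 + ψ) ^ (2 * m) * |F s ψ|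
      ≤ 57600 * P * sobolevConst L m ^ 2 * (M * (N + d * M)) := by
  have hA : 0 ≤ sobolevConst L m := Real.sqrt_nonneg _
  have : 0 ≤ d := hω.diff_nonneg
  have hP : 0 ≤ P := (abs_nonneg _).trans (hqP 0 (by norm_num) 0)
  set w := ((1 + ψ) ^ m)⁻¹
  have hw0 : 0 ≤ w := by positivity
  have hw1 : w ≤ 1 := inv_le_one_of_one_le₀ (one_le_pow₀ (by linarith))
  have hpair := fun j hj s => pairBound_dS_of_topXnormSq_le (j := j) hω hL hQ hR hM hN hQM hRM
    hQRN hj s hψ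
  have hsmall : 24 * P * (w * (sobolevConst L m * M)) ≤ 1 :=
    (mul_le_mul_of_nonneg_left (mul_le_of_le_one_left (by positivity) hw1)
      (by positivity)).trans hMP
  have hdiff : d * (w * (sobolevConst L m * M)) ≤ w * (sobolevConst L m * (N + d * M)) := by
    have := mul_nonneg (mul_nonneg hw0 hA) hN
    linarith
  have hbound := abs_dS_le_of_eq_fNonlin_sub (k := 0) (s := s) hq hqpos hqP hω₁ hω₂ hω hQ.smooth
    hR.smooth (fun s => hF s ψ hψ) hsmall hdiff hdiff hpair (fun i hi => hpair i hi s) (by omega)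
  rw [dS_zero] at hbound
  calc (1 + ψ) ^ (2 * m) * |F s ψ|
      ≤ (1 + ψ) ^ (2 * m) * _ := mul_le_mul_of_nonneg_left hbound (by positivity)
    _ = 57600 * P * sobolevConst L m ^ 2 * (M * (N + d * M)) * ((1 + ψ) ^ m * w) ^ 2 := by ring
    _ = _ := by rw [mul_inv_cancel₀ (by positivity), one_pow, mul_one]

lemma abs_dS_fNonlin_sub_le_sum (hk : k ≤ 2) (s : ℝ) (hψ : 0 < ψ) :
    |dS k F s ψ| ≤ 57600 * P * sobolevConst L m *
      ((N + d * M) * ∑ j : Fin 4, (|dS j Q s ψ| + |dS j R s ψ|)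
        + M * ∑ j : Fin 4, |dS j (fun s ψ => Q s ψ - R s ψ) s ψ|) := by
  have hA : 0 ≤ sobolevConst L m := Real.sqrt_nonneg _
  have hd := hω.diff_nonneg
  have hP : 0 ≤ P := (abs_nonneg _).trans (hqP 0 (by norm_num) 0)
  have hw : ((1 + ψ) ^ m)⁻¹ ≤ 1 := inv_le_one_of_one_le₀ (one_le_pow₀ (by linarith))
  set A := sobolevConst L m
  set H := ∑ j : Fin 4, (|dS j Q s ψ| + |dS j R s ψ|)
  set S := ∑ j : Fin 4, |dS j (fun s ψ => Q s ψ - R s ψ) s ψ|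
  have : 0 ≤ H := Finset.sum_nonneg fun j _ => by positivity
  have hS : 0 ≤ S := Finset.sum_nonneg fun j _ => abs_nonneg _
  have hAN : 0 ≤ A * N := mul_nonneg hA hN
  have hlow : ∀ i ≤ 1, ∀ s, PairBound (A * M) (A * (N + d * M)) (dS i Q s ψ) (dS i R s ψ) :=
    fun i hi s => (pairBound_dS_of_topXnormSq_le hω hL hQ hR hM hN hQM hRM hQRN hi s hψ).mono
      (mul_le_of_le_one_left (by positivity) hw) (mul_le_of_le_one_left (by positivity) hw)
  have hhigh : ∀ i ≤ k + 1, PairBound H (S + d * H) (dS i Q s ψ) (dS i R s ψ) := fun i hi => by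
    have hi4 : i < 4 := by omega
    have hHi : |dS i Q s ψ| + |dS i R s ψ| ≤ H := Finset.single_le_sum
      (f := fun j : Fin 4 => |dS j Q s ψ| + |dS j R s ψ|) (fun j _ => by positivity)
      (Finset.mem_univ ⟨i, hi4⟩)
    have hSi : |dS i (fun s ψ => Q s ψ - R s ψ) s ψ| ≤ S := Finset.single_le_sum
      (f := fun j : Fin 4 => |dS j (fun s ψ => Q s ψ - R s ψ) s ψ|) (fun j _ => abs_nonneg _)
      (Finset.mem_univ ⟨i, hi4⟩)
    rw [dS_sub hQ.smooth hR.smooth] at hSi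
    exact ⟨by linarith [abs_nonneg (dS i R s ψ)], by linarith [abs_nonneg (dS i Q s ψ)],
      hSi.trans (le_add_of_nonneg_right (by positivity))⟩
  calc |dS k F s ψ| ≤ 28800 * P * (A * (N + d * M) * H + A * M * (S + d * H)) :=
        abs_dS_le_of_eq_fNonlin_sub hq hqpos hqP hω₁ hω₂ hω hQ.smooth hR.smooth
          (fun s => hF s ψ hψ) hMP (by linarith) (by linarith) hlow hhigh hk
    _ ≤ 28800 * P * (2 * (A * ((N + d * M) * H + M * S))) := by
        gcongr
        have : 0 ≤ A * (N * H) := by positivity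
        have : 0 ≤ A * (M * S) := by positivity
        linarith
    _ = _ := by ring

lemma L2sq_wt_dS_fNonlin_sub_le (hFs : Smooth2 F) (hk : k ≤ 2) :
    MemWeightedL2 L m (dS k F) ∧ L2sq L (wt m (dS k F))
      ≤ (691200 * P * sobolevConst L m * (M * (N + d * M))) ^ 2 := by
  have hd := hω.diff_nonneg
  have hP : 0 ≤ P := (abs_nonneg _).trans (hqP 0 (by norm_num) 0)
  set c := 57600 * P * sobolevConst L m
  have hc : 0 ≤ c := mul_nonneg (by positivity) (Real.sqrt_nonneg _)
  have hE : |c * (N + d * M) * M| ≤ c * (M * (N + d * M)) := by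
    rw [abs_of_nonneg (by positivity), mul_assoc, mul_comm M]
  have hE' : |c * M * N| ≤ c * (M * (N + d * M)) := by
    rw [abs_of_nonneg (by positivity), mul_assoc]
    gcongr
    linarith [mul_nonneg hd hM]
  have hle : ∀ s, ∀ ψ > 0, |dS k F s ψ| ≤ ∑ x : Fin 3 × Fin 4,
      |(![c * (N + d * M), c * (N + d * M), c * M] : Fin 3 → ℝ) x.1
        * dS x.2 ((![Q, R, fun s ψ => Q s ψ - R s ψ] : Fin 3 → ℝ → ℝ → ℝ) x.1) s ψ| :=
    fun s ψ hψ => (abs_dS_fNonlin_sub_le_sum hq hqpos hqP hω₁ hω₂ hω hL hQ hR hM hN hQM hRM hQRN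
      hMP hF hk s hψ).trans (le_of_eq (by
        have hc₁ : |c * (N + d * M)| = c * (N + d * M) := abs_of_nonneg (by positivity)
        have hc₂ : |c * M| = c * M := abs_of_nonneg (by positivity)
        simp only [Fintype.sum_prod_type, Fin.sum_univ_three, abs_mul _ (dS _ _ _ _),
          Matrix.cons_val, hc₁, hc₂, ← Finset.mul_sum, Finset.sum_add_distrib]
        ring))
  have hmem : ∀ x : Fin 3 × Fin 4,
      MemWeightedL2 L m (dS x.2 ((![Q, R, fun s ψ => Q s ψ - R s ψ] : Fin 3 → _) x.1)) ∧
      L2sq L (wt m (dS x.2 ((![Q, R, fun s ψ => Q s ψ - R s ψ] : Fin 3 → _) x.1)))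
        ≤ (![M, M, N] : Fin 3 → ℝ) x.1 ^ 2 := fun ⟨i, j⟩ => by
    have hj : (j : ℕ) ≤ 2 + 1 := by omega
    fin_cases i
    · exact ⟨hQ.memWeightedL2_dS hj, (L2sq_wt_dS_le_topXnormSq hj).trans hQM⟩
    · exact ⟨hR.memWeightedL2_dS hj, (L2sq_wt_dS_le_topXnormSq hj).trans hRM⟩
    · exact ⟨(hQ.sub hR).memWeightedL2_dS hj, (L2sq_wt_dS_le_topXnormSq hj).trans hQRN⟩
  obtain ⟨hmem, hbound⟩ := L2sq_wt_le_of_abs_le_sum (E := c * (M * (N + d * M)))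
    (hFs.dS k).continuous hmem
    (fun ⟨i, _⟩ => by fin_cases i; exacts [hE, hE, hE']) hle
  refine ⟨hmem, hbound.trans (le_of_eq ?_)⟩
  rw [Fintype.card_prod, Fintype.card_fin, Fintype.card_fin]
  push_cast
  ring

end Pointwise

end Nonlinearity

/-! ### Boundary lift and frozen coefficients -/

section BoundaryLift

variable {L P : ℝ} {k m : ℕ} {a : ℝ → ℝ}

/-- The extension `a(s) e^{-ψ}` of the boundary datum `a` to the half strip. -/
noncomputable def expLift (a : ℝ → ℝ) : ℝ → ℝ → ℝ :=
  fun s ψ => Real.exp (-ψ) * a s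

lemma pow_mul_exp_neg_le (n : ℕ) {ψ : ℝ} (hψ : 0 ≤ ψ) :
    (1 + ψ) ^ n * Real.exp (-ψ) ≤ n.factorial * Real.exp 1 := by
  have hpow := Real.pow_div_factorial_le_exp (1 + ψ) (by linarith) n
  rw [div_le_iff₀ (by positivity), Real.exp_add] at hpow
  calc (1 + ψ) ^ n * Real.exp (-ψ)
      ≤ Real.exp 1 * Real.exp ψ * n.factorial * Real.exp (-ψ) := by gcongr
    _ = n.factorial * Real.exp 1 * (Real.exp ψ * Real.exp (-ψ)) := by ring
    _ = n.factorial * Real.exp 1 := by rw [← Real.exp_add, add_neg_cancel, Real.exp_zero, mul_one]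

lemma smooth2_expLift (ha : ContDiff ℝ (⊤ : ℕ∞) a) : Smooth2 (expLift a) :=
  (smooth2_of_right (Real.contDiff_exp.comp contDiff_neg)).mul (smooth2_of_left ha)

lemma dS_expLift (a : ℝ → ℝ) (k : ℕ) : dS k (expLift a) = expLift (iteratedDeriv k a) := by
  funext s ψ
  exact iteratedDeriv_const_mul_field (Real.exp (-ψ)) a

lemma dPsi_one_expLift (a : ℝ → ℝ) : dPsi 1 (expLift a) = expLift (fun s => -a s) := by
  funext s ψ
  have hexp : HasDerivAt (fun ψ => Real.exp (-ψ) * a s) (Real.exp (-ψ) * -1 * a s) ψ :=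
    ((hasDerivAt_neg ψ).exp).mul_const (a s)
  rw [dPsi_one_apply]
  exact hexp.deriv.trans (by rw [expLift]; ring)

lemma dPsi_two_expLift (a : ℝ → ℝ) : dPsi 2 (expLift a) = expLift a := by
  rw [dPsi_succ, dPsi_one_expLift, dPsi_one_expLift]
  simp only [neg_neg]

lemma pow_mul_abs_expLift_le (haP : ∀ s, |a s| ≤ P) (n : ℕ) (s : ℝ) {ψ : ℝ} (hψ : 0 ≤ ψ) :
    (1 + ψ) ^ n * |expLift a s ψ| ≤ n.factorial * Real.exp 1 * P := by
  rw [expLift, abs_mul, abs_of_pos (Real.exp_pos _), ← mul_assoc]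
  exact mul_le_mul (pow_mul_exp_neg_le n hψ) (haP s) (abs_nonneg _) (by positivity)

lemma memWeightedL2_expLift (hL : 0 < L) (ha : ContDiff ℝ (⊤ : ℕ∞) a) (haP : ∀ s, |a s| ≤ P)
    (m : ℕ) : MemWeightedL2 L m (expLift a) ∧
      L2sq L (wt m (expLift a)) ≤ 2 * L * ((m + 1).factorial * Real.exp 1 * P) ^ 2 :=
  have hcont := (smooth2_expLift ha).continuous
  have hle := fun s ψ (hψ : 0 < ψ) => pow_mul_abs_expLift_le haP (m + 1) s hψ.le
  ⟨.of_pow_mul_abs_le hcont hle L, L2sq_wt_le_of_pow_mul_abs_le hcont hle hL⟩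

lemma memX_expLift (hL : 0 < L) (ha : ContDiff ℝ (⊤ : ℕ∞) a) (hper : Periodic a L)
    (haP : ∀ i ≤ k + 1, ∀ s, |iteratedDeriv i a s| ≤ P) (m : ℕ) :
    MemX L k m (expLift a) ∧ topXnormSq L k m (expLift a)
      ≤ 8 * (k + 1) * L * ((m + 1).factorial * Real.exp 1 * P) ^ 2 := by
  set c := 2 * L * ((m + 1).factorial * Real.exp 1 * P) ^ 2
  have hsmooth : ∀ i, ContDiff ℝ (⊤ : ℕ∞) (iteratedDeriv i a) := fun i => by
    rw [iteratedDeriv_eq_iterate]; exact ha.iterate_deriv i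
  have hlift : ∀ i ≤ k + 1, MemWeightedL2 L m (expLift (iteratedDeriv i a)) ∧
      L2sq L (wt m (expLift (iteratedDeriv i a))) ≤ c := fun i hi =>
    memWeightedL2_expLift hL (hsmooth i) (haP i hi) m
  have hlift_neg : ∀ i ≤ k + 1, MemWeightedL2 L m (expLift fun s => -iteratedDeriv i a s) ∧
      L2sq L (wt m (expLift fun s => -iteratedDeriv i a s)) ≤ c := fun i hi =>
    memWeightedL2_expLift hL (hsmooth i).neg (fun s => by rw [abs_neg]; exact haP i hi s) m
  have hperiodic : PeriodicS L (expLift a) := fun ψ s => by simp only [expLift, hper s]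
  refine ⟨⟨hperiodic, fun j hj => ?_⟩, ?_⟩
  · have hsm := (smooth2_expLift ha).dS j
    refine ⟨hsm, ?_, ?_, ?_, ?_⟩
    · rw [dS_expLift]; exact (hlift j (by omega)).1.finite
    · rw [← dS_succ, dS_expLift]; exact (hlift (j + 1) (by omega)).1.finite
    · rw [dS_expLift, dPsi_one_expLift]; exact (hlift_neg j (by omega)).1.finite
    · rw [dS_expLift, dPsi_two_expLift]; exact (hlift j (by omega)).1.finite
  · calc topXnormSq L k m (expLift a) ≤ ∑ _j ∈ Finset.range (k + 1), 4 * c := by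
          refine Finset.sum_le_sum fun j hj => ?_
          have hjk := Finset.mem_range.1 hj
          rw [parabolicNormSq, ← dS_succ, dS_expLift, dS_expLift, dPsi_one_expLift,
            dPsi_two_expLift]
          linarith [(hlift j (by omega)).2, (hlift (j + 1) (by omega)).2,
            (hlift_neg j (by omega)).2]
      _ = 8 * (k + 1) * L * ((m + 1).factorial * Real.exp 1 * P) ^ 2 := by
          rw [Finset.sum_const, Finset.card_range, nsmul_eq_mul]
          push_cast
          ring

end BoundaryLift

lemma MemX.L2sq_wt_dS_left_mul_dPsi_two_le {L P T : ℝ} {j k m : ℕ} {α : ℝ → ℝ} {V : ℝ → ℝ → ℝ}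
    (hV : MemX L k m V) (hT : 0 ≤ T) (hVT : topXnormSq L k m V ≤ T ^ 2)
    (hα : ContDiff ℝ (⊤ : ℕ∞) α) (hαP : ∀ i ≤ k, ∀ s, |iteratedDeriv i α s| ≤ P) (hj : j ≤ k) :
    MemWeightedL2 L m (dS j fun s ψ => α s * dPsi 2 V s ψ) ∧
      L2sq L (wt m (dS j fun s ψ => α s * dPsi 2 V s ψ)) ≤ ((k + 1) * (2 ^ k * P * T)) ^ 2 := by
  have hP : 0 ≤ P := (abs_nonneg _).trans (hαP 0 k.zero_le 0)
  have hmem : ∀ i : Fin (j + 1), MemWeightedL2 L m (dPsi 2 (dS i V)) ∧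
      L2sq L (wt m (dPsi 2 (dS i V))) ≤ T ^ 2 := fun i =>
    have hi : (i : ℕ) ≤ k := by omega
    ⟨(hV.memParabolic i hi).mem_dPsi_two, (L2sq_wt_dPsi_two_le_parabolicNormSq L m _).trans
      ((parabolicNormSq_le_topXnormSq hi).trans hVT)⟩
  have hle : ∀ s, ∀ ψ > 0, |dS j (fun s ψ => α s * dPsi 2 V s ψ) s ψ|
      ≤ ∑ i : Fin (j + 1), |2 ^ k * P * dPsi 2 (dS i V) s ψ| := fun s ψ _ => by
    rw [dS_left_mul hα (hV.smooth.dPsi 2), Finset.sum_range]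
    refine (Finset.abs_sum_le_sum_abs _ _).trans (Finset.sum_le_sum fun i _ => ?_)
    have hchoose : (j.choose i : ℝ) ≤ 2 ^ k :=
      mod_cast (Nat.choose_le_two_pow j i).trans (Nat.pow_le_pow_right two_pos hj)
    rw [dS_dPsi hV.smooth, abs_mul, abs_mul, Nat.abs_cast, abs_mul,
      abs_of_nonneg (by positivity : 0 ≤ 2 ^ k * P)]
    gcongr
    exact hαP _ ((Nat.sub_le _ _).trans hj) s
  obtain ⟨hmemj, hbound⟩ := L2sq_wt_le_of_abs_le_sum (E := 2 ^ k * P * T)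
    (((smooth2_of_left hα).mul (hV.smooth.dPsi 2)).dS j).continuous hmem
    (fun _ => (abs_of_nonneg (by positivity)).le) hle
  refine ⟨hmemj, hbound.trans ?_⟩
  rw [Fintype.card_fin]
  push_cast
  gcongr

/-! ### Stability of the linear problem -/

section LinearStability

variable {L P A ω₁ ω₂ : ℝ} {j k m : ℕ} {q : ℝ → ℝ} {U V B : ℝ → ℝ → ℝ}

lemma dS_heatOp_const_mul {h : ℝ → ℝ → ℝ} (hq : ContDiff ℝ (⊤ : ℕ∞) q) (hh : Smooth2 h)
    (ω : ℝ) (j : ℕ) (s ψ : ℝ) :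
    dS j (heatOp (fun s => ω * q s) h) s ψ
      = dS (j + 1) h s ψ - ω * dS j (fun s ψ => q s * dPsi 2 h s ψ) s ψ := by
  have hα : ContDiff ℝ (⊤ : ℕ∞) fun s => ω * q s := contDiff_const.mul hq
  have hsub := congrFun₂ (dS_sub (hh.dS 1) ((smooth2_of_left hα).mul (hh.dPsi 2)) j) s ψ
  rw [dS_dS_one] at hsub
  refine hsub.trans (congrArg _ ?_)
  simp only [mul_assoc]
  exact iteratedDeriv_const_mul_field ω _

lemma dS_heatOp_sub_sub (hq : ContDiff ℝ (⊤ : ℕ∞) q) (hU : Smooth2 U) (hV : Smooth2 V)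
    (hB : Smooth2 B) (j : ℕ) (s ψ : ℝ) :
    dS j (heatOp (fun s => ω₁ * q s) fun s ψ => U s ψ - V s ψ - B s ψ) s ψ
      = dS j (fun s ψ => heatOp (fun s => ω₁ * q s) U s ψ - heatOp (fun s => ω₂ * q s) V s ψ) s ψ
        + (ω₁ - ω₂) * dS j (fun s ψ => q s * dPsi 2 V s ψ) s ψ - dS (j + 1) B s ψ
        + ω₁ * dS j (fun s ψ => q s * dPsi 2 B s ψ) s ψ := by
  have hdiff : dS j (fun s ψ => q s * dPsi 2 (fun s ψ => U s ψ - V s ψ - B s ψ) s ψ) s ψ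
      = dS j (fun s ψ => q s * dPsi 2 U s ψ) s ψ - dS j (fun s ψ => q s * dPsi 2 V s ψ) s ψ
        - dS j (fun s ψ => q s * dPsi 2 B s ψ) s ψ := by
    have hq' := fun {h} (hh : Smooth2 h) => (smooth2_of_left hq).mul (hh.dPsi 2)
    rw [dPsi_sub (hU.sub hV) hB, dPsi_sub hU hV]
    simp only [mul_sub]
    rw [dS_sub ((hq' hU).sub (hq' hV)) (hq' hB), dS_sub (hq' hU) (hq' hV)]
  have hα : ∀ ω : ℝ, ContDiff ℝ (⊤ : ℕ∞) fun s => ω * q s := fun ω => contDiff_const.mul hq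
  rw [dS_sub (hU.heatOp (hα ω₁)) (hV.heatOp (hα ω₂)),
    dS_heatOp_const_mul hq ((hU.sub hV).sub hB), hdiff, dS_sub (hU.sub hV) hB, dS_sub hU hV]
  simp only [dS_heatOp_const_mul hq hU, dS_heatOp_const_mul hq hV]
  ring

lemma zeroMode_sub_sub (hω₁ : ω₁ ≠ 0) (hq : Continuous q) (hU : Smooth2 U) (hV : Smooth2 V)
    (hB : Smooth2 B) (s ψ : ℝ) :
    zeroMode L q (fun s ψ => U s ψ - V s ψ - B s ψ) s ψ
      = ω₁⁻¹ * (periodIntegral L (fun s ψ => ω₁ * q s * U s ψ) ψ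
          - periodIntegral L (fun s ψ => ω₂ * q s * V s ψ) ψ)
        + ω₁⁻¹ * (ω₂ - ω₁) * zeroMode L q V s ψ - zeroMode L q B s ψ := by
  have hint : ∀ {h : ℝ → ℝ → ℝ}, Smooth2 h →
      IntervalIntegrable (fun s => q s * h s ψ) volume 0 L := fun hh =>
    (hq.mul (hh.continuous_left ψ)).intervalIntegrable _ _
  have hmul : ∀ (ω : ℝ) (h : ℝ → ℝ → ℝ),
      periodIntegral L (fun s ψ => ω * q s * h s ψ) ψ = ω * zeroMode L q h s ψ := fun ω h => by
    simp only [zeroMode, periodIntegral, mul_assoc, intervalIntegral.integral_const_mul]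
  rw [hmul, hmul]
  simp only [zeroMode, periodIntegral, mul_sub]
  rw [intervalIntegral.integral_sub ((hint hU).sub (hint hV)) (hint hB),
    intervalIntegral.integral_sub (hint hU) (hint hV)]
  field_simp
  ring

lemma L2sq_wt_dS_heatOp_sub_sub_le (hq : ContDiff ℝ (⊤ : ℕ∞) q)
    (hqP : ∀ i ≤ k, ∀ s, |iteratedDeriv i q s| ≤ P) (hω₁ : |ω₁| ≤ 2) (hU : Smooth2 U)
    (hV : MemX L k m V) (hB : MemX L k m B) {T : ℝ} (hT : 0 ≤ T)
    (hVT : topXnormSq L k m V ≤ T ^ 2) (hωT : |ω₁ - ω₂| * T ≤ A) (hA : 0 ≤ A)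
    (hBA : topXnormSq L k m B ≤ A ^ 2) (hj : j ≤ k)
    (hF : MemWeightedL2 L m (dS j fun s ψ =>
        heatOp (fun s => ω₁ * q s) U s ψ - heatOp (fun s => ω₂ * q s) V s ψ) ∧
      L2sq L (wt m (dS j fun s ψ =>
        heatOp (fun s => ω₁ * q s) U s ψ - heatOp (fun s => ω₂ * q s) V s ψ)) ≤ A ^ 2) :
    MemWeightedL2 L m
        (dS j (heatOp (fun s => ω₁ * q s) fun s ψ => U s ψ - V s ψ - B s ψ)) ∧
      L2sq L (wt m (dS j (heatOp (fun s => ω₁ * q s) fun s ψ => U s ψ - V s ψ - B s ψ)))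
        ≤ (4 * ((1 + 2 * ((k + 1) * (2 ^ k * P))) * A)) ^ 2 := by
  have hP : 0 ≤ P := (abs_nonneg _).trans (hqP 0 k.zero_le 0)
  set c := (k + 1) * (2 ^ k * P) with hc
  have hcA : 0 ≤ c * A := by positivity
  let e : Fin 4 → ℝ := ![1, ω₁ - ω₂, 1, ω₁]
  let τ : Fin 4 → ℝ := ![A, c * T, A, c * A]
  let w : Fin 4 → ℝ → ℝ → ℝ :=
    ![dS j (fun s ψ => heatOp (fun s => ω₁ * q s) U s ψ - heatOp (fun s => ω₂ * q s) V s ψ),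
      dS j (fun s ψ => q s * dPsi 2 V s ψ), dS (j + 1) B, dS j (fun s ψ => q s * dPsi 2 B s ψ)]
  have hw : ∀ i, MemWeightedL2 L m (w i) ∧ L2sq L (wt m (w i)) ≤ τ i ^ 2 := fun i => by
    have hVj := hV.L2sq_wt_dS_left_mul_dPsi_two_le hT hVT hq hqP hj
    have hBj := hB.L2sq_wt_dS_left_mul_dPsi_two_le hA hBA hq hqP hj
    rw [← mul_assoc (k + 1 : ℝ), ← hc] at hVj hBj
    have hj' : j + 1 ≤ k + 1 := Nat.succ_le_succ hj
    fin_cases i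
    exacts [hF, hVj, ⟨hB.memWeightedL2_dS hj', (L2sq_wt_dS_le_topXnormSq hj').trans hBA⟩, hBj]
  have heτ : ∀ i, |e i * τ i| ≤ (1 + 2 * c) * A := fun i => by
    have hA' : |1 * A| ≤ (1 + 2 * c) * A := by rw [one_mul, abs_of_nonneg hA]; linarith
    have hV' : |(ω₁ - ω₂) * (c * T)| ≤ (1 + 2 * c) * A := by
      have := mul_le_mul_of_nonneg_left hωT (by positivity : 0 ≤ c)
      rw [abs_mul, abs_of_nonneg (by positivity : 0 ≤ c * T)]
      linarith
    have hB' : |ω₁ * (c * A)| ≤ (1 + 2 * c) * A := by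
      have := mul_le_mul_of_nonneg_right hω₁ hcA
      rw [abs_mul, abs_of_nonneg hcA]
      linarith
    fin_cases i
    exacts [hA', hV', hA', hB']
  have hle : ∀ s, ∀ ψ > 0,
      |dS j (heatOp (fun s => ω₁ * q s) fun s ψ => U s ψ - V s ψ - B s ψ) s ψ|
        ≤ ∑ i, |e i * w i s ψ| := fun s ψ _ => by
    rw [dS_heatOp_sub_sub (ω₂ := ω₂) hq hU hV.smooth hB.smooth, Fin.sum_univ_four]
    simp only [e, w, Matrix.cons_val, one_mul]
    refine (abs_add_le _ _).trans (add_le_add ?_ le_rfl)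
    exact (abs_sub _ _).trans (add_le_add (abs_add_le _ _) le_rfl)
  have hα : ContDiff ℝ (⊤ : ℕ∞) fun s => ω₁ * q s := contDiff_const.mul hq
  have hsmooth := ((hU.sub hV.smooth).sub hB.smooth).heatOp hα
  simpa using L2sq_wt_le_of_abs_le_sum (hsmooth.dS j).continuous hw heτ hle

lemma MemX.L2sq_wt_zeroMode_le_sq {h : ℝ → ℝ → ℝ} {N : ℝ} (hh : MemX L k m h) (hL : 0 < L)
    (hq : ContDiff ℝ (⊤ : ℕ∞) q) (hqP : ∀ s, |q s| ≤ P) (hle : topXnormSq L k m h ≤ N ^ 2) :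
    MemWeightedL2 L m (zeroMode L q h) ∧ L2sq L (wt m (zeroMode L q h)) ≤ (L * P * N) ^ 2 := by
  have hmem : MemWeightedL2 L m h := by
    simpa only [dS_zero] using hh.memWeightedL2_dS (k + 1).zero_le
  have hmean : L2sq L (wt m h) ≤ N ^ 2 := by
    simpa only [dS_zero] using
      (L2sq_wt_dS_le_topXnormSq (j := 0) (h := h) (k + 1).zero_le).trans hle
  refine ⟨hmem.zeroMode hL hq hqP hh.smooth, (hmem.L2sq_zeroMode_le hL hq hqP hh.smooth).trans ?_⟩
  rw [mul_pow _ N]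
  gcongr

lemma L2sq_wt_zeroMode_sub_sub_le (hL : 0 < L) (hq : ContDiff ℝ (⊤ : ℕ∞) q)
    (hqP : ∀ s, |q s| ≤ P) (hω₁ : 1 / 2 ≤ ω₁) (hU : Smooth2 U) (hV : MemX L k m V)
    (hB : MemX L k m B) {T : ℝ} (hT : 0 ≤ T) (hVT : topXnormSq L k m V ≤ T ^ 2)
    (hωT : |ω₁ - ω₂| * T ≤ A) (hA : 0 ≤ A) (hBA : topXnormSq L k m B ≤ A ^ 2)
    (hD : MemWeightedL2 L m (fun _ ψ => periodIntegral L (fun s ψ => ω₁ * q s * U s ψ) ψ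
          - periodIntegral L (fun s ψ => ω₂ * q s * V s ψ) ψ) ∧
      L2sq L (wt m fun _ ψ => periodIntegral L (fun s ψ => ω₁ * q s * U s ψ) ψ
          - periodIntegral L (fun s ψ => ω₂ * q s * V s ψ) ψ) ≤ A ^ 2) :
    MemWeightedL2 L m (zeroMode L q fun s ψ => U s ψ - V s ψ - B s ψ) ∧
      L2sq L (wt m (zeroMode L q fun s ψ => U s ψ - V s ψ - B s ψ))
        ≤ (3 * (2 * (1 + L * P) * A)) ^ 2 := by
  have hLP : 0 ≤ L * P := mul_nonneg hL.le ((abs_nonneg _).trans (hqP 0))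
  have hLPA : 0 ≤ L * P * A := by positivity
  have hinv : |ω₁⁻¹| ≤ 2 := by
    rw [abs_of_pos (inv_pos.2 (by linarith)), inv_le_comm₀ (by linarith) two_pos]
    linarith
  let e : Fin 3 → ℝ := ![ω₁⁻¹, ω₁⁻¹ * (ω₂ - ω₁), 1]
  let τ : Fin 3 → ℝ := ![A, L * P * T, L * P * A]
  let w : Fin 3 → ℝ → ℝ → ℝ :=
    ![fun _ ψ => periodIntegral L (fun s ψ => ω₁ * q s * U s ψ) ψ
        - periodIntegral L (fun s ψ => ω₂ * q s * V s ψ) ψ, zeroMode L q V, zeroMode L q B]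
  have hw : ∀ i, MemWeightedL2 L m (w i) ∧ L2sq L (wt m (w i)) ≤ τ i ^ 2 := fun i => by
    fin_cases i
    exacts [hD, hV.L2sq_wt_zeroMode_le_sq hL hq hqP hVT, hB.L2sq_wt_zeroMode_le_sq hL hq hqP hBA]
  have heτ : ∀ i, |e i * τ i| ≤ 2 * (1 + L * P) * A := fun i => by
    have hD' : |ω₁⁻¹ * A| ≤ 2 * (1 + L * P) * A := by
      rw [abs_mul, abs_of_nonneg hA]
      linarith [mul_le_mul_of_nonneg_right hinv hA]
    have hV' : |ω₁⁻¹ * (ω₂ - ω₁) * (L * P * T)| ≤ 2 * (1 + L * P) * A := by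
      have hωA : |ω₁⁻¹| * (|ω₁ - ω₂| * T) ≤ 2 * A := by gcongr
      rw [abs_mul, abs_mul, abs_of_nonneg (by positivity : 0 ≤ L * P * T), abs_sub_comm ω₂]
      linarith [mul_le_mul_of_nonneg_left hωA hLP]
    have hB' : |1 * (L * P * A)| ≤ 2 * (1 + L * P) * A := by
      rw [one_mul, abs_of_nonneg hLPA]
      linarith
    fin_cases i
    exacts [hD', hV', hB']
  have hle : ∀ s, ∀ ψ > 0, |zeroMode L q (fun s ψ => U s ψ - V s ψ - B s ψ) s ψ|
      ≤ ∑ i, |e i * w i s ψ| := fun s ψ _ => by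
    rw [zeroMode_sub_sub (ω₂ := ω₂) (by linarith : ω₁ ≠ 0) hq.continuous hU hV.smooth hB.smooth,
      Fin.sum_univ_three]
    simp only [e, w, Matrix.cons_val, one_mul]
    exact (abs_sub _ _).trans (add_le_add (abs_add_le _ _) le_rfl)
  have hcont : Continuous fun p : ℝ × ℝ =>
      zeroMode L q (fun s ψ => U s ψ - V s ψ - B s ψ) p.1 p.2 :=
    (continuous_periodIntegral ((smooth2_of_left hq).mul ((hU.sub hV.smooth).sub hB.smooth))
      L).comp continuous_snd
  simpa using L2sq_wt_le_of_abs_le_sum hcont hw heτ hle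

/-- `V` solves an equation with the coefficient `ω₂ q` instead of `ω₁ q`; the term
`(ω₁ - ω₂) q ∂_ψ² V` this produces is part of the forcing of the equation for `U - V`. -/
lemma exists_topXnormSq_sub_le (k m : ℕ) (hL : 0 < L) (hq : ContDiff ℝ (⊤ : ℕ∞) q)
    (hper : Periodic q L) (hqpos : ∀ s, 0 < q s) :
    ∃ C : ℝ, 0 < C ∧ ∀ {ω₁ ω₂ A T : ℝ} {U V B : ℝ → ℝ → ℝ}, 1 / 2 ≤ ω₁ → ω₁ ≤ 2 →
      MemX L k m U → MemX L k m V → MemX L k m B → (∀ s, U s 0 - V s 0 = B s 0) →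
      0 ≤ A → topXnormSq L k m B ≤ A ^ 2 → 0 ≤ T → topXnormSq L k m V ≤ T ^ 2 →
      |ω₁ - ω₂| * T ≤ A →
      (∀ j ≤ k, MemWeightedL2 L m (dS j fun s ψ =>
          heatOp (fun s => ω₁ * q s) U s ψ - heatOp (fun s => ω₂ * q s) V s ψ) ∧
        L2sq L (wt m (dS j fun s ψ =>
          heatOp (fun s => ω₁ * q s) U s ψ - heatOp (fun s => ω₂ * q s) V s ψ)) ≤ A ^ 2) →
      (MemWeightedL2 L m (fun _ ψ => periodIntegral L (fun s ψ => ω₁ * q s * U s ψ) ψ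
          - periodIntegral L (fun s ψ => ω₂ * q s * V s ψ) ψ) ∧
        L2sq L (wt m fun _ ψ => periodIntegral L (fun s ψ => ω₁ * q s * U s ψ) ψ
          - periodIntegral L (fun s ψ => ω₂ * q s * V s ψ) ψ) ≤ A ^ 2) →
      topXnormSq L k m (fun s ψ => U s ψ - V s ψ) ≤ C * A ^ 2 := by
  obtain ⟨C, hC, hlin⟩ := exists_topXnormSq_le_zeroMode k m hL hq hper hqpos
  obtain ⟨P, hP1, hqP⟩ := exists_abs_iteratedDeriv_le hL.ne' hq hper k
  set cF := 4 * (1 + 2 * ((k + 1) * (2 ^ k * P)))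
  set cZ := 3 * (2 * (1 + L * P))
  refine ⟨2 * (C * ((k + 1) * cF ^ 2 + cZ ^ 2) + 1), by positivity, ?_⟩
  intro ω₁ ω₂ A T U V B hω₁ hω₁' hU hV hB hbdry hA hBA hT hVT hωT hF hD
  have hω₁abs : |ω₁| ≤ 2 := by rwa [abs_of_nonneg (by linarith)]
  have hsource := fun j hj => L2sq_wt_dS_heatOp_sub_sub_le (j := j) hq hqP hω₁abs hU.smooth hV hB
    hT hVT hωT hA hBA hj (hF j hj)
  obtain ⟨hzmem, hzero⟩ := L2sq_wt_zeroMode_sub_sub_le hL hq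
    (fun s => by simpa only [iteratedDeriv_zero] using hqP 0 k.zero_le s) hω₁ hU.smooth hV hB hT
    hVT hωT hA hBA hD
  have hW := hlin hω₁ hω₁' ((hU.sub hV).sub hB) (fun s => sub_eq_zero.2 (hbdry s))
    (fun j hj => (hsource j hj).1) hzmem
  have hsum := Finset.sum_le_card_nsmul (Finset.range (k + 1)) _ _ fun j hj =>
    (hsource j (Nat.le_of_lt_succ (Finset.mem_range.1 hj))).2
  rw [Finset.card_range, nsmul_eq_mul] at hsum
  push_cast at hsum
  calc topXnormSq L k m (fun s ψ => U s ψ - V s ψ)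
      ≤ 2 * topXnormSq L k m (fun s ψ => U s ψ - V s ψ - B s ψ) + 2 * topXnormSq L k m B :=
        (hU.sub hV).topXnormSq_le_two_mul_sub hB
    _ ≤ 2 * (C * ((k + 1) * (cF * A) ^ 2 + (cZ * A) ^ 2)) + 2 * A ^ 2 := by
        gcongr
        refine hW.trans (mul_le_mul_of_nonneg_left (add_le_add (hsum.trans (le_of_eq ?_))
          (hzero.trans (le_of_eq ?_))) hC.le) <;> ring
    _ = _ := by ring

end LinearStability

/-! ### Contraction for consecutive iterates -/

section Contraction

variable {L : ℝ} {k m : ℕ}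

lemma memWeightedL2_periodIntegral_sub {K P : ℝ} {α β : ℝ → ℝ} {U V : ℝ → ℝ → ℝ} (hL : 0 < L)
    (hm : 3 ≤ m) (hk : 0 < k) (hα : ContDiff ℝ (⊤ : ℕ∞) α) (hβ : ContDiff ℝ (⊤ : ℕ∞) β)
    (hαP : ∀ s, |α s| ≤ P) (hβP : ∀ s, |β s| ≤ P) (hU : MemX L k m U) (hV : MemX L k m V)
    (hK : ∀ s, ∀ ψ > 0, (1 + ψ) ^ (2 * m) * |heatOp α U s ψ - heatOp β V s ψ| ≤ K) :
    MemWeightedL2 L m (fun _ ψ => periodIntegral L (fun s ψ => α s * U s ψ) ψ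
          - periodIntegral L (fun s ψ => β s * V s ψ) ψ) ∧
      L2sq L (wt m fun _ ψ => periodIntegral L (fun s ψ => α s * U s ψ) ψ
          - periodIntegral L (fun s ψ => β s * V s ψ) ψ) ≤ 2 * L * (L * K) ^ 2 := by
  have hcont : Continuous fun p : ℝ × ℝ => periodIntegral L (fun s ψ => α s * U s ψ) p.2
      - periodIntegral L (fun s ψ => β s * V s ψ) p.2 :=
    ((continuous_periodIntegral ((smooth2_of_left hα).mul hU.smooth) L).sub
      (continuous_periodIntegral ((smooth2_of_left hβ).mul hV.smooth) L)).comp continuous_snd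
  have hle := fun (_ : ℝ) (ψ : ℝ) (hψ : ψ > 0) =>
    pow_mul_abs_periodIntegral_sub_le hL hm hk hα hβ hαP hβP hU hV hK (le_of_lt hψ)
  exact ⟨MemWeightedL2.of_pow_mul_abs_le hcont hle L, L2sq_wt_le_of_pow_mul_abs_le hcont hle hL⟩

lemma exists_topXnormSq_expLift_le (k m : ℕ) {a : ℝ → ℝ} (hL : 0 < L)
    (ha : ContDiff ℝ (⊤ : ℕ∞) a) (hper : Periodic a L) :
    ∃ C : ℝ, 0 ≤ C ∧ ∀ β : ℝ, MemX L k m (expLift fun s => β * a s) ∧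
      topXnormSq L k m (expLift fun s => β * a s) ≤ (C * |β|) ^ 2 := by
  obtain ⟨P, hP1, haP⟩ := exists_abs_iteratedDeriv_le hL.ne' ha hper (k + 1)
  refine ⟨8 * (k + 1) * (L + 1) * ((m + 1).factorial * Real.exp 1 * P), by positivity,
    fun β => ?_⟩
  have hβP : ∀ i ≤ k + 1, ∀ s, |iteratedDeriv i (fun s => β * a s) s| ≤ |β| * P :=
    fun i hi s => by
      rw [iteratedDeriv_const_mul_field, abs_mul]
      exact mul_le_mul_of_nonneg_left (haP i hi s) (abs_nonneg β)
  obtain ⟨hmem, hle⟩ := memX_expLift (a := fun s => β * a s) hL (contDiff_const.mul ha)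
    (fun s => by simp only [hper s]) hβP m
  have hconst : 8 * (k + 1) * L ≤ (8 * (k + 1) * (L + 1)) ^ 2 := by
    have hk : (0 : ℝ) ≤ k := k.cast_nonneg
    nlinarith [mul_nonneg hk hL.le, mul_nonneg hk (mul_nonneg hk hL.le)]
  refine ⟨hmem, hle.trans ?_⟩
  calc 8 * (k + 1) * L * ((m + 1).factorial * Real.exp 1 * (|β| * P)) ^ 2
      ≤ (8 * (k + 1) * (L + 1)) ^ 2 * ((m + 1).factorial * Real.exp 1 * (|β| * P)) ^ 2 := by
        gcongr
    _ = _ := by ring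

lemma exists_forcing_sub_le {q : ℝ → ℝ} (hm : 3 ≤ m) (hL : 0 < L)
    (hq : ContDiff ℝ (⊤ : ℕ∞) q) (hper : Periodic q L) (hqpos : ∀ s, 0 < q s) :
    ∃ C δ : ℝ, 0 < C ∧ 0 < δ ∧ ∀ {ω₁ ω₂ d M N : ℝ} {U V Z : ℝ → ℝ → ℝ},
      0 < ω₁ → ω₁ ≤ 2 → 0 < ω₂ → ω₂ ≤ 2 → PairBound 2 d (ω₁ ^ 2)⁻¹ (ω₂ ^ 2)⁻¹ →
      MemX L 2 m U → MemX L 2 m V → MemX L 2 m Z → 0 ≤ M → M ≤ δ → 0 ≤ N →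
      topXnormSq L 2 m V ≤ M ^ 2 → topXnormSq L 2 m Z ≤ M ^ 2 →
      topXnormSq L 2 m (fun s ψ => V s ψ - Z s ψ) ≤ N ^ 2 →
      (∀ s, ∀ ψ > 0, heatOp (fun s => ω₁ * q s) U s ψ = fNonlin q ω₁ V s ψ) →
      (∀ s, ∀ ψ > 0, heatOp (fun s => ω₂ * q s) V s ψ = fNonlin q ω₂ Z s ψ) →
      (∀ j ≤ 2, MemWeightedL2 L m (dS j fun s ψ =>
          heatOp (fun s => ω₁ * q s) U s ψ - heatOp (fun s => ω₂ * q s) V s ψ) ∧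
        L2sq L (wt m (dS j fun s ψ =>
          heatOp (fun s => ω₁ * q s) U s ψ - heatOp (fun s => ω₂ * q s) V s ψ))
            ≤ (C * (M * (N + d * M))) ^ 2) ∧
      (MemWeightedL2 L m (fun _ ψ => periodIntegral L (fun s ψ => ω₁ * q s * U s ψ) ψ
          - periodIntegral L (fun s ψ => ω₂ * q s * V s ψ) ψ) ∧
        L2sq L (wt m fun _ ψ => periodIntegral L (fun s ψ => ω₁ * q s * U s ψ) ψ
          - periodIntegral L (fun s ψ => ω₂ * q s * V s ψ) ψ)
            ≤ (C * (M * (N + d * M))) ^ 2) := by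
  obtain ⟨R, _, hqR⟩ := exists_abs_iteratedDeriv_le hL.ne' hq hper 0
  obtain ⟨P, hP1, hqP⟩ := exists_abs_iteratedDeriv_le (q := fun s => ((q s) ^ 2)⁻¹) hL.ne'
    ((hq.pow 2).inv fun s => (pow_pos (hqpos s) 2).ne') (fun s => by simp only [hper s]) 2
  set S := sobolevConst L m
  have hS : 0 ≤ S := Real.sqrt_nonneg _
  set cF := 691200 * P * S
  set cZ := (2 * L + 1) * (L * (57600 * P * S ^ 2))
  have hcF : 0 ≤ cF := by positivity
  have hcZ : 0 ≤ cZ := by positivity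
  refine ⟨cF + cZ + 1, (24 * P * S + 1)⁻¹, by positivity, by positivity, ?_⟩
  intro ω₁ ω₂ d M N U V Z hω₁ hω₁' hω₂ hω₂' hω hU hV hZ hM hMδ hN hVM hZM hVZ heqU heqV
  have hd : 0 ≤ d := hω.diff_nonneg
  have hMP : 24 * P * (S * M) ≤ 1 := by
    rw [← one_div, le_div_iff₀ (by positivity)] at hMδ
    linarith
  have hF : ∀ s, ∀ ψ > 0, heatOp (fun s => ω₁ * q s) U s ψ - heatOp (fun s => ω₂ * q s) V s ψ
      = fNonlin q ω₁ V s ψ - fNonlin q ω₂ Z s ψ := fun s ψ hψ => by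
    rw [heqU s ψ hψ, heqV s ψ hψ]
  have hα : ∀ ω : ℝ, ContDiff ℝ (⊤ : ℕ∞) fun s => ω * q s := fun ω => contDiff_const.mul hq
  have hαR : ∀ {ω : ℝ}, 0 < ω → ω ≤ 2 → ∀ s, |ω * q s| ≤ 2 * R := fun hω0 hω2 s => by
    rw [abs_mul, abs_of_pos hω0]
    exact mul_le_mul hω2 (by simpa using hqR 0 le_rfl s) (abs_nonneg _) zero_le_two
  constructor
  · intro j hj
    obtain ⟨hmem, hle⟩ := L2sq_wt_dS_fNonlin_sub_le hq hqpos hqP hω₁ hω₂ hω hL hV hZ hM hN hVM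
      hZM hVZ hMP hF ((hU.smooth.heatOp (hα ω₁)).sub (hV.smooth.heatOp (hα ω₂))) hj
    refine ⟨hmem, hle.trans (pow_le_pow_left₀ (by positivity) ?_ 2)⟩
    exact mul_le_mul_of_nonneg_right (by linarith) (by positivity)
  · obtain ⟨hmem, hle⟩ := memWeightedL2_periodIntegral_sub hL hm two_pos (hα ω₁) (hα ω₂)
      (hαR hω₁ hω₁') (hαR hω₂ hω₂') hU hV fun s ψ hψ => pow_mul_abs_fNonlin_sub_le hq hqpos hqP
        hω₁ hω₂ hω hL hV hZ hM hN hVM hZM hVZ hMP hF s hψ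
    have hL2 : 2 * L ≤ (2 * L + 1) ^ 2 := by nlinarith
    refine ⟨hmem, hle.trans ((mul_le_mul_of_nonneg_right hL2 (sq_nonneg _)).trans ?_)⟩
    rw [← mul_pow]
    refine pow_le_pow_left₀ (by positivity) ?_ 2
    calc (2 * L + 1) * (L * (57600 * P * S ^ 2 * (M * (N + d * M))))
        = cZ * (M * (N + d * M)) := by ring
      _ ≤ (cF + cZ + 1) * (M * (N + d * M)) :=
        mul_le_mul_of_nonneg_right (by linarith) (by positivity)

lemma exists_topXnormSq_iterate_sub_le {q a : ℝ → ℝ} (hm : 3 ≤ m) (hL : 0 < L)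
    (hq : ContDiff ℝ (⊤ : ℕ∞) q) (hqper : Periodic q L) (hqpos : ∀ s, 0 < q s)
    (ha : ContDiff ℝ (⊤ : ℕ∞) a) (haper : Periodic a L) :
    ∃ C δ : ℝ, 0 < C ∧ 0 < δ ∧ ∀ {ω₁ ω₂ d β M N : ℝ} {U V Z : ℝ → ℝ → ℝ},
      1 / 2 ≤ ω₁ → ω₁ ≤ 2 → 1 / 2 ≤ ω₂ → ω₂ ≤ 2 → PairBound 2 d (ω₁ ^ 2)⁻¹ (ω₂ ^ 2)⁻¹ →
      |ω₁ - ω₂| ≤ d → MemX L 2 m U → MemX L 2 m V → MemX L 2 m Z → 0 ≤ M → M ≤ δ → 0 ≤ N →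
      topXnormSq L 2 m V ≤ M ^ 2 → topXnormSq L 2 m Z ≤ M ^ 2 →
      topXnormSq L 2 m (fun s ψ => V s ψ - Z s ψ) ≤ N ^ 2 →
      (∀ s, ∀ ψ > 0, heatOp (fun s => ω₁ * q s) U s ψ = fNonlin q ω₁ V s ψ) →
      (∀ s, ∀ ψ > 0, heatOp (fun s => ω₂ * q s) V s ψ = fNonlin q ω₂ Z s ψ) →
      (∀ s, U s 0 - V s 0 = β * a s) →
      topXnormSq L 2 m (fun s ψ => U s ψ - V s ψ)
        ≤ (C * (M * (N + d * M) + d * M + |β|)) ^ 2 := by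
  obtain ⟨Clin, hClin, hlin⟩ := exists_topXnormSq_sub_le 2 m hL hq hqper hqpos
  obtain ⟨CB, hCB, hlift⟩ := exists_topXnormSq_expLift_le 2 m hL ha haper
  obtain ⟨CF, δ, hCF, hδ, hforcing⟩ := exists_forcing_sub_le hm hL hq hqper hqpos
  refine ⟨(Clin + 1) * (1 + CF + CB), δ, by positivity, hδ, ?_⟩
  intro ω₁ ω₂ d β M N U V Z hω₁ hω₁' hω₂ hω₂' hω hωd hU hV hZ hM hMδ hN hVM hZM hVZ heqU heqV
    hbdry
  have hd : 0 ≤ d := hω.diff_nonneg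
  have hdM : 0 ≤ d * M := by positivity
  have hNM : 0 ≤ M * (N + d * M) := by positivity
  set E := M * (N + d * M) + d * M + |β|
  have hE0 : 0 ≤ E := by positivity
  set A := (1 + CF + CB) * E with hA
  have hle_A : ∀ {c x : ℝ}, 0 ≤ c → c ≤ 1 + CF + CB → 0 ≤ x → x ≤ E → (c * x) ^ 2 ≤ A ^ 2 :=
    fun hc hcC hx hxE => by rw [hA]; gcongr
  obtain ⟨hF, hD⟩ := hforcing (by linarith) hω₁' (by linarith) hω₂' hω hU hV hZ hM hMδ hN hVM hZM
    hVZ heqU heqV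
  obtain ⟨hBmem, hB⟩ := hlift β
  have hFA : (CF * (M * (N + d * M))) ^ 2 ≤ A ^ 2 :=
    hle_A hCF.le (by linarith) hNM (by linarith [abs_nonneg β])
  have hBA : (CB * |β|) ^ 2 ≤ A ^ 2 := hle_A hCB (by linarith) (abs_nonneg β) (by linarith)
  have hωM : |ω₁ - ω₂| * M ≤ A := by
    have hωdM : |ω₁ - ω₂| * M ≤ d * M := mul_le_mul_of_nonneg_right hωd hM
    have hEA : 1 * E ≤ A := mul_le_mul_of_nonneg_right (by linarith) hE0
    linarith [abs_nonneg β]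
  have hbdry' : ∀ s, U s 0 - V s 0 = expLift (fun s => β * a s) s 0 := fun s => by
    rw [hbdry, expLift, neg_zero, Real.exp_zero, one_mul]
  calc topXnormSq L 2 m (fun s ψ => U s ψ - V s ψ) ≤ Clin * A ^ 2 :=
        hlin hω₁ hω₁' hU hV hBmem hbdry' (by positivity) (hB.trans hBA) hM hVM hωM
          (fun j hj => ⟨(hF j hj).1, (hF j hj).2.trans hFA⟩) ⟨hD.1, hD.2.trans hFA⟩
    _ ≤ (Clin + 1) ^ 2 * A ^ 2 := mul_le_mul_of_nonneg_right (by nlinarith) (sq_nonneg A)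
    _ = ((Clin + 1) * (1 + CF + CB) * E) ^ 2 := by ring

end Contraction

section Frequencies

variable {x y ω ω₁ ω₂ : ℝ}

lemma half_le_of_abs_sq_sub_one_le (hω : 0 < ω) (h : |ω ^ 2 - 1| ≤ 1 / 2) :
    1 / 2 ≤ ω ∧ ω ≤ 2 := by
  obtain ⟨hl, hr⟩ := abs_le.1 h
  constructor <;> nlinarith

lemma abs_sub_le_abs_sq_sub_sq (h₁ : 1 / 2 ≤ ω₁) (h₂ : 1 / 2 ≤ ω₂) :
    |ω₁ - ω₂| ≤ |ω₁ ^ 2 - ω₂ ^ 2| := by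
  rw [sq_sub_sq, abs_mul]
  exact le_mul_of_one_le_left (abs_nonneg _) (le_abs.2 (Or.inl (by linarith)))

lemma pairBound_inv_of_abs_sub_one_le (hx : |x - 1| ≤ 1 / 2) (hy : |y - 1| ≤ 1 / 2) :
    PairBound 2 (4 * |x - y|) x⁻¹ y⁻¹ := by
  have hhalf : ∀ {t : ℝ}, |t - 1| ≤ 1 / 2 → 1 / 2 ≤ t := fun ht => by linarith [(abs_le.1 ht).1]
  have habs : ∀ {t : ℝ}, |t - 1| ≤ 1 / 2 → |t⁻¹| ≤ 2 := fun {t} ht => by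
    rw [abs_of_pos (inv_pos.2 (by linarith [hhalf ht])),
      inv_le_comm₀ (by linarith [hhalf ht]) two_pos]
    linarith [hhalf ht]
  refine ⟨habs hx, habs hy, ?_⟩
  have hx0 : x ≠ 0 := by linarith [hhalf hx]
  have hy0 : y ≠ 0 := by linarith [hhalf hy]
  calc |x⁻¹ - y⁻¹| = |x⁻¹| * |y⁻¹| * |x - y| := by
        rw [inv_sub_inv hx0 hy0, abs_div, abs_mul, abs_inv, abs_inv, abs_sub_comm y]
        field_simp
    _ ≤ 2 * 2 * |x - y| := by gcongr; exacts [habs hx, habs hy]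
    _ = 4 * |x - y| := by ring

end Frequencies

lemma exists_Xnorm_iterate_sub_le {L : ℝ} {m : ℕ} {q a : ℝ → ℝ} (hm : 3 ≤ m) (hL : 0 < L)
    (hq : ContDiff ℝ (⊤ : ℕ∞) q) (hqper : Periodic q L) (hqpos : ∀ s, 0 < q s)
    (ha : ContDiff ℝ (⊤ : ℕ∞) a) (haper : Periodic a L) :
    ∃ C δ : ℝ, 0 < C ∧ 0 < δ ∧ ∀ {ω₁ ω₂ β M : ℝ} {U V Z : ℝ → ℝ → ℝ},
      0 < ω₁ → |ω₁ ^ 2 - 1| ≤ 1 / 2 → 0 < ω₂ → |ω₂ ^ 2 - 1| ≤ 1 / 2 →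
      MemX L 2 m U → MemX L 2 m V → MemX L 2 m Z → 0 ≤ M → M ≤ δ →
      Xnorm L 2 m V ≤ M → Xnorm L 2 m Z ≤ M →
      (∀ s, ∀ ψ > 0, heatOp (fun s => ω₁ * q s) U s ψ = fNonlin q ω₁ V s ψ) →
      (∀ s, ∀ ψ > 0, heatOp (fun s => ω₂ * q s) V s ψ = fNonlin q ω₂ Z s ψ) →
      (∀ s, U s 0 - V s 0 = β * a s) →
      Xnorm L 2 m (fun s ψ => U s ψ - V s ψ)
        ≤ C * (M * Xnorm L 2 m (fun s ψ => V s ψ - Z s ψ) + M * |ω₁ ^ 2 - ω₂ ^ 2| + |β|) := by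
  obtain ⟨C, δ, hC, hδ, hcontr⟩ := exists_topXnormSq_iterate_sub_le hm hL hq hqper hqpos ha haper
  refine ⟨8 * (m + 1) * C, min δ 1, by positivity, lt_min hδ one_pos, ?_⟩
  intro ω₁ ω₂ β M U V Z hω₁ hω₁' hω₂ hω₂' hU hV hZ hM hMδ hVM hZM heqU heqV hbdry
  obtain ⟨hMδ, hM1⟩ := le_min_iff.1 hMδ
  obtain ⟨hω₁l, hω₁r⟩ := half_le_of_abs_sq_sub_one_le hω₁ hω₁'
  obtain ⟨hω₂l, hω₂r⟩ := half_le_of_abs_sq_sub_one_le hω₂ hω₂'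
  have hωd : |ω₁ - ω₂| ≤ 4 * |ω₁ ^ 2 - ω₂ ^ 2| :=
    (abs_sub_le_abs_sq_sub_sq hω₁l hω₂l).trans (by linarith [abs_nonneg (ω₁ ^ 2 - ω₂ ^ 2)])
  have hsq : ∀ {h : ℝ → ℝ → ℝ}, Xnorm L 2 m h ≤ M → topXnormSq L 2 m h ≤ M ^ 2 := fun hh =>
    (topXnormSq_le_Xnorm_sq L 2 m _).trans (pow_le_pow_left₀ (Real.sqrt_nonneg _) hh 2)
  set N := Xnorm L 2 m fun s ψ => V s ψ - Z s ψ
  set D := |ω₁ ^ 2 - ω₂ ^ 2|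
  have hN : 0 ≤ N := Real.sqrt_nonneg _
  have hD : 0 ≤ D := abs_nonneg _
  have hDM : 0 ≤ D * M := mul_nonneg hD hM
  have htop := hcontr hω₁l hω₁r hω₂l hω₂r (pairBound_inv_of_abs_sub_one_le hω₁' hω₂') hωd hU hV hZ
    hM hMδ hN (hsq hVM) (hsq hZM) (topXnormSq_le_Xnorm_sq L 2 m _) heqU heqV hbdry
  have hE : M * (N + 4 * D * M) + 4 * D * M + |β| ≤ 8 * (M * N + M * D + |β|) := by
    linarith [mul_le_of_le_one_left hDM hM1, mul_nonneg hM hN, abs_nonneg β]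
  have hm1 : (1 : ℝ) ≤ m + 1 := by linarith [(m.cast_nonneg : (0 : ℝ) ≤ m)]
  refine Real.sqrt_le_iff.2 ⟨by positivity, (hU.sub hV).XnormSq_le.trans ?_⟩
  calc (m + 1) * topXnormSq L 2 m (fun s ψ => U s ψ - V s ψ)
      ≤ (m + 1) ^ 2 * (C * (8 * (M * N + M * D + |β|))) ^ 2 :=
        mul_le_mul (le_self_pow₀ hm1 two_ne_zero) (htop.trans (by gcongr))
          (topXnormSq_nonneg L 2 m _) (by positivity)
    _ = (8 * (m + 1) * C * (M * N + M * D + |β|)) ^ 2 := by ring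

/-! ### Small parameter -/

lemma mul_rpow_le_rpow {C ε a b c : ℝ} (hε : 0 < ε) (hε1 : ε ≤ 1) (hC : 0 ≤ C)
    (hCa : C * ε ^ a ≤ 1) (habc : a + b ≤ c) : C * ε ^ c ≤ ε ^ b :=
  calc C * ε ^ c ≤ C * ε ^ (a + b) :=
        mul_le_mul_of_nonneg_left (Real.rpow_le_rpow_of_exponent_ge hε hε1 habc) hC
    _ = C * ε ^ a * ε ^ b := by rw [Real.rpow_add hε, mul_assoc]
    _ ≤ ε ^ b := mul_le_of_le_one_left (Real.rpow_nonneg hε.le b) hCa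

lemma eventually_mul_rpow_le {a δ : ℝ} (C : ℝ) (ha : 0 < a) (hδ : 0 < δ) :
    ∀ᶠ ε : ℝ in nhdsWithin 0 (Ioi 0), C * ε ^ a ≤ δ := by
  have hlim : Tendsto (fun ε : ℝ => C * ε ^ a) (nhds 0) (nhds 0) := by
    simpa only [Real.zero_rpow ha.ne', mul_zero] using
      ((Real.continuousAt_rpow_const 0 a (Or.inr ha.le)).tendsto).const_mul C
  exact (hlim.mono_left nhdsWithin_le_nhds).eventually (ge_mem_nhds hδ)

lemma exists_abs_omegaBarStar_le (L : ℝ) {q g : ℝ → ℝ} (hq : Continuous q) (hg : Continuous g) :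
    ∃ K : ℝ, ∀ ε : ℝ, 0 < ε → ε < 1 → |omegaBarStar L q g ε| ≤ K := by
  refine ⟨|1 / L| * (|∫ s in (0 : ℝ)..L, 2 * g s * (q s) ^ 2|
    + |∫ s in (0 : ℝ)..L, (g s) ^ 2 * q s|) / |(1 / L) * ∫ s in (0 : ℝ)..L, (q s) ^ 3|,
    fun ε hε hε1 => ?_⟩
  have hsplit : ∫ s in (0 : ℝ)..L, (2 * g s * (q s) ^ 2 + ε * (g s) ^ 2 * q s)
      = (∫ s in (0 : ℝ)..L, 2 * g s * (q s) ^ 2) + ε * ∫ s in (0 : ℝ)..L, (g s) ^ 2 * q s := by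
    have hfst : Continuous fun s => 2 * g s * (q s) ^ 2 := by fun_prop
    have hsnd : Continuous fun s => ε * (g s) ^ 2 * q s := by fun_prop
    rw [intervalIntegral.integral_add (hfst.intervalIntegrable _ _) (hsnd.intervalIntegrable _ _)]
    simp only [mul_assoc ε, intervalIntegral.integral_const_mul]
  rw [omegaBarStar, hsplit, abs_div, abs_mul]
  gcongr
  refine (abs_add_le _ _).trans (add_le_add le_rfl ?_)
  rw [abs_mul, abs_of_pos hε]
  exact mul_le_of_le_one_left (abs_nonneg _) hε1.le

lemma exists_abs_le_of_abs_sub_omegaBarStar_le (L : ℝ) {q g : ℝ → ℝ} (hq : Continuous q)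
    (hg : Continuous g) : ∃ K : ℝ, ∀ ε : ℝ, 0 < ε → ε < 1 → ∀ w : ℝ,
      |w - omegaBarStar L q g ε| ≤ ε ^ (0.97 : ℝ) → |w| ≤ K := by
  obtain ⟨K, hK⟩ := exists_abs_omegaBarStar_le L hq hg
  refine ⟨1 + K, fun ε hε hε1 w hw => ?_⟩
  have hradius : ε ^ (0.97 : ℝ) ≤ 1 := Real.rpow_le_one hε.le hε1.le (by norm_num)
  calc |w| = |(w - omegaBarStar L q g ε) + omegaBarStar L q g ε| := by rw [sub_add_cancel]
    _ ≤ 1 + K := (abs_add_le _ _).trans (add_le_add (hw.trans hradius) (hK ε hε hε1))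

lemma exists_small_parameter (C K : ℝ) {δ : ℝ} (hδ : 0 < δ) :
    ∃ ε₀ : ℝ, 0 < ε₀ ∧ ε₀ < 1 ∧ ∀ ε : ℝ, 0 < ε → ε < ε₀ →
      C * ε ^ (0.24 : ℝ) ≤ 1 ∧ ε * K ≤ 1 / 2 ∧ ε ^ (0.99 : ℝ) ≤ δ := by
  have hsmall := (eventually_mul_rpow_le (a := 0.24) C (by norm_num) one_pos).and
    ((eventually_mul_rpow_le (a := 1) K one_pos one_half_pos).and
      (eventually_mul_rpow_le (a := 0.99) 1 (by norm_num) hδ))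
  obtain ⟨u, hu, hsub⟩ := mem_nhdsGT_iff_exists_Ioo_subset.1 hsmall
  refine ⟨min u (1 / 2), lt_min hu one_half_pos, (min_le_right _ _).trans_lt one_half_lt_one,
    fun ε hε hlt => ?_⟩
  simpa only [mem_ofPred_eq, Real.rpow_one, mul_comm K, one_mul] using
    hsub ⟨hε, hlt.trans_le (min_le_left _ _)⟩

theorem iterate_difference_contraction_general {L : ℝ} {m : ℕ} {q : ℝ → ℝ} (hm : 3 ≤ m)
    (hL : 0 < L) (hq : ContDiff ℝ (⊤ : ℕ∞) q) (hper : Periodic q L) (hqpos : ∀ s, 0 < q s)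
    (K : ℝ) :
    ∃ ε₀ : ℝ, 0 < ε₀ ∧ ε₀ < 1 ∧ ∀ ε : ℝ, 0 < ε → ε < ε₀ →
      ∀ ωbar₂ ωbar₁ ωbar₀ ω₂ ω₁ : ℝ, |ωbar₂| ≤ K → |ωbar₁| ≤ K →
        0 < ω₂ → ω₂ ^ 2 = 1 - ε * ωbar₂ → 0 < ω₁ → ω₁ ^ 2 = 1 - ε * ωbar₁ →
      ∀ Z V U : ℝ → ℝ → ℝ,
        Smooth2 Z → PeriodicS L Z → XFinite L 2 m Z → Xnorm L 2 m Z ≤ ε ^ (0.99 : ℝ) →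
        Smooth2 V → PeriodicS L V → XFinite L 2 m V → Xnorm L 2 m V ≤ ε ^ (0.99 : ℝ) →
        Smooth2 U → PeriodicS L U → XFinite L 2 m U →
        (∀ s, ∀ ψ > 0, dS 1 U s ψ - ω₁ * q s * dPsi 2 U s ψ = fNonlin q ω₁ V s ψ) →
        (∀ s, ∀ ψ > 0, dS 1 V s ψ - ω₂ * q s * dPsi 2 V s ψ = fNonlin q ω₂ Z s ψ) →
        (∀ s, U s 0 - V s 0 = ε * (ωbar₀ - ωbar₁) * (q s) ^ 2) →
        Xnorm L 2 m (fun s ψ => U s ψ - V s ψ)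
          ≤ ε ^ ((3 : ℝ) / 4) * Xnorm L 2 m (fun s ψ => V s ψ - Z s ψ)
            + ε ^ ((1 : ℝ) / 2) * |ωbar₀ - ωbar₁| + ε ^ ((3 : ℝ) / 2) * |ωbar₁ - ωbar₂| := by
  obtain ⟨C, δ, hC, hδ, hcontr⟩ := exists_Xnorm_iterate_sub_le (a := fun s => (q s) ^ 2) hm hL hq
    hper hqpos (hq.pow 2) (fun s => by simp only [hper s])
  obtain ⟨ε₀, hε₀, hε₀1, hsmall⟩ := exists_small_parameter C K hδ
  refine ⟨ε₀, hε₀, hε₀1, ?_⟩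
  intro ε hε hlt ωbar₂ ωbar₁ ωbar₀ ω₂ ω₁ hK₂ hK₁ hω₂ hsq₂ hω₁ hsq₁ Z V U hZ hZper hZfin hZle
    hV hVper hVfin hVle hU hUper hUfin heqU heqV hbdry
  obtain ⟨hCε, hεK, hεδ⟩ := hsmall ε hε hlt
  have hω : ∀ {ω w : ℝ}, |w| ≤ K → ω ^ 2 = 1 - ε * w → |ω ^ 2 - 1| ≤ 1 / 2 := fun hw hsq => by
    rw [hsq, sub_sub_cancel_left, abs_neg, abs_mul, abs_of_pos hε]
    exact (mul_le_mul_of_nonneg_left hw hε.le).trans hεK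
  have hωdiff : |ω₁ ^ 2 - ω₂ ^ 2| = ε * |ωbar₁ - ωbar₂| := by
    rw [hsq₁, hsq₂, abs_sub_comm ωbar₁, ← abs_of_pos hε, ← abs_mul, abs_of_pos hε]
    ring_nf
  have hmain := hcontr hω₁ (hω hK₁ hsq₁) hω₂ (hω hK₂ hsq₂) (MemX.of_xFinite hU hUper hUfin)
    (MemX.of_xFinite hV hVper hVfin) (MemX.of_xFinite hZ hZper hZfin) (by positivity) hεδ hVle hZle
    heqU heqV hbdry
  set N := Xnorm L 2 m fun s ψ => V s ψ - Z s ψ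
  have hN : 0 ≤ N := Real.sqrt_nonneg _
  have hpow : ∀ {b c : ℝ}, 0.24 + b ≤ c → C * ε ^ c ≤ ε ^ b :=
    mul_rpow_le_rpow hε (hlt.trans hε₀1).le hC.le hCε
  calc Xnorm L 2 m (fun s ψ => U s ψ - V s ψ)
      ≤ C * ε ^ (0.99 : ℝ) * N + C * ε ^ (1 : ℝ) * |ωbar₀ - ωbar₁|
        + C * ε ^ (1 + 0.99 : ℝ) * |ωbar₁ - ωbar₂| := by
        rw [hωdiff, abs_mul, abs_of_pos hε] at hmain
        rw [Real.rpow_add hε, Real.rpow_one]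
        exact hmain.trans_eq (by ring)
    _ ≤ _ := by gcongr <;> exact hpow (by norm_num)

/-- **Contraction estimate for differences of consecutive iterates of the scheme
solving the nonlinear Prandtl boundary-layer problem.** -/
theorem iterate_difference_contraction
    (L : ℝ) (hL : 0 < L)
    (q_e : ℝ → ℝ) (hqe : ContDiff ℝ (⊤ : ℕ∞) q_e) (hqeper : Function.Periodic q_e L)
    (hqepos : ∀ s, 0 < q_e s)
    (g : ℝ → ℝ) (hg : ContDiff ℝ (⊤ : ℕ∞) g) (hgper : Function.Periodic g L) :
    ∃ ε₀ : ℝ, 0 < ε₀ ∧ ε₀ < 1 ∧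
      ∀ ε : ℝ, 0 < ε → ε < ε₀ →
      ∀ ωbar2 ωbar1 ωbar0 ω2 ω1 : ℝ,
        -- ωbar2 = ω̄_{n-2}, ωbar1 = ω̄_{n-1}, ωbar0 = ω̄_n; ω2 = ω_{n-2}, ω1 = ω_{n-1}
        |ωbar2 - omegaBarStar L q_e g ε| ≤ ε ^ (0.97 : ℝ) →
        |ωbar1 - omegaBarStar L q_e g ε| ≤ ε ^ (0.97 : ℝ) →
        |ωbar0 - omegaBarStar L q_e g ε| ≤ ε ^ (0.97 : ℝ) →
        0 < ω2 → ω2 ^ 2 = 1 - ε * ωbar2 →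
        0 < ω1 → ω1 ^ 2 = 1 - ε * ωbar1 →
      ∀ Qnm2 Qnm1 Qn : ℝ → ℝ → ℝ,
        Smooth2 Qnm2 → PeriodicS L Qnm2 →
        (∀ s : ℝ, Tendsto (fun ψ => Qnm2 s ψ) atTop (nhds 0)) →
        XFinite L 2 50 Qnm2 → Xnorm L 2 50 Qnm2 ≤ ε ^ (0.99 : ℝ) →
        Smooth2 Qnm1 → PeriodicS L Qnm1 →
        (∀ s : ℝ, Tendsto (fun ψ => Qnm1 s ψ) atTop (nhds 0)) →
        XFinite L 2 50 Qnm1 → Xnorm L 2 50 Qnm1 ≤ ε ^ (0.99 : ℝ) →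
        Smooth2 Qn → PeriodicS L Qn →
        (∀ s : ℝ, Tendsto (fun ψ => Qn s ψ) atTop (nhds 0)) →
        XFinite L 2 50 Qn → Xnorm L 2 50 Qn ≤ ε ^ (0.99 : ℝ) →
        -- Q_n solves the linear problem with data from (Q_{n-1}, ω_{n-1}, ω̄_n)
        (∀ s : ℝ, ∀ ψ > (0:ℝ),
          dS 1 Qn s ψ - ω1 * q_e s * dPsi 2 Qn s ψ = fNonlin q_e ω1 Qnm1 s ψ) →
        (∀ s : ℝ, Qn s 0
          = ε * ωbar0 * (q_e s) ^ 2 + 2 * ε * g s * q_e s + ε ^ 2 * (g s) ^ 2) →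
        -- Q_{n-1} solves the linear problem with data from (Q_{n-2}, ω_{n-2}, ω̄_{n-1})
        (∀ s : ℝ, ∀ ψ > (0:ℝ),
          dS 1 Qnm1 s ψ - ω2 * q_e s * dPsi 2 Qnm1 s ψ = fNonlin q_e ω2 Qnm2 s ψ) →
        (∀ s : ℝ, Qnm1 s 0
          = ε * ωbar1 * (q_e s) ^ 2 + 2 * ε * g s * q_e s + ε ^ 2 * (g s) ^ 2) →
        Xnorm L 2 50 (fun s ψ => Qn s ψ - Qnm1 s ψ)
          ≤ ε ^ ((3:ℝ)/4) * Xnorm L 2 50 (fun s ψ => Qnm1 s ψ - Qnm2 s ψ)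
            + ε ^ ((1:ℝ)/2) * |ωbar0 - ωbar1|
            + ε ^ ((3:ℝ)/2) * |ωbar1 - ωbar2| := by
  obtain ⟨K, hK⟩ := exists_abs_le_of_abs_sub_omegaBarStar_le L hqe.continuous hg.continuous
  obtain ⟨ε₀, hε₀, hε₀1, hcontr⟩ :=
    iterate_difference_contraction_general (m := 50) (by norm_num) hL hqe hqeper hqepos K
  refine ⟨ε₀, hε₀, hε₀1, fun ε hε hlt ωbar2 ωbar1 ωbar0 ω2 ω1 hstar2 hstar1 _ hω2 hsq2 hω1 hsq1
    Qnm2 Qnm1 Qn h2 h2per _ h2fin h2le h1 h1per _ h1fin h1le h0 h0per _ h0fin _ heq0 hbdry0 heq1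
    hbdry1 => ?_⟩
  have hbound := hK ε hε (hlt.trans hε₀1)
  refine hcontr ε hε hlt ωbar2 ωbar1 ωbar0 ω2 ω1 (hbound _ hstar2) (hbound _ hstar1) hω2 hsq2 hω1
    hsq1 Qnm2 Qnm1 Qn h2 h2per h2fin h2le h1 h1per h1fin h1le h0 h0per h0fin heq0 heq1 fun s => ?_
  rw [hbdry0, hbdry1]
  ring
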